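/- Let n be a positive integer. If there exists at least one strong representative of order n, then the set S of all strong representatives of order n has positive natural density in the set of primes: there exists δ > 0 such that |{p ∈ S : p ≤ x}| / π(x) tends to δ as x → ∞, where π(x) denotes the number of primes at most x. In particular, S is infinite. -/

import Mathlib

section
open MeasureTheory Set Filter Topology

namespace SR

/-! ### A Tauberian theorem -/

noncomputable def fej (v : ℝ) : ℝ := Real.sinc (v / 2) ^ 2

lemma fej_nonneg (v : ℝ) : 0 ≤ fej v := sq_nonneg _

lemma fej_cont : Continuous fej := by
  unfold fej
  exact (Real.continuous_sinc.comp (by fun_prop)).pow 2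

lemma fej_zero : fej 0 = 1 := by simp [fej]

lemma fej_neg (v : ℝ) : fej (-v) = fej v := by
  unfold fej; rw [neg_div, Real.sinc_neg]

lemma fej_of_ne {v : ℝ} (hv : v ≠ 0) : fej v = (2 - 2 * Real.cos v) / v ^ 2 := by
  unfold fej
  rw [Real.sinc_of_ne_zero (by positivity)]
  have : Real.cos v = 1 - 2 * Real.sin (v / 2) ^ 2 := by
    have := Real.cos_two_mul (v / 2)
    rw [show 2 * (v / 2) = v by ring] at this
    rw [this, Real.cos_sq']; ring
  rw [this]; field_simp; ring

lemma fej_le (v : ℝ) : fej v ≤ 5 * (1 + v ^ 2)⁻¹ := by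
  have h1 : fej v ≤ 1 := by
    unfold fej
    have := Real.abs_sinc_le_one (v / 2)
    rw [← sq_abs]
    exact pow_le_one₀ (abs_nonneg _) this
  have h2 : v ^ 2 * fej v ≤ 4 := by
    rcases eq_or_ne v 0 with rfl | hv
    · simp
    · rw [fej_of_ne hv, mul_div_cancel₀ _ (by positivity)]
      linarith [Real.neg_one_le_cos v]
  rw [← div_eq_mul_inv, le_div_iff₀ (by positivity)]
  linarith

lemma fej_integrable : Integrable fej :=
  (integrable_inv_one_add_sq.const_mul 5).mono' fej_cont.aestronglyMeasurable
    (ae_of_all _ fun v => by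
      rw [Real.norm_of_nonneg (fej_nonneg v)]; exact fej_le v)

lemma fej_int_pos : 0 < ∫ v, fej v := by
  rw [integral_pos_iff_support_of_nonneg fej_nonneg fej_integrable]
  have : IsOpen (Function.support fej) := fej_cont.isOpen_support
  exact this.measure_pos _ ⟨0, by simp [fej_zero]⟩

lemma fej_fourier (v : ℝ) :
    ∫ t in (-1 : ℝ)..1, ((1 - |t| : ℝ) : ℂ) * Complex.exp (Complex.I * t * v) = (fej v : ℂ) := by
  have hc : Continuous fun t : ℝ => ((1 - |t| : ℝ) : ℂ) * Complex.exp (Complex.I * t * v) := by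
    fun_prop
  rw [← intervalIntegral.integral_add_adjacent_intervals (b := 0) (hc.intervalIntegrable _ _)
    (hc.intervalIntegrable _ _)]
  have e1 : ∫ t in (-1 : ℝ)..0, ((1 - |t| : ℝ) : ℂ) * Complex.exp (Complex.I * t * v)
      = ∫ t in (-1 : ℝ)..0, (1 + t : ℂ) * Complex.exp (Complex.I * t * v) := by
    refine intervalIntegral.integral_congr fun t ht => ?_
    rw [uIcc_of_le (by norm_num)] at ht
    simp only [abs_of_nonpos ht.2]; push_cast; ring
  have e2 : ∫ t in (0 : ℝ)..1, ((1 - |t| : ℝ) : ℂ) * Complex.exp (Complex.I * t * v)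
      = ∫ t in (0 : ℝ)..1, (1 - t : ℂ) * Complex.exp (Complex.I * t * v) := by
    refine intervalIntegral.integral_congr fun t ht => ?_
    rw [uIcc_of_le (by norm_num)] at ht
    simp only [abs_of_nonneg ht.1]; push_cast; ring
  rw [e1, e2]
  rcases eq_or_ne v 0 with rfl | hv
  · simp only [Complex.ofReal_zero, mul_zero, Complex.exp_zero, mul_one, fej_zero]
    have h1 : ∫ t in (-1 : ℝ)..0, (1 + t : ℂ) = ((∫ t in (-1 : ℝ)..0, (1 + t : ℝ) : ℝ) : ℂ) := by
      rw [← intervalIntegral.integral_ofReal]; simp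
    have h2 : ∫ t in (0 : ℝ)..1, (1 - t : ℂ) = ((∫ t in (0 : ℝ)..1, (1 - t : ℝ) : ℝ) : ℂ) := by
      rw [← intervalIntegral.integral_ofReal]; simp
    rw [h1, h2]
    have h3 : ∫ t in (-1 : ℝ)..0, (1 + t : ℝ) = 1 / 2 := by
      rw [intervalIntegral.integral_add (by simp) (by simp)]; simp; norm_num
    have h4 : ∫ t in (0 : ℝ)..1, (1 - t : ℝ) = 1 / 2 := by
      rw [intervalIntegral.integral_sub (by simp) (by simp)]; simp; norm_num
    rw [h3, h4]; norm_num
  · have hiv : Complex.I * v ≠ 0 := by simp [hv]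
    have dE (t : ℝ) : HasDerivAt (fun t : ℝ => Complex.exp (Complex.I * t * v))
        (Complex.exp (Complex.I * t * v) * (Complex.I * v)) t := by
      have : HasDerivAt (fun t : ℂ => Complex.exp (Complex.I * t * v))
        (Complex.exp (Complex.I * t * v) * (Complex.I * v)) (t : ℂ) := by
        have := (((hasDerivAt_id (t : ℂ)).const_mul Complex.I).mul_const (v : ℂ)).cexp
        simpa using this
      exact this.comp_ofReal
    have dt (t : ℝ) : HasDerivAt (fun t : ℝ => (t : ℂ)) 1 t := (hasDerivAt_id (t : ℂ)).comp_ofReal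
    have i1 : ∫ t in (-1 : ℝ)..0, (1 + t : ℂ) * Complex.exp (Complex.I * t * v)
        = 1 / (Complex.I * v) - 1 / (Complex.I * v) ^ 2
          + Complex.exp (-(Complex.I * v)) / (Complex.I * v) ^ 2 := by
      rw [intervalIntegral.integral_eq_sub_of_hasDerivAt
        (f := fun t : ℝ => (1 + t : ℂ) * Complex.exp (Complex.I * t * v) / (Complex.I * v)
          - Complex.exp (Complex.I * t * v) / (Complex.I * v) ^ 2)]
      · simp
      · intro t _
        have := ((((dt t).const_add 1).mul (dE t)).div_const (Complex.I * v)).sub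
          ((dE t).div_const ((Complex.I * v) ^ 2))
        convert! this using 1
        have : (v : ℂ) ≠ 0 := by exact_mod_cast hv
        field_simp; ring
      · exact Continuous.intervalIntegrable (by fun_prop) _ _
    have i2 : ∫ t in (0 : ℝ)..1, (1 - t : ℂ) * Complex.exp (Complex.I * t * v)
        = Complex.exp (Complex.I * v) / (Complex.I * v) ^ 2 - 1 / (Complex.I * v)
          - 1 / (Complex.I * v) ^ 2 := by
      rw [intervalIntegral.integral_eq_sub_of_hasDerivAt
        (f := fun t : ℝ => (1 - t : ℂ) * Complex.exp (Complex.I * t * v) / (Complex.I * v)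
          + Complex.exp (Complex.I * t * v) / (Complex.I * v) ^ 2)]
      · simp; ring
      · intro t _
        have := ((((dt t).const_sub 1).mul (dE t)).div_const (Complex.I * v)).add
          ((dE t).div_const ((Complex.I * v) ^ 2))
        convert! this using 1
        have : (v : ℂ) ≠ 0 := by exact_mod_cast hv
        field_simp; ring
      · exact Continuous.intervalIntegrable (by fun_prop) _ _
    rw [i1, i2, fej_of_ne hv]
    have hcos : Complex.cos v * 2 = Complex.exp (Complex.I * v) + Complex.exp (-(Complex.I * v)) := by
      rw [Complex.cos]; ring_nf
    have hv' : (v : ℂ) ≠ 0 := by exact_mod_cast hv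
    push_cast
    rw [mul_comm 2, hcos, mul_pow, Complex.I_sq]
    field_simp
    ring

end SR
end

section
open MeasureTheory Set Filter Topology

namespace SR

lemma laplace_swap (B : ℝ → ℝ)
    (hint : ∀ ε > 0, IntegrableOn (fun u => B u * Real.exp (-ε * u)) (Ioi 0))
    (A : ℝ) (G : ℂ → ℂ)
    (hL : ∀ z : ℂ, 0 < z.re → ∫ u in Ioi (0 : ℝ), (B u : ℂ) * Complex.exp (-z * u) = A / z + G z)
    (ε : ℝ) (hε : 0 < ε) (y : ℝ) :
    ((∫ u in Ioi (0 : ℝ), (B u - A) * Real.exp (-ε * u) * fej (u - y) : ℝ) : ℂ)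
      = ∫ t in (-1 : ℝ)..1, ((1 - |t| : ℝ) : ℂ) * Complex.exp (Complex.I * t * y)
          * G (ε + Complex.I * t) := by
  have hA : IntegrableOn (fun u => A * Real.exp (-ε * u)) (Ioi 0) :=
    (exp_neg_integrableOn_Ioi 0 hε).const_mul A
  have hD : IntegrableOn (fun u => (B u - A) * Real.exp (-ε * u)) (Ioi 0) := by
    have := (hint ε hε).sub hA
    refine this.congr (ae_of_all _ fun u => ?_)
    simp only [Pi.sub_apply]; ring
  -- Laplace transform of B - A
  have hLz (t : ℝ) : ∫ u in Ioi (0 : ℝ), (((B u - A) * Real.exp (-ε * u) : ℝ) : ℂ)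
        * Complex.exp (-(Complex.I * t) * u) = G (ε + Complex.I * t) := by
    have hz : 0 < (ε + Complex.I * t : ℂ).re := by simpa using hε
    have hz0 : (ε + Complex.I * t : ℂ) ≠ 0 := fun h => by rw [h] at hz; simp at hz
    have h1 := hL _ hz
    have h2 := integral_exp_mul_complex_Ioi (a := -(ε + Complex.I * t)) (by simpa using hε) 0
    have hexp (u : ℝ) : Complex.exp (-(ε + Complex.I * t) * u)
        = ((Real.exp (-ε * u) : ℝ) : ℂ) * Complex.exp (-(Complex.I * t) * u) := by
      rw [Complex.ofReal_exp, ← Complex.exp_add]; congr 1; push_cast; ring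
    have hb : Continuous fun u : ℝ => Complex.exp (-(Complex.I * t) * u) := by fun_prop
    have hn (u : ℝ) : ‖Complex.exp (-(Complex.I * t) * u)‖ ≤ 1 := by
      rw [Complex.norm_exp]; simp
    have I1 : IntegrableOn (fun u : ℝ => (B u : ℂ) * Complex.exp (-(ε + Complex.I * t) * u)) (Ioi 0) := by
      have := ((hint ε hε).ofReal (𝕜 := ℂ)).mul_bdd (c := 1) hb.aestronglyMeasurable (ae_of_all _ hn)
      refine this.congr (ae_of_all _ fun u => ?_)
      simp only [hexp]; push_cast; simp; ring
    have I2 : IntegrableOn (fun u : ℝ => (A : ℂ) * Complex.exp (-(ε + Complex.I * t) * u)) (Ioi 0) := by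
      have := (hA.ofReal (𝕜 := ℂ)).mul_bdd (c := 1) hb.aestronglyMeasurable (ae_of_all _ hn)
      refine this.congr (ae_of_all _ fun u => ?_)
      simp only [hexp]; push_cast; simp; ring
    have : ∀ u : ℝ, (((B u - A) * Real.exp (-ε * u) : ℝ) : ℂ) * Complex.exp (-(Complex.I * t) * u)
        = (B u : ℂ) * Complex.exp (-(ε + Complex.I * t) * u)
          - (A : ℂ) * Complex.exp (-(ε + Complex.I * t) * u) := by
      intro u; rw [hexp]; push_cast; ring
    simp_rw [this]
    rw [integral_sub I1 I2, h1, integral_const_mul, h2]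
    rw [Complex.ofReal_zero, mul_zero, Complex.exp_zero, neg_div_neg_eq]
    ring
  have hrhs : ∀ t : ℝ, ((1 - |t| : ℝ) : ℂ) * Complex.exp (Complex.I * t * y) * G (ε + Complex.I * t)
      = ∫ u in Ioi (0 : ℝ), (((B u - A) * Real.exp (-ε * u) : ℝ) : ℂ) *
         (((1 - |t| : ℝ) : ℂ) * Complex.exp (Complex.I * t * (y - u : ℝ))) := by
    intro t
    rw [← hLz, ← integral_const_mul]
    refine integral_congr_ae (ae_of_all _ fun u => ?_)
    have : Complex.exp (Complex.I * t * (y - u : ℝ))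
        = Complex.exp (Complex.I * t * y) * Complex.exp (-(Complex.I * t) * u) := by
      rw [← Complex.exp_add]; congr 1; push_cast; ring
    simp only [this]; ring
  simp_rw [hrhs]
  rw [intervalIntegral.integral_of_le (by norm_num), integral_integral_swap]
  · rw [← integral_complex_ofReal]
    refine integral_congr_ae (ae_of_all _ fun u => ?_)
    simp only
    rw [integral_const_mul, ← intervalIntegral.integral_of_le (by norm_num), fej_fourier,
      ← fej_neg (u - y), neg_sub]
    push_cast; rfl
  · have h1 : Integrable (fun t : ℝ => (1 : ℂ)) (volume.restrict (Ioc (-1 : ℝ) 1)) := by simp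
    have h2 := h1.mul_prod (hD.ofReal (𝕜 := ℂ))
    have hc : Continuous fun p : ℝ × ℝ => (((1 - |p.1| : ℝ) : ℂ) *
        Complex.exp (Complex.I * p.1 * (y - p.2 : ℝ))) := by fun_prop
    have hbd : ∀ᵐ p ∂((volume.restrict (Ioc (-1 : ℝ) 1)).prod (volume.restrict (Ioi (0:ℝ)))),
        ‖(((1 - |p.1| : ℝ) : ℂ) * Complex.exp (Complex.I * p.1 * (y - p.2 : ℝ)))‖ ≤ 1 := by
      rw [Measure.prod_restrict]
      filter_upwards [ae_restrict_mem (measurableSet_Ioc.prod measurableSet_Ioi)] with p hp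
      have h3 : ‖Complex.exp (Complex.I * p.1 * (y - p.2 : ℝ))‖ = 1 := by
        rw [Complex.norm_exp]; simp
      rw [norm_mul, h3, mul_one, Complex.norm_real, Real.norm_eq_abs]
      have : |p.1| ≤ 1 := abs_le.2 ⟨hp.1.1.le, hp.1.2⟩
      rw [abs_le]; constructor <;> linarith [abs_nonneg p.1]
    have := h2.mul_bdd (c := 1) hc.aestronglyMeasurable hbd
    refine this.congr (ae_of_all _ fun p => ?_)
    simp [Function.uncurry]

lemma smoothing (B : ℝ → ℝ) (hB0 : ∀ u, 0 ≤ B u) 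
    (hint : ∀ ε > 0, IntegrableOn (fun u => B u * Real.exp (-ε * u)) (Ioi 0))
    (A : ℝ) (G : ℂ → ℂ) (hG : ContinuousOn G {z | 0 ≤ z.re})
    (hL : ∀ z : ℂ, 0 < z.re → ∫ u in Ioi (0 : ℝ), (B u : ℂ) * Complex.exp (-z * u) = A / z + G z) :
    (∀ y, IntegrableOn (fun u => B u * fej (u - y)) (Ioi 0)) ∧
    Tendsto (fun y => ∫ u in Ioi (0 : ℝ), B u * fej (u - y)) atTop (𝓝 (A * ∫ v, fej v)) := by
  have hfi (y : ℝ) : Integrable (fun u => fej (u - y)) := fej_integrable.comp_sub_right y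
  set e : ℕ → ℝ := fun n => 1 / ((n : ℝ) + 1) with he
  have he0 : ∀ n, 0 < e n := fun n => by positivity
  have he1 : ∀ n, e n ≤ 1 := fun n => by
    rw [he]; simp only; rw [div_le_one (by positivity)]; linarith [Nat.cast_nonneg (α := ℝ) n]
  have het : Tendsto e atTop (𝓝 0) := tendsto_one_div_add_atTop_nhds_zero_nat
  have hexpt (u : ℝ) : Tendsto (fun n => Real.exp (-e n * u)) atTop (𝓝 1) := by
    have : Tendsto (fun n => Real.exp (-e n * u)) atTop (𝓝 (Real.exp (-0 * u))) :=
      (Real.continuous_exp.tendsto _).comp ((het.neg).mul_const u)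
    simpa using this
  have hexple (n : ℕ) (u : ℝ) (hu : 0 < u) : Real.exp (-e n * u) ≤ 1 := by
    rw [Real.exp_le_one_iff]; nlinarith [he0 n]
  -- limit of RHS
  obtain ⟨C, hC⟩ : ∃ C, ∀ n, ∀ t ∈ Icc (-1 : ℝ) 1, ‖G (e n + Complex.I * t)‖ ≤ C := by
    have hk : IsCompact ((fun p : ℝ × ℝ => (p.1 + Complex.I * p.2 : ℂ)) ''
        (Icc (0:ℝ) 1 ×ˢ Icc (-1 : ℝ) 1)) :=
      (isCompact_Icc.prod isCompact_Icc).image (by fun_prop)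
    have hsub : ((fun p : ℝ × ℝ => (p.1 + Complex.I * p.2 : ℂ)) ''
        (Icc (0:ℝ) 1 ×ˢ Icc (-1 : ℝ) 1)) ⊆ {z | 0 ≤ z.re} := by
      rintro _ ⟨p, hp, rfl⟩
      simpa using hp.1.1
    obtain ⟨C, hC⟩ := hk.exists_bound_of_continuousOn (hG.mono hsub)
    exact ⟨C, fun n t ht => hC _ ⟨(e n, t), ⟨⟨(he0 n).le, he1 n⟩, ht⟩, rfl⟩⟩
  have hRHS (y : ℝ) : Tendsto (fun n => ∫ t in (-1 : ℝ)..1, ((1 - |t| : ℝ) : ℂ)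
      * Complex.exp (Complex.I * t * y) * G (e n + Complex.I * t)) atTop
      (𝓝 (∫ t in (-1 : ℝ)..1, ((1 - |t| : ℝ) : ℂ)
      * Complex.exp (Complex.I * t * y) * G (Complex.I * t))) := by
    refine intervalIntegral.tendsto_integral_filter_of_dominated_convergence (fun _ => C) ?_ ?_ ?_ ?_
    · refine Eventually.of_forall fun n => Continuous.aestronglyMeasurable ?_
      refine Continuous.mul (by fun_prop) ?_
      refine hG.comp_continuous (by fun_prop) fun t => ?_
      simpa using (he0 n).le
    · refine Eventually.of_forall fun n => ae_of_all _ fun t ht => ?_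
      rw [uIoc_of_le (by norm_num)] at ht
      have h3 : ‖Complex.exp (Complex.I * t * y)‖ = 1 := by
        rw [Complex.norm_exp]; simp
      rw [norm_mul, norm_mul, h3, mul_one, Complex.norm_real, Real.norm_eq_abs]
      have : |t| ≤ 1 := abs_le.2 ⟨ht.1.le, ht.2⟩
      have h4 : abs (1 - |t|) ≤ 1 := by rw [abs_le]; constructor <;> linarith [abs_nonneg t]
      calc _ ≤ 1 * ‖G (e n + Complex.I * t)‖ := by gcongr
        _ ≤ C := by rw [one_mul]; exact hC n t ⟨ht.1.le, ht.2⟩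
    · simp
    · refine ae_of_all _ fun t ht => Tendsto.mul tendsto_const_nhds ?_
      have hw : ContinuousWithinAt G {z | 0 ≤ z.re} (Complex.I * t) := hG _ (by simp)
      refine hw.tendsto.comp (tendsto_nhdsWithin_iff.2 ⟨?_, Eventually.of_forall fun n => ?_⟩)
      · have : Tendsto (fun n => (e n : ℂ) + Complex.I * t) atTop (𝓝 (((0:ℝ):ℂ) + Complex.I * t)) :=
          (Complex.continuous_ofReal.tendsto _ |>.comp het).add_const _
        simpa using this
      · simpa using (he0 n).le
  -- A part
  have hAint (n : ℕ) (y : ℝ) : IntegrableOn (fun u => A * Real.exp (-e n * u) * fej (u - y)) (Ioi 0) := by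
    refine ((hfi y).integrableOn.const_mul |A|).mono' ?_ ?_
    · exact (Continuous.aestronglyMeasurable (by have := fej_cont; fun_prop))
    · filter_upwards [ae_restrict_mem measurableSet_Ioi] with u hu
      rw [norm_mul, norm_mul, Real.norm_of_nonneg (fej_nonneg _), Real.norm_of_nonneg (Real.exp_pos _).le]
      have := hexple n u hu
      have h2 := fej_nonneg (u - y)
      calc _ ≤ ‖A‖ * 1 * fej (u - y) := by gcongr
        _ = _ := by rw [mul_one]; rfl
  have hAlim (y : ℝ) : Tendsto (fun n => ∫ u in Ioi (0 : ℝ), A * Real.exp (-e n * u) * fej (u - y)) atTop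
      (𝓝 (∫ u in Ioi (0 : ℝ), A * fej (u - y))) := by
    refine tendsto_integral_of_dominated_convergence (fun u => |A| * fej (u - y))
      (fun n => (hAint n y).aestronglyMeasurable) ((hfi y).integrableOn.const_mul |A|) ?_ ?_
    · intro n
      filter_upwards [ae_restrict_mem measurableSet_Ioi] with u hu
      rw [norm_mul, norm_mul, Real.norm_of_nonneg (fej_nonneg _), Real.norm_of_nonneg (Real.exp_pos _).le]
      have := hexple n u hu
      have h2 := fej_nonneg (u - y)
      calc _ ≤ ‖A‖ * 1 * fej (u - y) := by gcongr
        _ = _ := by rw [mul_one]; rfl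
    · refine ae_of_all _ fun u => ?_
      simpa using ((hexpt u).const_mul A).mul_const (fej (u - y))
  have hBint (n : ℕ) (y : ℝ) : IntegrableOn (fun u => B u * Real.exp (-e n * u) * fej (u - y)) (Ioi 0) := by
    refine (hint (e n) (he0 n)).mul_bdd (c := 5) ?_ (ae_of_all _ fun u => ?_)
    · exact (Continuous.aestronglyMeasurable (by have := fej_cont; fun_prop))
    · rw [Real.norm_of_nonneg (fej_nonneg _)]
      refine (fej_le _).trans ?_
      have : (1 + (u - y) ^ 2)⁻¹ ≤ 1 := inv_le_one_of_one_le₀ (by nlinarith [sq_nonneg (u - y)])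
      linarith
  have hsplit (n : ℕ) (y : ℝ) : ((∫ u in Ioi (0 : ℝ), B u * Real.exp (-e n * u) * fej (u - y) : ℝ) : ℂ)
      = ((∫ u in Ioi (0 : ℝ), A * Real.exp (-e n * u) * fej (u - y) : ℝ) : ℂ) +
       ∫ t in (-1 : ℝ)..1, ((1 - |t| : ℝ) : ℂ)
      * Complex.exp (Complex.I * t * y) * G (e n + Complex.I * t) := by
    rw [← laplace_swap B hint A G hL (e n) (he0 n) y, ← Complex.ofReal_add,
      ← integral_add (hAint n y)]
    · congr 2; ext u; ring
    · refine ((hBint n y).sub (hAint n y)).congr (ae_of_all _ fun u => ?_)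
      simp only [Pi.sub_apply]; ring
  have hBlimC (y : ℝ) : Tendsto (fun n => ((∫ u in Ioi (0 : ℝ), B u * Real.exp (-e n * u) * fej (u - y) : ℝ) : ℂ))
      atTop (𝓝 (((∫ u in Ioi (0 : ℝ), A * fej (u - y) : ℝ) : ℂ) + ∫ t in (-1 : ℝ)..1, ((1 - |t| : ℝ) : ℂ)
      * Complex.exp (Complex.I * t * y) * G (Complex.I * t))) := by
    simp_rw [hsplit]
    exact ((Complex.continuous_ofReal.tendsto _).comp (hAlim y)).add (hRHS y)
  have hBlim (y : ℝ) := (Complex.continuous_re.tendsto _).comp (hBlimC y)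
  simp only [Function.comp_def, Complex.ofReal_re] at hBlim
  have hptw (u y : ℝ) : Tendsto (fun n => B u * Real.exp (-e n * u) * fej (u - y)) atTop
      (𝓝 (B u * fej (u - y))) := by
    simpa using ((hexpt u).const_mul (B u)).mul_const (fej (u - y))
  have hI (y : ℝ) : IntegrableOn (fun u => B u * fej (u - y)) (Ioi 0) := by
    refine integrable_of_tendsto (ae_of_all _ fun u => hptw u y)
      (fun n => (hBint n y).aestronglyMeasurable) ?_
    have : ∀ n, ∫⁻ u in Ioi (0:ℝ), ‖B u * Real.exp (-e n * u) * fej (u - y)‖ₑ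
        = ENNReal.ofReal (∫ u in Ioi (0 : ℝ), B u * Real.exp (-e n * u) * fej (u - y)) := by
      intro n
      rw [ofReal_integral_eq_lintegral_ofReal (hBint n y)]
      · refine lintegral_congr fun u => ?_
        rw [Real.enorm_of_nonneg]
        have := hB0 u; have := fej_nonneg (u - y); positivity
      · refine ae_of_all _ fun u => ?_
        have := hB0 u; have := fej_nonneg (u - y); simp only [Pi.zero_apply]; positivity
    simp_rw [this]
    rw [(ENNReal.tendsto_ofReal (hBlim y)).liminf_eq]
    exact ENNReal.ofReal_ne_top
  refine ⟨hI, ?_⟩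
  have hBeq (y : ℝ) : ∫ u in Ioi (0 : ℝ), B u * fej (u - y) =
      (((∫ u in Ioi (0 : ℝ), A * fej (u - y) : ℝ) : ℂ) + ∫ t in (-1 : ℝ)..1, ((1 - |t| : ℝ) : ℂ)
      * Complex.exp (Complex.I * t * y) * G (Complex.I * t)).re := by
    refine tendsto_nhds_unique ?_ (hBlim y)
    refine tendsto_integral_of_dominated_convergence (fun u => B u * fej (u - y))
      (fun n => (hBint n y).aestronglyMeasurable) (hI y) ?_ (ae_of_all _ fun u => hptw u y)
    intro n
    filter_upwards [ae_restrict_mem measurableSet_Ioi] with u hu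
    have h1 := hB0 u; have h2 := fej_nonneg (u - y); have h3 := hexple n u hu
    rw [Real.norm_of_nonneg (by positivity)]
    calc _ ≤ B u * 1 * fej (u - y) := by gcongr
      _ = _ := by ring
  simp_rw [hBeq, Complex.add_re, Complex.ofReal_re]
  have hRL : Tendsto (fun y : ℝ => ∫ t in (-1 : ℝ)..1, ((1 - |t| : ℝ) : ℂ)
      * Complex.exp (Complex.I * t * y) * G (Complex.I * t)) atTop (𝓝 0) := by
    have h := Real.tendsto_integral_exp_smul_cocompact
      ((Ioc (-1 : ℝ) 1).indicator fun t => ((1 - |t| : ℝ) : ℂ) * G (Complex.I * t))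
    have hs : Tendsto (fun y : ℝ => -y / (2 * Real.pi)) atTop (cocompact ℝ) := by
      have : Tendsto (fun y : ℝ => -y / (2 * Real.pi)) atTop atBot :=
        tendsto_neg_atTop_atBot.atBot_div_const (by positivity)
      exact this.mono_right atBot_le_cocompact
    refine (h.comp hs).congr fun y => ?_
    simp only [Function.comp_def]
    rw [intervalIntegral.integral_of_le (by norm_num), ← integral_indicator measurableSet_Ioc]
    congr 1; ext t
    by_cases ht : t ∈ Ioc (-1 : ℝ) 1
    · rw [indicator_of_mem ht, indicator_of_mem ht, Circle.smul_def, Real.fourierChar_apply, smul_eq_mul]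
      have : (((2 * Real.pi * -(t * (-y / (2 * Real.pi))) : ℝ) : ℂ) * Complex.I) = Complex.I * t * y := by
        have hp : (Real.pi : ℂ) ≠ 0 := by exact_mod_cast Real.pi_ne_zero
        push_cast; field_simp
      rw [this]; ring
    · rw [indicator_of_notMem ht, indicator_of_notMem ht, smul_zero]
  have hre : Tendsto (fun y : ℝ => (∫ t in (-1 : ℝ)..1, ((1 - |t| : ℝ) : ℂ)
      * Complex.exp (Complex.I * t * y) * G (Complex.I * t)).re) atTop (𝓝 0) := by
    simpa [Function.comp_def] using (Complex.continuous_re.tendsto _).comp hRL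
  have hAl : Tendsto (fun y : ℝ => ∫ u in Ioi (0 : ℝ), A * fej (u - y)) atTop (𝓝 (A * ∫ v, fej v)) := by
    simp_rw [integral_const_mul]
    refine Tendsto.const_mul A ?_
    have h1 (y : ℝ) : ∫ u in Ioi (0 : ℝ), fej (u - y) = ∫ u in Ioi (-y), fej u := by
      have := integral_indicator (μ := volume) (f := fun u => fej (u - y)) (measurableSet_Ioi (a := (0:ℝ)))
      rw [← this, ← integral_indicator measurableSet_Ioi, ← integral_sub_right_eq_self (fun u => (Ioi (-y)).indicator fej u) y]
      congr 1; ext u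
      simp [indicator]
    simp_rw [h1]
    have h5 := tendsto_setIntegral_of_monotone (μ := volume) (f := fej) (s := fun y : ℝ => Ioi (-y))
      (fun _ => measurableSet_Ioi) (fun a b hab => Ioi_subset_Ioi (by linarith)) (fej_integrable.integrableOn)
    have hU : (⋃ y : ℝ, Ioi (-y)) = univ := by
      ext x; simp only [mem_iUnion, mem_Ioi, mem_univ, iff_true]; exact ⟨-x + 1, by linarith⟩
    rwa [hU, setIntegral_univ] at h5
  simpa using hAl.add hre

end SR
end

section
open MeasureTheory Set Filter Topology

namespace SR

lemma smoothing_scaled (B : ℝ → ℝ) (hB0 : ∀ u, 0 ≤ B u)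
    (hint : ∀ ε > 0, IntegrableOn (fun u => B u * Real.exp (-ε * u)) (Ioi 0))
    (A : ℝ) (G : ℂ → ℂ) (hG : ContinuousOn G {z | 0 ≤ z.re})
    (hL : ∀ z : ℂ, 0 < z.re → ∫ u in Ioi (0 : ℝ), (B u : ℂ) * Complex.exp (-z * u) = A / z + G z)
    (r : ℝ) (hr : 0 < r) :
    (∀ y, IntegrableOn (fun u => B (r * u) * fej (u - y)) (Ioi 0)) ∧
    Tendsto (fun y => ∫ u in Ioi (0 : ℝ), B (r * u) * fej (u - y)) atTop (𝓝 (A * ∫ v, fej v)) := by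
  have hr0 : (r : ℂ) ≠ 0 := by exact_mod_cast hr.ne'
  refine smoothing (fun u => B (r * u)) (fun u => hB0 _) ?_ A (fun z => r⁻¹ * G (z / r)) ?_ ?_
  · intro ε hε
    have h := hint (ε / r) (by positivity)
    have := (integrableOn_Ioi_comp_mul_left_iff (fun u => B u * Real.exp (-(ε / r) * u)) 0 hr).2
      (by simpa using h)
    refine this.congr (ae_of_all _ fun u => ?_)
    have : -(ε / r) * (r * u) = -ε * u := by field_simp
    simp only [this]
  · refine continuousOn_const.mul (hG.comp (by fun_prop) fun z hz => ?_)
    have hz' : 0 ≤ z.re := hz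
    have : (z / r).re = z.re / r := Complex.div_ofReal_re z r
    change 0 ≤ (z / r).re
    rw [this]; positivity
  · intro z hz
    have hz' : 0 < (z / r).re := by rw [Complex.div_ofReal_re]; positivity
    have hz0 : z ≠ 0 := fun h => by rw [h] at hz; simp at hz
    have h := integral_comp_mul_left_Ioi (fun u => (B u : ℂ) * Complex.exp (-(z / r) * u)) 0 hr
    rw [mul_zero, hL _ hz'] at h
    have e : ∀ u : ℝ, Complex.exp (-(z / r) * (r * u : ℝ)) = Complex.exp (-z * u) := by
      intro u; congr 1; push_cast; field_simp
    simp only [e] at h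
    rw [h, Complex.real_smul]
    push_cast
    field_simp

theorem tauber_core (B : ℝ → ℝ) (hB0 : ∀ u, 0 ≤ B u)
    (hmono : Monotone fun u => Real.exp u * B u)
    (hint : ∀ ε > 0, IntegrableOn (fun u => B u * Real.exp (-ε * u)) (Ioi 0))
    (A : ℝ) (G : ℂ → ℂ) (hG : ContinuousOn G {z | 0 ≤ z.re})
    (hL : ∀ z : ℂ, 0 < z.re → ∫ u in Ioi (0 : ℝ), (B u : ℂ) * Complex.exp (-z * u) = A / z + G z) :
    Tendsto B atTop (𝓝 A) := by
  set c := ∫ v, fej v with hc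
  have hcpos : 0 < c := fej_int_pos
  set cR : ℕ → ℝ := fun k => ∫ v in Icc (-(k : ℝ)) k, fej v with hcR
  have hcRlim : Tendsto cR atTop (𝓝 c) := by
    have h5 := tendsto_setIntegral_of_monotone (μ := volume) (f := fej) (s := fun k : ℕ => Icc (-(k : ℝ)) k)
      (fun _ => measurableSet_Icc) (fun a b hab => by
        have : (a : ℝ) ≤ b := by exact_mod_cast hab
        exact Icc_subset_Icc (by linarith) this) (fej_integrable.integrableOn)
    have hU : (⋃ k : ℕ, Icc (-(k : ℝ)) k) = univ := by
      ext x; simp only [mem_iUnion, mem_Icc, mem_univ, iff_true]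
      obtain ⟨k, hk⟩ := exists_nat_ge |x|
      exact ⟨k, by linarith [neg_abs_le x], by linarith [le_abs_self x]⟩
    rwa [hU, setIntegral_univ] at h5
  have hB' {x x' : ℝ} (h : x ≤ x') : B x ≤ Real.exp (x' - x) * B x' := by
    have := hmono h
    simp only at this
    rw [Real.exp_sub, div_mul_eq_mul_div, le_div_iff₀ (Real.exp_pos _)]
    linarith
  have hshift (y : ℝ) (k : ℕ) : ∫ u in Icc (y - k) (y + k), fej (u - y) = cR k := by
    rw [hcR]; simp only
    rw [← integral_indicator measurableSet_Icc, ← integral_indicator measurableSet_Icc,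
      ← integral_sub_right_eq_self (fun u => (Icc (-(k : ℝ)) k).indicator fej u) y]
    congr 1; ext u
    simp only [indicator, mem_Icc]
    congr 1
    simp only [eq_iff_iff]
    constructor <;> rintro ⟨h1, h2⟩ <;> constructor <;> linarith
  have hJ (k : ℕ) (hk : 1 ≤ k) := smoothing_scaled B hB0 hint A G hG hL (1 / (k : ℝ) ^ 2)
    (by have : (0:ℝ) < k := by exact_mod_cast hk
        positivity)
  have hfi (y : ℝ) : Integrable (fun u => fej (u - y)) := fej_integrable.comp_sub_right y
  have hinv : Tendsto (fun k : ℕ => 1 / (k : ℝ)) atTop (𝓝 0) := tendsto_one_div_atTop_nhds_zero_nat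
  -- upper bound
  have hup : ∀ A' > A, ∀ᶠ Y in atTop, B Y ≤ A' := by
    intro A' hA'
    have hlim : Tendsto (fun k : ℕ => (A * c + 1 / (k : ℝ)) * Real.exp (2 * (1 / (k:ℝ))) / cR k) atTop
        (𝓝 ((A * c + 0) * Real.exp (2 * 0) / c)) :=
      (((hinv.const_add _).mul ((Real.continuous_exp.tendsto _).comp (hinv.const_mul 2))).div
        hcRlim hcpos.ne')
    rw [add_zero, mul_zero, Real.exp_zero, mul_one, mul_div_cancel_right₀ _ hcpos.ne'] at hlim
    obtain ⟨k, h1, h2, h3⟩ := ((hlim.eventually_lt_const hA').and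
      ((hcRlim.eventually_const_lt hcpos).and (eventually_ge_atTop 1))).exists
    have hk0 : (0 : ℝ) < k := by exact_mod_cast h3
    obtain ⟨hI, hT⟩ := hJ k h3
    have hT' := hT.eventually_le_const (show A * c < A * c + 1 / (k : ℝ) by
      have : 0 < 1 / (k : ℝ) := by positivity
      linarith)
    have hs : Tendsto (fun Y : ℝ => (k : ℝ) ^ 2 * (Y + 1 / k)) atTop atTop :=
      (tendsto_atTop_add_const_right _ _ tendsto_id).const_mul_atTop (by positivity)
    filter_upwards [hs.eventually hT', eventually_gt_atTop 0] with Y hY hY0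
    set y := (k : ℝ) ^ 2 * (Y + 1 / k) with hy
    have hyk : (k : ℝ) < y := by
      rw [hy, mul_add]
      have : (k : ℝ) ^ 2 * (1 / k) = k := by field_simp
      rw [this]
      have : 0 < (k : ℝ) ^ 2 * Y := by positivity
      linarith
    have hle : Real.exp (-(2 * (1 / (k:ℝ)))) * B Y * cR k
        ≤ ∫ u in Ioi (0 : ℝ), B (1 / (k : ℝ) ^ 2 * u) * fej (u - y) := by
      rw [← hshift y k, ← integral_const_mul]
      refine le_trans (setIntegral_mono_on ((hfi y).integrableOn.const_mul _)
        ((hI y).mono_set fun u hu => ?_) measurableSet_Icc fun u hu => ?_)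
        (setIntegral_mono_set (hI y) (ae_of_all _ fun u => mul_nonneg (hB0 _) (fej_nonneg _))
          (HasSubset.Subset.eventuallyLE fun u hu => ?_))
      · exact lt_of_lt_of_le (by linarith) hu.1
      · refine mul_le_mul_of_nonneg_right ?_ (fej_nonneg _)
        have hu1 : Y ≤ 1 / (k : ℝ) ^ 2 * u := by
          have := hu.1
          rw [one_div, ← div_eq_inv_mul, le_div_iff₀ (by positivity)]
          have e : y - k = Y * (k : ℝ) ^ 2 := by rw [hy]; field_simp; ring
          linarith
        have hu2 : 1 / (k : ℝ) ^ 2 * u ≤ Y + 2 * (1 / k) := by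
          have := hu.2
          rw [one_div, ← div_eq_inv_mul, div_le_iff₀ (by positivity)]
          have e : y + k = (Y + 2 * (1 / k)) * (k : ℝ) ^ 2 := by rw [hy]; field_simp; ring
          linarith
        have h4 := hB' hu1
        have h5 : Real.exp (1 / (k : ℝ) ^ 2 * u - Y) ≤ Real.exp (2 * (1 / (k : ℝ))) :=
          Real.exp_le_exp.2 (by linarith)
        rw [Real.exp_neg, inv_mul_le_iff₀ (Real.exp_pos _)]
        exact h4.trans (mul_le_mul_of_nonneg_right h5 (hB0 _))
      · exact lt_of_lt_of_le (by linarith) hu.1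
    have h6 := hle.trans hY
    rw [Real.exp_neg, mul_assoc, inv_mul_le_iff₀ (Real.exp_pos _), ← le_div_iff₀ h2] at h6
    refine h6.trans ?_
    rw [mul_comm (Real.exp _)]
    exact h1.le
  -- global bound
  obtain ⟨C, hC0, hC⟩ : ∃ C, 0 ≤ C ∧ ∀ u, 0 ≤ u → B u ≤ C := by
    obtain ⟨U, hU⟩ := eventually_atTop.1 (hup (A + 1) (by linarith))
    set U' := max U 0
    refine ⟨max (A + 1) (Real.exp U' * B U'), le_max_of_le_right (by
      have := hB0 U'; positivity), fun u hu => ?_⟩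
    rcases le_total U' u with h | h
    · exact le_max_of_le_left (hU u ((le_max_left _ _).trans h))
    · refine le_max_of_le_right ((hB' h).trans ?_)
      exact mul_le_mul_of_nonneg_right (Real.exp_le_exp.2 (by linarith)) (hB0 _)
  have hlow : ∀ A' < A, ∀ᶠ Y in atTop, A' ≤ B Y := by
    intro A' hA'
    have hlim : Tendsto (fun k : ℕ => (A * c - 1 / (k : ℝ) - C * (c - cR k)) / c
          * Real.exp (-(2 * (1 / (k:ℝ))))) atTop
        (𝓝 ((A * c - 0 - C * (c - c)) / c * Real.exp (-(2 * 0)))) :=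
      ((((hinv.const_sub _).sub ((hcRlim.const_sub c).const_mul C)).div_const c).mul
        ((Real.continuous_exp.tendsto _).comp (hinv.const_mul 2).neg))
    rw [sub_self, mul_zero, mul_zero, neg_zero, Real.exp_zero, mul_one, sub_zero, sub_zero,
      mul_div_cancel_right₀ _ hcpos.ne'] at hlim
    obtain ⟨k, h1, h3⟩ := ((hlim.eventually_const_lt hA').and (eventually_ge_atTop 1)).exists
    have hk0 : (0 : ℝ) < k := by exact_mod_cast h3
    obtain ⟨hI, hT⟩ := hJ k h3
    have hT' := hT.eventually_const_le (show A * c - 1 / (k : ℝ) < A * c by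
      have : 0 < 1 / (k : ℝ) := by positivity
      linarith)
    have hs : Tendsto (fun Y : ℝ => (k : ℝ) ^ 2 * (Y - 1 / k)) atTop atTop :=
      (tendsto_atTop_add_const_right _ _ tendsto_id).const_mul_atTop (by positivity)
    filter_upwards [hs.eventually hT', eventually_gt_atTop (2 * (1 / (k:ℝ)))] with Y hY hY0
    set y := (k : ℝ) ^ 2 * (Y - 1 / k) with hy
    have hyk : (k : ℝ) < y := by
      have : (k : ℝ) = (k : ℝ) ^ 2 * (1 / k) := by field_simp
      rw [hy]
      nth_rewrite 1 [this]
      exact mul_lt_mul_of_pos_left (by linarith) (by positivity)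
    have hle : ∫ u in Ioi (0 : ℝ), B (1 / (k : ℝ) ^ 2 * u) * fej (u - y) ≤
        Real.exp (2 * (1 / (k:ℝ))) * B Y * c + C * (c - cR k) := by
      have hsub : Icc (y - k) (y + k) ⊆ Ioi (0:ℝ) := fun u hu => lt_of_lt_of_le (by linarith) hu.1
      have e1 : Ioi (0 : ℝ) = Icc (y - k) (y + k) ∪ (Ioi (0:ℝ) \ Icc (y - k) (y + k)) :=
        (union_diff_cancel hsub).symm
      rw [e1, setIntegral_union disjoint_sdiff_right (measurableSet_Ioi.diff measurableSet_Icc)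
        ((hI y).mono_set hsub) ((hI y).mono_set diff_subset)]
      refine add_le_add ?_ ?_
      · have hc1 : cR k ≤ c := setIntegral_le_integral fej_integrable (ae_of_all _ fej_nonneg)
        have h7 : Real.exp (2 * (1 / (k:ℝ))) * B Y * cR k ≤ Real.exp (2 * (1 / (k:ℝ))) * B Y * c :=
          mul_le_mul_of_nonneg_left hc1 (mul_nonneg (Real.exp_pos _).le (hB0 _))
        refine le_trans ?_ h7
        rw [← hshift y k, ← integral_const_mul]
        refine setIntegral_mono_on ((hI y).mono_set hsub) ((hfi y).integrableOn.const_mul _)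
          measurableSet_Icc fun u hu => ?_
        refine mul_le_mul_of_nonneg_right ?_ (fej_nonneg _)
        have hu1 : Y - 2 * (1 / k) ≤ 1 / (k : ℝ) ^ 2 * u := by
          have := hu.1
          rw [one_div ((k:ℝ)^2), ← div_eq_inv_mul, le_div_iff₀ (by positivity)]
          have e : y - k = (Y - 2 * (1 / k)) * (k : ℝ) ^ 2 := by rw [hy]; field_simp; ring
          linarith
        have hu2 : 1 / (k : ℝ) ^ 2 * u ≤ Y := by
          have := hu.2
          rw [one_div, ← div_eq_inv_mul, div_le_iff₀ (by positivity)]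
          have e : y + k = Y * (k : ℝ) ^ 2 := by rw [hy]; field_simp; ring
          linarith
        have h4 := hB' hu2
        have h5 : Real.exp (Y - 1 / (k : ℝ) ^ 2 * u) ≤ Real.exp (2 * (1 / (k : ℝ))) :=
          Real.exp_le_exp.2 (by linarith)
        exact h4.trans (mul_le_mul_of_nonneg_right h5 (hB0 _))
      · have h8 : c - cR k = ∫ u in (Icc (y - k) (y + k))ᶜ, fej (u - y) := by
          have := integral_add_compl (measurableSet_Icc (a := y - k) (b := y + k)) (hfi y)
          have e := integral_sub_right_eq_self (μ := volume) fej y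
          rw [hshift, e] at this
          linarith
        rw [h8, ← integral_const_mul]
        have h9 : ∫ u in Ioi (0:ℝ) \ Icc (y - k) (y + k), B (1 / (k : ℝ) ^ 2 * u) * fej (u - y)
            ≤ ∫ u in Ioi (0:ℝ) \ Icc (y - k) (y + k), C * fej (u - y) := by
          refine setIntegral_mono_on ((hI y).mono_set diff_subset) ((hfi y).integrableOn.const_mul _)
            (measurableSet_Ioi.diff measurableSet_Icc) fun u hu => ?_
          refine mul_le_mul_of_nonneg_right (hC _ ?_) (fej_nonneg _)
          have : (0:ℝ) < u := hu.1
          positivity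
        refine h9.trans (setIntegral_mono_set ((hfi y).integrableOn.const_mul _)
          (ae_of_all _ fun u => mul_nonneg hC0 (fej_nonneg _))
          (HasSubset.Subset.eventuallyLE fun u hu => hu.2))
    have h6 := hY.trans hle
    have h7 : (A * c - 1 / (k : ℝ) - C * (c - cR k)) / c ≤ Real.exp (2 * (1 / (k:ℝ))) * B Y := by
      rw [div_le_iff₀ hcpos]; linarith
    have h8 : (A * c - 1 / (k : ℝ) - C * (c - cR k)) / c * Real.exp (-(2 * (1 / (k:ℝ)))) ≤ B Y := by
      rw [Real.exp_neg, ← div_eq_mul_inv, div_le_iff₀ (Real.exp_pos _), mul_comm (B Y)]; exact h7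
    linarith
  rw [tendsto_order]
  constructor
  · intro a ha
    filter_upwards [hlow ((a + A) / 2) (by linarith)] with Y hY
    linarith
  · intro a ha
    filter_upwards [hup ((a + A) / 2) (by linarith)] with Y hY
    linarith

end SR
end

section
open MeasureTheory Set Filter Topology

namespace SR

theorem tauber (a : ℕ → ℝ) (ha : ∀ n, 0 ≤ a n)
    (hsum : ∀ r : ℝ, 1 < r → LSeriesSummable (fun n => (a n : ℂ)) r)
    (A : ℝ) (G : ℂ → ℂ) (hG : ContinuousOn G {s | 1 ≤ s.re})
    (hL : ∀ s : ℂ, 1 < s.re → LSeries (fun n => (a n : ℂ)) s = A / (s - 1) + G s) :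
    Tendsto (fun x : ℝ => (∑ k ∈ Finset.Icc 1 ⌊x⌋₊, a k) / x) atTop (𝓝 A) := by
  set psi : ℝ → ℝ := fun t => ∑ k ∈ Finset.Icc 1 ⌊t⌋₊, a k with hpsi
  have hpsi0 : ∀ t, 0 ≤ psi t := fun t => Finset.sum_nonneg fun k _ => ha k
  have hmono : Monotone psi := fun s t hst =>
    Finset.sum_le_sum_of_subset_of_nonneg
      (Finset.Icc_subset_Icc_right (Nat.floor_le_floor hst)) fun k _ _ => ha k
  have hbd : ∀ r : ℝ, 1 < r → ∃ C, 0 ≤ C ∧ ∀ n : ℕ, ∑ k ∈ Finset.Icc 1 n, a k ≤ C * (n : ℝ) ^ r := by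
    intro r hr
    have hs := (hsum r hr).norm
    refine ⟨∑' n, ‖LSeries.term (fun n => (a n : ℂ)) r n‖, tsum_nonneg fun _ => norm_nonneg _,
      fun n => ?_⟩
    calc ∑ k ∈ Finset.Icc 1 n, a k
        ≤ ∑ k ∈ Finset.Icc 1 n, ‖LSeries.term (fun n => (a n : ℂ)) r k‖ * (n : ℝ) ^ r := by
          refine Finset.sum_le_sum fun k hk => ?_
          rw [Finset.mem_Icc] at hk
          have hk0 : (0:ℝ) < k := by exact_mod_cast hk.1
          rw [LSeries.norm_term_eq, if_neg (by omega), Complex.ofReal_re, Complex.norm_real,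
            Real.norm_of_nonneg (ha k), div_mul_eq_mul_div, le_div_iff₀ (by positivity)]
          exact mul_le_mul_of_nonneg_left (Real.rpow_le_rpow hk0.le (by exact_mod_cast hk.2)
            (by linarith)) (ha k)
      _ ≤ _ := by
          rw [← Finset.sum_mul]
          exact mul_le_mul_of_nonneg_right (hs.sum_le_tsum _ fun _ _ => norm_nonneg _)
            (by positivity)
  set B : ℝ → ℝ := fun u => Real.exp (-u) * psi (Real.exp u) with hB
  have key : Tendsto B atTop (𝓝 A) := by
    refine tauber_core B (fun u => mul_nonneg (Real.exp_pos _).le (hpsi0 _)) ?_ ?_ A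
      (fun z => (G (1 + z) - A) / (1 + z)) ?_ ?_
    · intro u v huv
      simp only [hB, ← mul_assoc, ← Real.exp_add]
      simpa using hmono (Real.exp_le_exp.2 huv)
    · intro ε hε
      obtain ⟨C, hC0, hC⟩ := hbd (1 + ε / 2) (by linarith)
      have hi : IntegrableOn (fun u : ℝ => C * Real.exp (-(ε/2) * u)) (Ioi 0) :=
        (exp_neg_integrableOn_Ioi 0 (by linarith)).const_mul C
      refine hi.mono' ?_ ((ae_restrict_mem measurableSet_Ioi).mono fun u hu => ?_)
      · have h1 : Measurable fun u => psi (Real.exp u) :=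
          hmono.measurable.comp Real.measurable_exp
        have : Measurable fun u => B u * Real.exp (-ε * u) := by
          simp only [hB]; fun_prop
        exact this.aestronglyMeasurable
      · rw [Real.norm_of_nonneg (mul_nonneg (mul_nonneg (Real.exp_pos _).le (hpsi0 _))
          (Real.exp_pos _).le)]
        have h1 : psi (Real.exp u) ≤ C * Real.exp ((1 + ε/2) * u) := by
          refine (hC _).trans (mul_le_mul_of_nonneg_left ?_ hC0)
          rw [mul_comm (1 + ε/2), Real.exp_mul]
          exact Real.rpow_le_rpow (by positivity) (Nat.floor_le (Real.exp_pos _).le) (by linarith)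
        calc B u * Real.exp (-ε * u) ≤ (Real.exp (-u) * (C * Real.exp ((1 + ε/2) * u))) *
              Real.exp (-ε * u) := by
              simp only [hB]; gcongr
          _ = C * (Real.exp (-u) * Real.exp ((1 + ε/2) * u) * Real.exp (-ε * u)) := by ring
          _ = _ := by rw [← Real.exp_add, ← Real.exp_add]; congr 2; ring
    · refine ContinuousOn.div ((hG.comp (by fun_prop) ?_).sub continuousOn_const) (by fun_prop) ?_
      · intro z hz
        simp only [mem_setOf_eq, Complex.add_re, Complex.one_re] at *; linarith
      · intro z hz h
        have := congrArg Complex.re h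
        simp only [mem_setOf_eq, Complex.add_re, Complex.one_re, Complex.zero_re] at *; linarith
    · intro z hz
      have hs : 1 < (1 + z).re := by simp; exact hz
      have hz0 : z ≠ 0 := fun h => by simp [h] at hz
      have hs0 : 1 + z ≠ 0 := fun h => by rw [h] at hs; simp at hs; linarith
      have hr : 1 < 1 + z.re / 2 := by linarith
      obtain ⟨C, hC0, hC⟩ := hbd (1 + z.re / 2) hr
      have h1 := LSeries_eq_mul_integral_of_nonneg a (r := 1 + z.re / 2) (by linarith)
        (s := 1 + z) (by simp; linarith) (Asymptotics.IsBigO.of_bound C (Eventually.of_forall fun n => by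
          rw [Real.norm_of_nonneg (Finset.sum_nonneg fun k _ => ha k),
            Real.norm_of_nonneg (by positivity)]
          exact hC n)) ha
      rw [hL _ hs] at h1
      have himg : Real.exp '' (Ioi 0) = Ioi 1 := by
        ext t; constructor
        · rintro ⟨u, hu, rfl⟩; exact Real.one_lt_exp_iff.2 hu
        · intro ht
          have : (1:ℝ) < t := ht
          exact ⟨Real.log t, Real.log_pos ht, Real.exp_log (by linarith)⟩
      rw [← himg, integral_image_eq_integral_abs_deriv_smul measurableSet_Ioi
        (fun u _ => (Real.hasDerivAt_exp u).hasDerivWithinAt) Real.exp_injective.injOn] at h1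
      have h2 : ∫ u in Ioi (0 : ℝ), (B u : ℂ) * Complex.exp (-z * u) =
          ∫ u in Ioi (0:ℝ), |Real.exp u| • ((∑ k ∈ Finset.Icc 1 ⌊Real.exp u⌋₊, (a k : ℂ)) *
            (Real.exp u : ℂ) ^ (-(1 + z + 1))) := by
        refine setIntegral_congr_fun measurableSet_Ioi fun u hu => ?_
        have e2 : (Real.exp u : ℂ) ^ (-(1 + z + 1)) = Complex.exp (-(1+z+1) * u) := by
          rw [Complex.cpow_def_of_ne_zero (by exact_mod_cast (Real.exp_pos u).ne'),
            ← Complex.ofReal_log (Real.exp_pos _).le, Real.log_exp, mul_comm]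
        simp only [hB, hpsi]
        rw [e2, abs_of_pos (Real.exp_pos _), Complex.real_smul]
        push_cast
        rw [show Complex.exp u * ((∑ k ∈ Finset.Icc 1 ⌊Real.exp u⌋₊, (a k : ℂ)) *
          Complex.exp (-(1+z+1) * u)) = (∑ k ∈ Finset.Icc 1 ⌊Real.exp u⌋₊, (a k : ℂ)) *
          (Complex.exp u * Complex.exp (-(1+z+1) * u)) by ring,
          mul_right_comm, ← Complex.exp_add, ← Complex.exp_add, mul_comm]
        congr 2; ring
      rw [h2, eq_comm]
      have h3 := (eq_div_iff hs0).2 ((mul_comm _ _).trans h1.symm)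
      rw [h3]
      have : (1 + z - 1 : ℂ) = z := by ring
      rw [this]
      field_simp
      ring
  refine (key.comp Real.tendsto_log_atTop).congr' ?_
  filter_upwards [eventually_gt_atTop 0] with x hx
  simp only [Function.comp, hB, Real.exp_neg, Real.exp_log hx, hpsi]
  rw [div_eq_inv_mul]

end SR
end

section
open MeasureTheory Set Filter Topology

namespace SR

lemma three_four_one (Lam : ℕ → ℝ) (h0 : ∀ n, 0 ≤ Lam n)
    (hs : ∀ r : ℝ, 1 < r → LSeriesSummable (fun n => (Lam n : ℂ)) r) (x t : ℝ) (hx : 1 < x) :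
    0 ≤ 3 * (LSeries (fun n => (Lam n : ℂ)) x).re + 4 * (LSeries (fun n => (Lam n : ℂ)) (x + t * Complex.I)).re
      + (LSeries (fun n => (Lam n : ℂ)) (x + 2 * t * Complex.I)).re := by
  have hS : ∀ s : ℂ, s.re = x → Summable (LSeries.term (fun n => (Lam n : ℂ)) s) := fun s h =>
    (LSeriesSummable_iff_of_re_eq_re (by simp [h])).1 (hs x hx)
  have e0 := hS x (by simp)
  have e1 := hS (x + t * Complex.I) (by simp)
  have e2 := hS (x + 2 * t * Complex.I) (by simp)
  unfold LSeries
  rw [Complex.re_tsum e0, Complex.re_tsum e1, Complex.re_tsum e2]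
  have s0 := Complex.reCLM.summable e0
  have s1 := Complex.reCLM.summable e1
  have s2 := Complex.reCLM.summable e2
  simp only [Complex.reCLM_apply] at s0 s1 s2
  rw [← tsum_mul_left, ← tsum_mul_left, ← (s0.mul_left 3).tsum_add (s1.mul_left 4),
    ← ((s0.mul_left 3).add (s1.mul_left 4)).tsum_add s2]
  refine tsum_nonneg fun n => ?_
  rcases Nat.eq_zero_or_pos n with rfl | hn
  · simp
  have key : ∀ y : ℝ, (LSeries.term (fun n => (Lam n : ℂ)) (x + y * Complex.I) n).re =
      Lam n * (n : ℝ) ^ (-x) * Real.cos (y * Real.log n) := by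
    intro y
    have hn' : (n : ℂ) ≠ 0 := by exact_mod_cast hn.ne'
    rw [LSeries.term_of_ne_zero hn.ne', div_eq_mul_inv, ← Complex.cpow_neg, Complex.re_ofReal_mul,
      mul_assoc]
    congr 1
    rw [Complex.cpow_def_of_ne_zero hn', Complex.exp_re, ← Complex.natCast_log,
      Real.rpow_def_of_pos (by exact_mod_cast hn)]
    simp only [Complex.mul_re, Complex.mul_im, Complex.neg_re, Complex.neg_im, Complex.add_re,
      Complex.add_im, Complex.ofReal_re, Complex.ofReal_im, Complex.I_re, Complex.I_im]
    rw [← Real.cos_neg]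
    congr 2 <;> ring
  have k0 := key 0
  have k1 := key t
  have k2 := key (2 * t)
  simp only [Complex.ofReal_zero, zero_mul, add_zero, Real.cos_zero, mul_one] at k0
  push_cast at k2
  rw [k0, k1, k2, mul_assoc 2 t, Real.cos_two_mul]
  have : 0 ≤ Lam n * (n : ℝ) ^ (-x) := mul_nonneg (h0 n) (by positivity)
  nlinarith [mul_nonneg this (sq_nonneg (1 + Real.cos (t * Real.log n)))]

theorem logderiv (r Lam : ℕ → ℝ) (hL0 : ∀ n, 0 ≤ Lam n)
    (hr : ∀ x : ℝ, 1 < x → LSeriesSummable (fun n => (r n : ℂ)) x)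
    (hL : ∀ x : ℝ, 1 < x → LSeriesSummable (fun n => (Lam n : ℂ)) x)
    (h : ℂ → ℂ) (hh : ∀ s : ℂ, 1 ≤ s.re → AnalyticAt ℂ h s)
    (hh1 : h 1 ≠ 0)
    (hZ : ∀ s : ℂ, 1 < s.re → h s = (s - 1) * LSeries (fun n => (r n : ℂ)) s)
    (hconv : ∀ s : ℂ, 1 < s.re → LSeries (LSeries.logMul (fun n => (r n : ℂ))) s =
      LSeries (fun n => (r n : ℂ)) s * LSeries (fun n => (Lam n : ℂ)) s) :
    ∃ G : ℂ → ℂ, ContinuousOn G {s | 1 ≤ s.re} ∧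
      ∀ s : ℂ, 1 < s.re → LSeries (fun n => (Lam n : ℂ)) s = 1 / (s - 1) + G s := by
  set W := LSeries (fun n => (Lam n : ℂ)) with hW
  have habs : ∀ f : ℕ → ℂ, (∀ x : ℝ, 1 < x → LSeriesSummable f x) →
      LSeries.abscissaOfAbsConv f ≤ 1 := fun f hf =>
    LSeries.abscissaOfAbsConv_le_of_forall_lt_LSeriesSummable (fun y hy => hf y (by exact_mod_cast hy))
  have habs' : ∀ f : ℕ → ℂ, (∀ x : ℝ, 1 < x → LSeriesSummable f x) → ∀ s : ℂ, 1 < s.re →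
      LSeries.abscissaOfAbsConv f < s.re := fun f hf s hs =>
    (habs f hf).trans_lt (by exact_mod_cast hs)
  have hWcont : ∀ s : ℂ, 1 < s.re → ContinuousAt W s := fun s hs =>
    (LSeries_hasDerivAt (habs' _ hL s hs)).continuousAt
  have hopen : IsOpen {s : ℂ | 1 < s.re} := isOpen_lt continuous_const Complex.continuous_re
  have hderiv : ∀ s : ℂ, 1 < s.re → (s - 1) * deriv h s = h s * (1 - (s - 1) * W s) := by
    intro s hs
    have h1 : HasDerivAt h (1 * LSeries (fun n => (r n : ℂ)) s + (s - 1) *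
        (-LSeries (LSeries.logMul (fun n => (r n : ℂ))) s)) s := by
      refine ((((hasDerivAt_id s).sub_const 1)).mul (LSeries_hasDerivAt (habs' _ hr s hs))).congr_of_eventuallyEq ?_
      filter_upwards [hopen.mem_nhds hs] with w hw
      simpa using hZ w hw
    rw [h1.deriv, hconv s hs, hZ s hs]
    ring
  -- order at each point
  have hord : ∀ s0 : ℂ, 1 ≤ s0.re → ∃ m : ℕ, (m = 0 → h s0 ≠ 0) ∧
      Tendsto (fun ε : ℝ => (ε : ℂ) * W (s0 + ε)) (𝓝[>] 0) (𝓝 ((if s0 = 1 then 1 else 0) - m)) ∧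
      (s0 = 1 → m = 0) := by
    intro s0 hs0
    have hnt : analyticOrderAt h s0 ≠ ⊤ := by
      intro htop
      rw [analyticOrderAt_eq_top] at htop
      have hconn : IsPreconnected {s : ℂ | 1 ≤ s.re} :=
        (convex_halfSpace_re_ge 1).isPreconnected
      have := AnalyticOnNhd.eqOn_zero_of_preconnected_of_eventuallyEq_zero
        (f := h) (U := {s : ℂ | 1 ≤ s.re}) (fun s hs => hh s hs) hconn hs0 htop
      exact hh1 (this (by simp : (1:ℂ) ∈ {s : ℂ | 1 ≤ s.re}))
    obtain ⟨m, hm⟩ := ENat.ne_top_iff_exists.1 hnt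
    obtain ⟨g, hg, hg0, hgeq⟩ := ((hh s0 hs0).analyticOrderAt_eq_natCast).1 hm.symm
    refine ⟨m, ?_, ?_, ?_⟩
    · rintro rfl
      have := hgeq.self_of_nhds
      simp at this; rwa [this]
    · have htend : Tendsto (fun ε : ℝ => s0 + (ε : ℂ)) (𝓝[>] 0) (𝓝 s0) := by
        have : Tendsto (fun ε : ℝ => s0 + (ε : ℂ)) (𝓝 0) (𝓝 (s0 + ((0:ℝ) : ℂ))) :=
          Continuous.tendsto (by fun_prop) 0
        simp only [Complex.ofReal_zero, add_zero] at this
        exact this.mono_left nhdsWithin_le_nhds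
      have hder : ∀ᶠ s in 𝓝 s0, (s - s0) * deriv h s = (s - s0) ^ m * (m * g s + (s - s0) * deriv g s) := by
        filter_upwards [hgeq.eventually_nhds, hg.eventually_analyticAt] with s hs hgs
        have hd : HasDerivAt (fun z => (z - s0) ^ m • g z)
            ((m * (s - s0) ^ (m - 1) * 1) * g s + (s - s0) ^ m * deriv g s) s := by
          have := ((((hasDerivAt_id s).sub_const s0)).pow m).mul hgs.differentiableAt.hasDerivAt
          simp only [id, Pi.pow_def, Pi.mul_def] at this
          simpa [smul_eq_mul] using this
        have hs' : h =ᶠ[𝓝 s] fun x => (x - s0) ^ m • g x := hs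
        rw [hs'.deriv_eq, hd.deriv]
        rcases m with _ | m
        · simp
        · simp only [Nat.add_sub_cancel]; ring
      have hev : ∀ᶠ ε : ℝ in 𝓝[>] 0, (ε : ℂ) * W (s0 + ε) =
          ε / (s0 + ε - 1) - (m + ε * deriv g (s0 + ε) / g (s0 + ε)) := by
        filter_upwards [htend.eventually hgeq, htend.eventually hder,
          htend.eventually (hg.continuousAt.eventually_ne hg0), self_mem_nhdsWithin] with ε h1 h2 h3 h4
        have hε : (0:ℝ) < ε := h4
        have hε' : (ε : ℂ) ≠ 0 := by exact_mod_cast hε.ne'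
        have hre : 1 < (s0 + ε).re := by simp; linarith
        have h5 := hderiv _ hre
        have hne : s0 + ε - 1 ≠ 0 := by
          intro h; rw [sub_eq_zero] at h; rw [h] at hre; simp at hre
        simp only [add_sub_cancel_left, smul_eq_mul] at h1 h2
        rw [h1] at h5
        have hpm : (ε : ℂ) ^ m ≠ 0 := pow_ne_zero _ hε'
        have h6 : (s0 + ε - 1) * (m * g (s0 + ε) + ε * deriv g (s0 + ε)) =
            ε * (g (s0 + ε) * (1 - (s0 + ε - 1) * W (s0 + ε))) := by
          apply mul_left_cancel₀ hpm
          linear_combination (ε : ℂ) * h5 - (s0 + ε - 1) * h2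
        have h7 : ε * W (s0 + ε) * ((s0 + ε - 1) * g (s0 + ε)) =
          ε * g (s0 + ε) - (s0 + ε - 1) * (m * g (s0 + ε) + ε * deriv g (s0 + ε)) := by
          linear_combination h6
        rw [eq_comm, ← mul_left_inj' (mul_ne_zero hne h3), h7]
        field_simp
      refine Tendsto.congr' (EventuallyEq.symm hev) ?_
      have hof : Tendsto (fun ε : ℝ => (ε : ℂ)) (𝓝[>] 0) (𝓝 0) := by
        have := (Complex.continuous_ofReal.tendsto 0).mono_left (nhdsWithin_le_nhds (s := Ioi 0))
        simpa using this
      have t1 : Tendsto (fun ε : ℝ => (ε : ℂ) / (s0 + ε - 1)) (𝓝[>] 0) (𝓝 (if s0 = 1 then 1 else 0)) := by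
        split_ifs with hc
        · refine tendsto_const_nhds.congr' ?_
          filter_upwards [self_mem_nhdsWithin] with ε h4
          have hε : (0:ℝ) < ε := h4
          have hε' : (ε : ℂ) ≠ 0 := by exact_mod_cast hε.ne'
          rw [hc, add_sub_cancel_left, div_self hε']
        · have := hof.div (htend.sub_const 1) (sub_ne_zero.2 hc)
          simpa [Pi.div_def] using this
      have t2 : Tendsto (fun ε : ℝ => (ε : ℂ) * deriv g (s0 + ε) / g (s0 + ε)) (𝓝[>] 0) (𝓝 0) := by
        have := (hof.mul (hg.deriv.continuousAt.tendsto.comp htend)).div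
          (hg.continuousAt.tendsto.comp htend) hg0
        simpa [Pi.div_def, Function.comp_def] using this
      simpa using t1.sub (t2.const_add (m : ℂ))
    · rintro rfl
      by_contra hm0
      have := hgeq.self_of_nhds
      rw [sub_self, zero_pow hm0, zero_smul] at this
      exact hh1 this
  have hne : ∀ s0 : ℂ, 1 ≤ s0.re → h s0 ≠ 0 := by
    intro s0 hs0
    obtain ⟨m, hm, hlim, hm1⟩ := hord s0 hs0
    by_cases h1 : s0 = 1
    · exact hm (hm1 h1)
    rw [if_neg h1] at hlim
    have htend : Tendsto (fun ε : ℝ => s0 + (ε : ℂ)) (𝓝[>] 0) (𝓝 s0) := by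
      have : Tendsto (fun ε : ℝ => s0 + (ε : ℂ)) (𝓝 0) (𝓝 (s0 + ((0:ℝ) : ℂ))) :=
        Continuous.tendsto (by fun_prop) 0
      simp only [Complex.ofReal_zero, add_zero] at this
      exact this.mono_left nhdsWithin_le_nhds
    have hof : Tendsto (fun ε : ℝ => (ε : ℂ)) (𝓝[>] 0) (𝓝 0) := by
      have := (Complex.continuous_ofReal.tendsto 0).mono_left (nhdsWithin_le_nhds (s := Ioi 0))
      simpa using this
    rcases hs0.lt_or_eq with hlt | heq
    · have := hof.mul ((hWcont s0 hlt).tendsto.comp htend)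
      simp only [zero_mul] at this
      have := tendsto_nhds_unique this hlim
      apply hm
      simpa using this
    · set t := s0.im
      have hs0e : s0 = 1 + t * Complex.I := by
        apply Complex.ext <;> simp [← heq, t]
      obtain ⟨m1, -, l1, hm1'⟩ := hord 1 (by simp)
      obtain ⟨m2, -, l2, -⟩ := hord (1 + 2 * t * Complex.I) (by simp)
      have ht0 : t ≠ 0 := by
        intro h; rw [h] at hs0e; simp at hs0e; exact h1 hs0e
      have hs2 : (1 + 2 * t * Complex.I : ℂ) ≠ 1 := by simp [ht0]
      rw [if_neg hs2] at l2
      rw [if_pos rfl, hm1' rfl] at l1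
      have L1 := (Complex.continuous_re.tendsto _).comp l1
      have L2 := (Complex.continuous_re.tendsto _).comp l2
      have L0 := (Complex.continuous_re.tendsto _).comp hlim
      have := ((L1.const_mul 3).add (L0.const_mul 4)).add L2
      have hge := ge_of_tendsto this (b := 0) (by
        filter_upwards [self_mem_nhdsWithin] with ε h4
        have hε : (0:ℝ) < ε := h4
        have h341 := three_four_one Lam hL0 hL (1 + ε) t (by linarith)
        simp only [Function.comp, Complex.re_ofReal_mul]
        rw [hs0e]
        have e1 : ((1 + ε : ℝ) : ℂ) = 1 + ε := by push_cast; ring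
        have e2 : (1 + t * Complex.I + ε : ℂ) = (1 + ε : ℝ) + t * Complex.I := by push_cast; ring
        have e3 : (1 + 2 * t * Complex.I + ε : ℂ) = (1 + ε : ℝ) + 2 * t * Complex.I := by push_cast; ring
        rw [e2, e3, ← e1]
        nlinarith [mul_nonneg hε.le h341])
      simp at hge
      apply hm
      by_contra hm0
      have a1 : (1:ℝ) ≤ m := by exact_mod_cast Nat.one_le_iff_ne_zero.2 hm0
      have a2 : (0:ℝ) ≤ m2 := by positivity
      linarith
  refine ⟨fun s => - (deriv h s / h s), ?_, ?_⟩
  · intro s hs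
    exact (((hh s hs).deriv.continuousAt.div (hh s hs).continuousAt (hne s hs)).neg).continuousWithinAt
  · intro s hs
    have h1 := hderiv s hs
    have h2 := hne s hs.le
    have h3 : s - 1 ≠ 0 := by
      intro h; rw [sub_eq_zero] at h; rw [h] at hs; simp at hs
    field_simp
    linear_combination h1
end SR
end

section
open MeasureTheory Set Filter Topology

namespace SR

noncomputable def efac (d q : ℕ) (s : ℂ) : ℂ := 1 - Complex.exp ((Real.log q : ℝ) * (d * (1 - s)))

lemma efac_diff (d q : ℕ) : Differentiable ℂ (efac d q) := by unfold efac; fun_prop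

lemma efac_one (d q : ℕ) : efac d q 1 = 0 := by simp [efac]

lemma efac_deriv (d q : ℕ) : deriv (efac d q) 1 = d * (Real.log q : ℝ) := by
  have h : HasDerivAt (efac d q) (0 - Complex.exp ((Real.log q : ℝ) * (d * (1 - 1))) *
      ((Real.log q : ℝ) * (d * (0 - 1)))) 1 := by
    unfold efac
    exact (hasDerivAt_const _ _).sub (HasDerivAt.cexp
      ((((hasDerivAt_const _ _).sub (hasDerivAt_id _)).const_mul _).const_mul _))
  rw [h.deriv]; simp; ring

noncomputable def Efac (d q : ℕ) : ℂ → ℂ := dslope (efac d q) 1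

lemma Efac_diff (d q : ℕ) : Differentiable ℂ (Efac d q) := by
  have := (Complex.differentiableOn_dslope (f := efac d q) (c := 1) (s := univ) Filter.univ_mem).2
    (efac_diff d q).differentiableOn
  exact differentiableOn_univ.1 this

lemma Efac_mul (d q : ℕ) (s : ℂ) : (s - 1) * Efac d q s = efac d q s := by
  have := sub_smul_dslope (efac d q) 1 s
  simpa [efac_one, Efac] using this

lemma Efac_zero (d q : ℕ) (hd : 0 < d) (hq : 2 ≤ q) (s : ℂ) (h : Efac d q s = 0) :
    s ≠ 1 ∧ ∃ k : ℤ, (Real.log q : ℝ) * (d * (1 - s)) = k * (2 * Real.pi * Complex.I) := by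
  have hlog : Real.log q ≠ 0 := (Real.log_pos (by exact_mod_cast hq)).ne'
  constructor
  · rintro rfl
    rw [Efac, dslope_same, efac_deriv] at h
    simp only [mul_eq_zero, Complex.ofReal_eq_zero, hlog, or_false, Nat.cast_eq_zero] at h
    omega
  · have h1 := Efac_mul d q s
    rw [h, mul_zero, efac, eq_comm, sub_eq_zero, eq_comm, Complex.exp_eq_one_iff] at h1
    exact h1

lemma no_common (d : ℕ) (hd : 0 < d) (s : ℂ) (h2 : Efac d 2 s = 0) : Efac d 3 s ≠ 0 := by
  intro h3
  obtain ⟨hs, k, hk⟩ := Efac_zero d 2 hd le_rfl s h2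
  obtain ⟨-, l, hl⟩ := Efac_zero d 3 hd (by norm_num) s h3
  have hd' : (d : ℂ) ≠ 0 := by exact_mod_cast hd.ne'
  have hpi : (2 * Real.pi * Complex.I : ℂ) ≠ 0 := by simp [Real.pi_ne_zero]
  have hX : (d * (1 - s) : ℂ) ≠ 0 := mul_ne_zero hd' (sub_ne_zero.2 hs.symm)
  have h23 : (0:ℝ) < Real.log 2 := Real.log_pos (by norm_num)
  have h33 : (0:ℝ) < Real.log 3 := Real.log_pos (by norm_num)
  have hk0 : k ≠ 0 := by
    rintro rfl
    simp only [Int.cast_zero, zero_mul, mul_eq_zero, Complex.ofReal_eq_zero] at hk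
    rcases hk with h | h
    · exact h23.ne' (by simpa using h)
    · exact hX (by simpa using h)
  have e1 : ((Real.log 2 * l : ℝ) : ℂ) = ((Real.log 3 * k : ℝ) : ℂ) := by
    apply mul_right_cancel₀ (mul_ne_zero hX hpi)
    push_cast at *
    linear_combination (l * (2 * Real.pi * Complex.I)) * hk - (k * (2 * Real.pi * Complex.I)) * hl
  have e2 : Real.log 2 * l = Real.log 3 * k := by exact_mod_cast e1
  have e3 : Real.log 2 * (l.natAbs : ℝ) = Real.log 3 * (k.natAbs : ℝ) := by
    have := congrArg abs e2
    rw [abs_mul, abs_mul, abs_of_pos h23, abs_of_pos h33] at this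
    rw [Nat.cast_natAbs, Nat.cast_natAbs]
    push_cast; exact this
  have e4 : Real.log ((2 : ℝ) ^ l.natAbs) = Real.log ((3:ℝ) ^ k.natAbs) := by
    rw [Real.log_pow, Real.log_pow]; linarith
  have e5 := Real.log_injOn_pos (by simp) (by simp) e4
  have e6 : 2 ^ l.natAbs = 3 ^ k.natAbs := by exact_mod_cast e5
  have hk1 : k.natAbs ≠ 0 := by simpa using hk0
  have h3d : 3 ∣ 2 ^ l.natAbs := e6 ▸ dvd_pow_self 3 hk1
  have := Nat.Prime.dvd_of_dvd_pow Nat.prime_three h3d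
  omega

theorem glue (Z : ℂ → ℂ) (d : ℕ) (hd : 0 < d) (c : ℝ) (hc : c < 1) (H2 H3 : ℂ → ℂ)
    (hH2 : DifferentiableOn ℂ H2 {s | c < s.re}) (hH3 : DifferentiableOn ℂ H3 {s | c < s.re})
    (e2 : ∀ s : ℂ, 1 < s.re → Z s * efac d 2 s = H2 s)
    (e3 : ∀ s : ℂ, 1 < s.re → Z s * efac d 3 s = H3 s)
    (κ : ℝ) (hκ : 0 < κ)
    (hres : Tendsto (fun s : ℝ => ((s : ℂ) - 1) * Z s) (𝓝[>] 1) (𝓝 (κ : ℂ))) :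
    ∃ h : ℂ → ℂ, (∀ s : ℂ, 1 ≤ s.re → AnalyticAt ℂ h s) ∧ h 1 ≠ 0 ∧
      ∀ s : ℂ, 1 < s.re → h s = (s - 1) * Z s := by
  classical
  have hopen : IsOpen {s : ℂ | c < s.re} := isOpen_lt continuous_const Complex.continuous_re
  have hopen1 : IsOpen {s : ℂ | 1 < s.re} := isOpen_lt continuous_const Complex.continuous_re
  have a2 : AnalyticOnNhd ℂ H2 {s | c < s.re} := hH2.analyticOnNhd hopen
  have a3 : AnalyticOnNhd ℂ H3 {s | c < s.re} := hH3.analyticOnNhd hopen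
  have b : ∀ q s, AnalyticAt ℂ (Efac d q) s := fun q s =>
    (Efac_diff d q).analyticAt s
  have hid : ∀ s : ℂ, c < s.re → H2 s * Efac d 3 s = H3 s * Efac d 2 s := by
    have hpre : IsPreconnected {s : ℂ | c < s.re} := (convex_halfSpace_re_gt c).isPreconnected
    refine fun s hs => AnalyticOnNhd.eqOn_of_preconnected_of_eventuallyEq (z₀ := 2)
      (f := fun s => H2 s * Efac d 3 s) (g := fun s => H3 s * Efac d 2 s)
      (fun z hz => (a2 z hz).mul (b 3 z)) (fun z hz => (a3 z hz).mul (b 2 z)) hpre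
      (by simp; linarith) ?_ hs
    filter_upwards [hopen1.mem_nhds (show (2:ℂ) ∈ {s : ℂ | 1 < s.re} by simp)] with w hw
    rw [← e2 w hw, ← e3 w hw, ← Efac_mul, ← Efac_mul]; ring
  set h : ℂ → ℂ := fun s => if Efac d 2 s ≠ 0 then H2 s / Efac d 2 s else H3 s / Efac d 3 s with hh
  have hZ : ∀ s : ℂ, 1 < s.re → h s = (s - 1) * Z s := by
    intro s hs
    simp only [hh]
    split_ifs with h1
    · rw [← e2 s hs, ← Efac_mul]; field_simp
    · have := no_common d hd s (not_not.1 h1)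
      rw [← e3 s hs, ← Efac_mul]; field_simp
  have han : ∀ s : ℂ, 1 ≤ s.re → AnalyticAt ℂ h s := by
    intro s hs
    have hsc : c < s.re := by linarith
    by_cases h1 : Efac d 2 s = 0
    · have h3 := no_common d hd s h1
      refine ((a3 s hsc).div (b 3 s) h3).congr ?_
      filter_upwards [hopen.mem_nhds hsc, (b 3 s).continuousAt.eventually_ne h3] with w hw hw3
      simp only [hh, Pi.div_apply]
      split_ifs with hw2
      · rw [div_eq_div_iff hw3 hw2, hid w hw]
      · rfl
    · refine ((a2 s hsc).div (b 2 s) h1).congr ?_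
      filter_upwards [(b 2 s).continuousAt.eventually_ne h1] with w hw2
      simp only [hh, Pi.div_apply]
      rw [if_pos hw2]
  refine ⟨h, han, ?_, hZ⟩
  have hcont : Tendsto (fun s : ℝ => h s) (𝓝[>] 1) (𝓝 (h 1)) := by
    have h1 := (han 1 (by simp)).continuousAt.tendsto
    have h2 : Tendsto (fun s : ℝ => (s : ℂ)) (𝓝[>] 1) (𝓝 1) := by
      have := (Complex.continuous_ofReal.tendsto 1).mono_left (nhdsWithin_le_nhds (s := Ioi 1))
      simpa using this
    exact h1.comp h2
  have : h 1 = κ := by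
    refine tendsto_nhds_unique hcont (hres.congr' ?_)
    filter_upwards [self_mem_nhdsWithin] with s hs
    exact (hZ s (by simpa using hs)).symm
  rw [this]
  exact_mod_cast hκ.ne'

end SR
end

section
open MeasureTheory Set Filter Topology

namespace SR

noncomputable def hat (t : ℝ) : ℝ := max 0 (1 - |t|)

lemma hat_nonneg (t : ℝ) : 0 ≤ hat t := le_max_left _ _
lemma hat_le_one (t : ℝ) : hat t ≤ 1 := max_le zero_le_one (by linarith [abs_nonneg t])
lemma hat_lip (s t : ℝ) : |hat s - hat t| ≤ |s - t| := by
  unfold hat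
  rw [max_comm 0, max_comm 0]
  refine (abs_max_sub_max_le_abs (1 - |s|) (1 - |t|) 0).trans ?_
  have := abs_abs_sub_abs_le s t
  rw [show (1 - |s|) - (1 - |t|) = -(|s| - |t|) by ring, abs_neg]
  exact this
lemma hat_ne {t : ℝ} (h : hat t ≠ 0) : |t| ≤ 1 := by
  by_contra hc
  exact h (max_eq_left (by linarith))

lemma hat_out (c : ℝ) (a : ℤ) (ha : a ∉ ({-⌊c⌋, -⌊c⌋ - 1} : Finset ℤ)) : hat (c + a) = 0 := by
  by_contra h
  have h1 : |c + a| < 1 := by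
    by_contra hc
    exact h (max_eq_left (by linarith))
  rw [abs_lt] at h1
  have h2 := Int.floor_le c
  have h3 := Int.lt_floor_add_one c
  have h4 : (-2:ℝ) < ⌊c⌋ + a := by linarith
  have h5 : (⌊c⌋ + a : ℝ) < 1 := by linarith
  have h6 : (-2 : ℤ) < ⌊c⌋ + a := by exact_mod_cast h4
  have h7 : ⌊c⌋ + a < 1 := by exact_mod_cast h5
  simp only [Finset.mem_insert, Finset.mem_singleton, not_or] at ha
  omega

lemma hat_sum (c : ℝ) : ∑ a ∈ ({-⌊c⌋, -⌊c⌋ - 1} : Finset ℤ), hat (c + a) = 1 := by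
  rw [Finset.sum_pair (by omega)]
  have h2 := Int.floor_le c
  have h3 := Int.lt_floor_add_one c
  unfold hat
  push_cast
  rw [abs_of_nonneg (by linarith : 0 ≤ c + -(⌊c⌋:ℝ)),
    abs_of_nonpos (by linarith : c + (-(⌊c⌋:ℝ) - 1) ≤ 0), max_eq_right (by linarith),
    max_eq_right (by linarith)]
  ring

lemma hat_prod_hasSum {ι : Type*} [Fintype ι] (c : ι → ℝ) :
    HasSum (fun a : ι → ℤ => ∏ i, hat (c i + a i)) 1 := by
  classical
  have h1 : ∑ a ∈ Fintype.piFinset (fun i => ({-⌊c i⌋, -⌊c i⌋ - 1} : Finset ℤ)),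
      ∏ i, hat (c i + a i) = 1 := by
    rw [← Finset.prod_univ_sum (fun i => ({-⌊c i⌋, -⌊c i⌋ - 1} : Finset ℤ))
      (fun i (a : ℤ) => hat (c i + a))]
    exact Finset.prod_eq_one fun i _ => hat_sum (c i)
  rw [← h1]
  refine hasSum_sum_of_ne_finset_zero fun a ha => ?_
  rw [Fintype.mem_piFinset] at ha
  push Not at ha
  obtain ⟨i, hi⟩ := ha
  exact Finset.prod_eq_zero (Finset.mem_univ i) (hat_out _ _ hi)

lemma hat_prod_lip {ι : Type*} (s : Finset ι) (c c' : ι → ℝ) :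
    |∏ i ∈ s, hat (c i) - ∏ i ∈ s, hat (c' i)| ≤ ∑ i ∈ s, |c i - c' i| := by
  classical
  induction s using Finset.induction_on with
  | empty => simp
  | insert i s hi ih =>
    rw [Finset.prod_insert hi, Finset.prod_insert hi, Finset.sum_insert hi]
    have e : hat (c i) * ∏ i ∈ s, hat (c i) - hat (c' i) * ∏ i ∈ s, hat (c' i) =
      (hat (c i) - hat (c' i)) * ∏ i ∈ s, hat (c i) +
        hat (c' i) * (∏ i ∈ s, hat (c i) - ∏ i ∈ s, hat (c' i)) := by ring
    rw [e]
    refine (abs_add_le _ _).trans (add_le_add ?_ ?_)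
    · rw [abs_mul]
      have h1 : abs (∏ i ∈ s, hat (c i)) ≤ 1 := by
        rw [abs_of_nonneg (Finset.prod_nonneg fun i _ => hat_nonneg _)]
        exact Finset.prod_le_one (fun i _ => hat_nonneg _) fun i _ => hat_le_one _
      calc _ ≤ |c i - c' i| * 1 := mul_le_mul (hat_lip _ _) h1 (abs_nonneg _) (abs_nonneg _)
        _ = _ := mul_one _
    · rw [abs_mul, abs_of_nonneg (hat_nonneg _)]
      calc _ ≤ 1 * _ := mul_le_mul (hat_le_one _) ih (abs_nonneg _) zero_le_one
        _ = _ := one_mul _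

open NumberField NumberField.Units NumberField.Units.dirichletUnitTheorem NumberField.InfinitePlace

variable (K : Type*) [Field K] [NumberField K]

noncomputable def avg (l : InfinitePlace K → ℝ) : ℝ :=
  (∑ v, (mult v : ℝ) * l v) / (Module.finrank ℚ K)

lemma d_pos : (0:ℝ) < Module.finrank ℚ K := by exact_mod_cast Module.finrank_pos

lemma sum_mult_real : ∑ v : InfinitePlace K, (mult v : ℝ) = Module.finrank ℚ K := by
  exact_mod_cast sum_mult_eq (K := K)

noncomputable def Tm : (InfinitePlace K → ℝ) →ₗ[ℝ] logSpace K where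
  toFun l w := (mult w.1 : ℝ) * (l w.1 - avg K l)
  map_add' l l' := by
    ext w; simp [avg, mul_add, Finset.sum_add_distrib, add_div]; ring
  map_smul' t l := by
    ext w
    simp only [avg, Pi.smul_apply, smul_eq_mul, RingHom.id_apply]
    simp_rw [mul_left_comm _ t, ← Finset.mul_sum, mul_div_assoc]
    ring

open scoped Classical in
noncomputable def ubasis : Module.Basis (Fin (rank K)) ℝ (logSpace K) :=
  (basisUnitLattice K).ofZLatticeBasis ℝ (unitLattice K)

noncomputable def Lm : (InfinitePlace K → ℝ) →ₗ[ℝ] (Fin (rank K) → ℝ) :=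
  (ubasis K).equivFun.toLinearMap ∘ₗ Tm K

noncomputable def phi (l : InfinitePlace K → ℝ) : ℝ := ∏ i, hat (Lm K l i)

variable {K}

lemma phi_nonneg (l) : 0 ≤ phi K l := Finset.prod_nonneg fun _ _ => hat_nonneg _
lemma phi_le_one (l) : phi K l ≤ 1 :=
  Finset.prod_le_one (fun i _ => hat_nonneg _) fun i _ => hat_le_one _

open scoped Classical in
lemma phi_lip : ∃ C, 0 ≤ C ∧ ∀ l l', |phi K l - phi K l'| ≤ C * ‖l - l'‖ := by
  set Lc := LinearMap.toContinuousLinearMap (Lm K)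
  refine ⟨∑ i : Fin (rank K), ‖Lc‖, by positivity, fun l l' => ?_⟩
  refine (hat_prod_lip _ _ _).trans ?_
  rw [Finset.sum_mul]
  refine Finset.sum_le_sum fun i _ => ?_
  have h1 := Lc.le_opNorm (l - l')
  have h2 := norm_le_pi_norm (Lc (l - l')) i
  refine le_trans ?_ (h2.trans h1)
  rw [map_sub]; rfl

lemma avg_add_const (l : InfinitePlace K → ℝ) (t : ℝ) :
    avg K (fun w => l w + t) = avg K l + t := by
  have := (d_pos K).ne'
  simp only [avg, mul_add, Finset.sum_add_distrib]
  rw [← Finset.sum_mul, sum_mult_real]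
  field_simp

lemma phi_add_const (l : InfinitePlace K → ℝ) (t : ℝ) : phi K (fun w => l w + t) = phi K l := by
  have : Tm K (fun w => l w + t) = Tm K l := by
    ext w; simp [Tm, avg_add_const]
  simp [phi, Lm, this]

lemma phi_supp : ∃ C, 0 ≤ C ∧ ∀ l, phi K l ≠ 0 → ∀ w v, l w - l v ≤ C := by
  classical
  set E := LinearMap.toContinuousLinearMap ((ubasis K).equivFun.symm.toLinearMap)
  set C := ‖E‖
  have hC : 0 ≤ C := norm_nonneg _
  set n : ℝ := (Fintype.card (InfinitePlace K) : ℝ)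
  refine ⟨2 * ((1 + n) * C), by positivity, fun l hl => ?_⟩
  have h1 : ‖Tm K l‖ ≤ C := by
    have : Tm K l = E (Lm K l) := by
      simp [E, Lm]
    rw [this]
    refine (E.le_opNorm _).trans ?_
    have : ‖Lm K l‖ ≤ 1 := by
      rw [pi_norm_le_iff_of_nonneg zero_le_one]
      intro i
      exact hat_ne (Finset.prod_ne_zero_iff.1 hl i (Finset.mem_univ i))
    calc ‖E‖ * ‖Lm K l‖ ≤ ‖E‖ * 1 := by gcongr
      _ = C := mul_one _
  have hmul : ∀ w : InfinitePlace K, (1:ℝ) ≤ mult w := fun w => by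
    exact_mod_cast mult_pos (w := w)
  have hT : ∀ w : {w : InfinitePlace K // w ≠ w₀}, |(mult w.1 : ℝ) * (l w.1 - avg K l)| ≤ C :=
    fun w => (norm_le_pi_norm (Tm K l) w).trans h1
  have h0 : ∑ v, (mult v : ℝ) * (l v - avg K l) = 0 := by
    have := (d_pos K).ne'
    simp only [mul_sub, Finset.sum_sub_distrib]
    rw [← Finset.sum_mul, sum_mult_real, avg]
    field_simp; ring
  have hall : ∀ w, |l w - avg K l| ≤ (1 + n) * C := by
    intro w
    have hle : |l w - avg K l| ≤ |(mult w : ℝ) * (l w - avg K l)| := by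
      rw [abs_mul, abs_of_nonneg (by linarith [hmul w] : (0:ℝ) ≤ mult w)]
      nlinarith [hmul w, abs_nonneg (l w - avg K l)]
    have hn : 0 ≤ n * C := by positivity
    by_cases hw : w = w₀
    · refine hle.trans ?_
      rw [Fintype.sum_eq_add_sum_subtype_ne _ w₀] at h0
      rw [hw, eq_neg_of_add_eq_zero_left h0, abs_neg]
      refine (Finset.abs_sum_le_sum_abs _ _).trans ((Finset.sum_le_sum fun v _ => hT v).trans ?_)
      rw [Finset.sum_const, nsmul_eq_mul]
      have : ((Finset.univ : Finset {w : InfinitePlace K // w ≠ w₀}).card : ℝ) ≤ n := by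
        simp only [n]
        rw [Finset.card_univ]
        exact Nat.cast_le.2 (Fintype.card_subtype_le _)
      nlinarith
    · refine hle.trans ((hT ⟨w, hw⟩).trans ?_)
      nlinarith
  intro w v
  have a := abs_le.1 (hall w)
  have b := abs_le.1 (hall v)
  linarith [a.2, b.1]

noncomputable def ell (x : K) : InfinitePlace K → ℝ := fun w => Real.log (w x)

lemma ell_mul {x y : K} (hx : x ≠ 0) (hy : y ≠ 0) : ell (x * y) = ell x + ell y := by
  ext w
  simp only [ell, map_mul, Pi.add_apply]
  exact Real.log_mul ((map_ne_zero w).2 hx) ((map_ne_zero w).2 hy)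

open scoped Classical in
lemma Lm_unit (z : torsion K) (a : Fin (rank K) → ℤ) :
    Lm K (ell ((((z : (𝓞 K)ˣ) * ∏ i, (fundSystem K i) ^ (a i) : (𝓞 K)ˣ) : 𝓞 K) : K)) = fun i => (a i : ℝ) := by
  set u := (z : (𝓞 K)ˣ) * ∏ i, (fundSystem K i) ^ (a i) with hu
  have hT : Tm K (ell ((u : 𝓞 K) : K)) = logEmbedding K (Additive.ofMul u) := by
    ext w
    have : avg K (ell ((u : 𝓞 K) : K)) = 0 := by
      simp only [avg, ell]
      rw [sum_mult_mul_log u, zero_div]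
    simp [Tm, this, ell]
  have h2 : logEmbedding K (Additive.ofMul u) = ∑ i, (a i : ℝ) • ubasis K i := by
    have hz : logEmbedding K (Additive.ofMul (z : (𝓞 K)ˣ)) = 0 := logEmbedding_eq_zero_iff.2 z.2
    rw [hu, ofMul_mul, map_add, hz, zero_add, ofMul_prod, map_sum]
    refine Finset.sum_congr rfl fun i _ => ?_
    rw [ofMul_zpow, map_zsmul, logEmbedding_fundSystem, ubasis, Module.Basis.ofZLatticeBasis_apply,
      Int.cast_smul_eq_zsmul]
  ext i
  simp only [Lm, LinearMap.comp_apply, hT, h2]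
  simp [Finset.sum_apply, Module.Basis.repr_self, Finsupp.single_apply]

lemma phi_units (x : K) (hx : x ≠ 0) :
    HasSum (fun u : (𝓞 K)ˣ => phi K (ell (((u : 𝓞 K) : K) * x))) (torsionOrder K) := by
  set f : torsion K × (Fin (rank K) → ℤ) → (𝓞 K)ˣ := fun p => (p.1 : (𝓞 K)ˣ) * ∏ i, (fundSystem K i) ^ (p.2 i)
  have hf : Function.Bijective f := by
    refine (Function.bijective_iff_existsUnique f).2 fun u => ?_
    obtain ⟨p, hp, hp'⟩ := exist_unique_eq_mul_prod K u
    exact ⟨p, hp.symm, fun q hq => hp' q hq.symm⟩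
  rw [← (Equiv.ofBijective f hf).hasSum_iff]
  have key : ∀ p, phi K (ell ((((f p : (𝓞 K)ˣ) : 𝓞 K) : K) * x)) =
      ∏ i, hat (Lm K (ell x) i + p.2 i) := by
    intro p
    rw [ell_mul (by simp) hx]
    unfold phi
    rw [map_add, Lm_unit]
    exact Finset.prod_congr rfl fun i _ => by rw [Pi.add_apply, add_comm]
  have hh := hat_prod_hasSum (Lm K (ell x))
  have h1 : HasSum (fun p : torsion K × (Fin (rank K) → ℤ) => ∏ i, hat (Lm K (ell x) i + p.2 i))
      (torsionOrder K) := by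
    have hs : Summable (fun p : torsion K × (Fin (rank K) → ℤ) => ∏ i, hat (Lm K (ell x) i + p.2 i)) := by
      refine (summable_prod_of_nonneg fun p => Finset.prod_nonneg fun _ _ => hat_nonneg _).2
        ⟨fun _ => hh.summable, Summable.of_finite⟩
    have := hs.tsum_prod
    simp only [hh.tsum_eq] at this
    have e := hs.hasSum
    rw [this, tsum_const] at e
    simpa [torsionOrder] using e
  exact h1.congr_fun key

end SR
end

section
open MeasureTheory Set Filter Topology

namespace SR
open NumberField NumberField.InfinitePlace

variable {K : Type*} [Field K] [NumberField K]

open scoped Classical in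
noncomputable def hs (x : K) : ℝ := ‖mixedEmbedding K x‖

lemma hs_eq (x : K) : (∀ w : InfinitePlace K, w x ≤ hs x) ∧ ∃ w : InfinitePlace K, w x = hs x := by
  have h := mixedEmbedding.norm_eq_sup'_normAtPlace (K := K) (mixedEmbedding K x)
  simp only [mixedEmbedding.normAtPlace_apply] at h
  constructor
  · intro w
    rw [hs, h]
    exact Finset.le_sup' (fun w : InfinitePlace K => w x) (Finset.mem_univ w)
  · obtain ⟨w, -, hw⟩ := Finset.exists_mem_eq_sup' Finset.univ_nonempty (fun w : InfinitePlace K => w x)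
    exact ⟨w, by rw [hs, h]; exact hw.symm⟩

open scoped Classical in
lemma hs_add (x y : K) : hs (x + y) ≤ hs x + hs y := by
  unfold hs; rw [map_add]; exact norm_add_le _ _
open scoped Classical in
lemma hs_neg (x : K) : hs (-x) = hs x := by
  unfold hs; rw [map_neg, norm_neg]
open scoped Classical in
lemma hs_nonneg (x : K) : 0 ≤ hs x := norm_nonneg _
open scoped Classical in
lemma hs_zero : hs (0 : K) = 0 := by simp [hs]
lemma hs_pos {x : K} (hx : x ≠ 0) : 0 < hs x := by
  obtain ⟨w, hw⟩ := (hs_eq x).2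
  rw [← hw]; exact InfinitePlace.pos_iff.2 hx
open scoped Classical in
lemma hs_mul_nat (q : ℕ) (x : K) : hs ((q : K) * x) = q * hs x := by
  unfold hs
  rw [map_mul, map_natCast, ← nsmul_eq_mul, ← Nat.cast_smul_eq_nsmul ℝ, norm_smul]
  simp

noncomputable def Ln (l : InfinitePlace K → ℝ) : ℝ := ∑ w, (mult w : ℝ) * l w

open scoped Classical in
noncomputable def g (s : ℂ) (x : K) : ℂ :=
  if x = 0 then 0 else (phi K (ell x) : ℂ) * Complex.exp (-s * (Ln (ell x) : ℝ))

lemma g_zero (s : ℂ) : g s (0 : K) = 0 := by simp [g]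
lemma g_of_ne (s : ℂ) {x : K} (hx : x ≠ 0) : g s x = (phi K (ell x) : ℂ) * Complex.exp (-s * (Ln (ell x) : ℝ)) := by
  simp [g, hx]

lemma norm_expL (s : ℂ) (L : ℝ) : ‖Complex.exp (-s * (L : ℝ))‖ = Real.exp (-s.re * L) := by
  rw [Complex.norm_exp]; simp

lemma Ln_ge (l : InfinitePlace K → ℝ) (t : ℝ) (h : ∀ w, t ≤ l w) :
    (Module.finrank ℚ K) * t ≤ Ln l := by
  rw [← sum_mult_real, Finset.sum_mul]
  exact Finset.sum_le_sum fun w _ => mul_le_mul_of_nonneg_left (h w) (by positivity)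

lemma Ln_sub (l l' : InfinitePlace K → ℝ) (η : ℝ) (h : ∀ w, |l w - l' w| ≤ η) :
    |Ln l - Ln l'| ≤ (Module.finrank ℚ K) * η := by
  unfold Ln
  rw [← Finset.sum_sub_distrib, ← sum_mult_real, Finset.sum_mul]
  refine (Finset.abs_sum_le_sum_abs _ _).trans (Finset.sum_le_sum fun w _ => ?_)
  rw [← mul_sub, abs_mul, abs_of_nonneg (by positivity : (0:ℝ) ≤ mult w)]
  exact mul_le_mul_of_nonneg_left (h w) (by positivity)

lemma exp_bound (l : InfinitePlace K → ℝ) (k : ℝ) (hk : 0 < k) (h : ∀ w, Real.log k ≤ l w) (s : ℂ)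
    (hs : 0 ≤ s.re) : ‖Complex.exp (-s * (Ln l : ℝ))‖ ≤ k ^ (-(Module.finrank ℚ K * s.re)) := by
  rw [norm_expL, Real.rpow_def_of_pos hk]
  apply Real.exp_le_exp.2
  have := Ln_ge l _ h
  nlinarith

lemma g_bound : ∃ κ : ℝ, 0 < κ ∧ ∀ (s : ℂ) (x : K), 0 ≤ s.re → x ≠ 0 →
    ‖g s x‖ ≤ (κ * hs x) ^ (-(Module.finrank ℚ K * s.re)) := by
  obtain ⟨C0, hC0, hsupp⟩ := phi_supp (K := K)
  refine ⟨Real.exp (-C0), Real.exp_pos _, fun s x hs0 hx => ?_⟩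
  have hp := hs_pos hx
  rw [g_of_ne s hx]
  by_cases h : phi K (ell x) = 0
  · rw [h]; simp; positivity
  obtain ⟨v, hv⟩ := (hs_eq x).2
  have := exp_bound (ell x) (Real.exp (-C0) * hs x) (by positivity) (fun w => by
    rw [Real.log_mul (Real.exp_pos _).ne' hp.ne', Real.log_exp, ← hv]
    have := hsupp _ h v w
    simp only [ell] at *
    linarith) s hs0
  refine le_trans ?_ this
  rw [norm_mul, Complex.norm_real, Real.norm_of_nonneg (phi_nonneg _)]
  exact mul_le_of_le_one_left (norm_nonneg _) (phi_le_one _)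

lemma log_diff {y z k b : ℝ} (hk : 0 < k) (hy : k ≤ y) (hz : k ≤ z) (h : |y - z| ≤ b) :
    |Real.log y - Real.log z| ≤ b / k := by
  have hb : 0 ≤ b := (abs_nonneg _).trans h
  have key : ∀ y z : ℝ, k ≤ y → k ≤ z → |y - z| ≤ b → Real.log y - Real.log z ≤ b / k := by
    intro y z hy hz h
    have hy0 : 0 < y := by linarith
    have hz0 : 0 < z := by linarith
    rw [← Real.log_div hy0.ne' hz0.ne']
    refine (Real.log_le_sub_one_of_pos (by positivity)).trans ?_
    rw [div_sub_one hz0.ne']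
    calc (y - z) / z ≤ b / z := by gcongr; exact (le_abs_self _).trans h
      _ ≤ b / k := by gcongr
  rw [abs_le]
  constructor
  · have := key z y hz hy (by rwa [abs_sub_comm]); linarith
  · exact key y z hy hz h

set_option maxHeartbeats 1000000 in
lemma g_diff (e : K) (R : ℝ) (hR : 0 ≤ R) : ∃ C X0 : ℝ, 0 ≤ C ∧ 1 ≤ X0 ∧ ∀ x : K, X0 ≤ hs x → ∀ s : ℂ,
    0 ≤ s.re → ‖s‖ ≤ R → ‖g s (x + e) - g s x‖ ≤ C * hs x ^ (-(Module.finrank ℚ K * s.re) - 1) := by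
  obtain ⟨C0, hC0, hsupp⟩ := phi_supp (K := K)
  obtain ⟨C2, hC2, hlip⟩ := phi_lip (K := K)
  set d : ℝ := (Module.finrank ℚ K : ℝ) with hd
  have hdpos : 0 < d := d_pos K
  set b := hs e with hb
  have hb0 : 0 ≤ b := hs_nonneg e
  set κ := Real.exp (-C0) / 2 with hκ
  have hκ0 : 0 < κ := by positivity
  have hκ1 : κ ≤ 1 := by
    have : Real.exp (-C0) ≤ 1 := Real.exp_le_one_iff.2 (by linarith)
    rw [hκ]; linarith
  set M := κ ^ (-(d * R)) with hM
  have hM0 : 0 < M := by positivity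
  set B := b / κ with hB
  clear_value B M κ b
  have hB0 : 0 ≤ B := by rw [hB]; exact div_nonneg hb0 hκ0.le
  have hCC : 0 ≤ M * (C2 * B + 2 * R * d * B) := by positivity
  refine ⟨M * (C2 * B + 2 * R * d * B), max 1 (max (4 * B) (R * d * B)), hCC,
    le_max_left _ _, fun x hx s hs0 hsR => ?_⟩
  set a := hs x with ha
  clear_value a
  have ha1 : 1 ≤ a := (le_max_left _ _).trans hx
  have ha2 : 4 * B ≤ a := ((le_max_left _ _).trans (le_max_right _ _)).trans hx
  have ha3 : R * d * B ≤ a := ((le_max_right _ _).trans (le_max_right _ _)).trans hx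
  have hbB : b = κ * B := by rw [hB]; field_simp
  have hb4 : 4 * b ≤ κ * a := by rw [hbB]; nlinarith
  have hb5 : 4 * b ≤ a := by nlinarith
  have hx0 : x ≠ 0 := by rintro rfl; rw [ha, hs_zero] at ha1; linarith
  have hxe : a - b ≤ hs (x + e) := by
    have := hs_add (x + e) (-e)
    rw [add_neg_cancel_right, hs_neg] at this
    linarith
  have hxe0 : x + e ≠ 0 := by
    intro h; rw [h, hs_zero] at hxe; linarith
  rw [g_of_ne s hx0, g_of_ne s hxe0]
  by_cases hzero : phi K (ell x) = 0 ∧ phi K (ell (x + e)) = 0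
  · rw [hzero.1, hzero.2]
    simp only [Complex.ofReal_zero, zero_mul, sub_self, norm_zero]
    exact mul_nonneg hCC (Real.rpow_nonneg (by linarith) _)
  have hdiff : ∀ w : InfinitePlace K, |w (x + e) - w x| ≤ b := by
    intro w
    have h1 : w (x + e) ≤ w x + w e := w.1.add_le x e
    have h2 : w x ≤ w (x + e) + w e := by
      have := w.1.add_le (x + e) (-e)
      rwa [add_neg_cancel_right, AbsoluteValue.map_neg] at this
    have h3 := (hs_eq e).1 w
    rw [abs_le]; constructor <;> linarith
  have hlow : ∀ w : InfinitePlace K, κ * a ≤ w x ∧ κ * a ≤ w (x + e) := by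
    have aux : ∀ y : K, y ≠ 0 → phi K (ell y) ≠ 0 → ∀ w : InfinitePlace K, 2 * κ * hs y ≤ w y := by
      intro y hy hphi w
      obtain ⟨v, hv⟩ := (hs_eq y).2
      have h1 := hsupp _ hphi v w
      simp only [ell] at h1
      have hvp : 0 < v y := InfinitePlace.pos_iff.2 hy
      have hwp : 0 < w y := InfinitePlace.pos_iff.2 hy
      rw [← hv]
      have e : 2 * κ = Real.exp (-C0) := by rw [hκ]; ring
      rw [e, ← Real.log_le_log_iff (by positivity) hwp,
        Real.log_mul (Real.exp_pos _).ne' hvp.ne', Real.log_exp]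
      linarith
    have hab : ∀ w : InfinitePlace K, -b ≤ w (x+e) - w x ∧ w (x+e) - w x ≤ b := fun w => abs_le.1 (hdiff w)
    intro w
    have hw := hab w
    have hka : 0 < κ * a := by positivity
    by_cases h1 : phi K (ell x) = 0
    · have h2 : phi K (ell (x + e)) ≠ 0 := fun h => hzero ⟨h1, h⟩
      have h3 := aux _ hxe0 h2 w
      have h4 : 2 * κ * (a - b) ≤ 2 * κ * hs (x + e) := by gcongr
      have h5 : κ * b ≤ b := by nlinarith
      constructor <;> nlinarith
    · have h3 := aux _ hx0 h1 w
      rw [← ha] at h3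
      constructor <;> nlinarith
  have hka : 0 < κ * a := by positivity
  have hell : ∀ w, |ell (x + e) w - ell x w| ≤ B / a := by
    intro w
    have := log_diff hka (hlow w).2 (hlow w).1 (hdiff w)
    have e : b / (κ * a) = B / a := by rw [hB]; field_simp
    rw [e] at this
    exact this
  have hBa : 0 ≤ B / a := by positivity
  have hphi : |phi K (ell (x + e)) - phi K (ell x)| ≤ C2 * (B / a) := by
    refine (hlip _ _).trans (mul_le_mul_of_nonneg_left ?_ hC2)
    rw [pi_norm_le_iff_of_nonneg hBa]
    exact hell
  have hL := Ln_sub _ _ _ hell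
  have hE : ∀ y : K, (∀ w : InfinitePlace K, κ * a ≤ w y) →
      ‖Complex.exp (-s * (Ln (ell y) : ℝ))‖ ≤ M * a ^ (-(d * s.re)) := by
    intro y hy
    refine (exp_bound _ (κ * a) hka (fun w => Real.log_le_log hka (hy w)) s hs0).trans ?_
    rw [Real.mul_rpow hκ0.le (by linarith)]
    refine mul_le_mul_of_nonneg_right ?_ (by positivity)
    rw [hM]
    refine Real.rpow_le_rpow_of_exponent_ge hκ0 hκ1 ?_
    have : s.re ≤ R := (Complex.re_le_norm s).trans hsR
    rw [neg_le_neg_iff]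
    exact mul_le_mul_of_nonneg_left this hdpos.le
  have hE1 := hE x fun w => (hlow w).1
  have hE2 := hE (x + e) fun w => (hlow w).2
  set E1 := Complex.exp (-s * (Ln (ell x) : ℝ)) with hE1d
  set E2 := Complex.exp (-s * (Ln (ell (x + e)) : ℝ)) with hE2d
  have hEd : ‖E2 - E1‖ ≤ (M * a ^ (-(d * s.re))) * (2 * R * d * (B / a)) := by
    have e1 : E2 - E1 = E1 * (Complex.exp (-s * ((Ln (ell (x + e)) - Ln (ell x) : ℝ) : ℂ)) - 1) := by
      rw [mul_sub, mul_one, hE1d, hE2d, ← Complex.exp_add]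
      congr 2; push_cast; ring
    have hn : ‖-s * ((Ln (ell (x + e)) - Ln (ell x) : ℝ) : ℂ)‖ ≤ R * (d * (B / a)) := by
      rw [norm_mul, norm_neg, Complex.norm_real]
      exact mul_le_mul hsR hL (norm_nonneg _) hR
    have h1 : R * (d * (B / a)) ≤ 1 := by
      rw [← mul_assoc, ← mul_div_assoc, div_le_one (by linarith)]; exact ha3
    have h2 := Complex.norm_exp_sub_one_le (hn.trans h1)
    rw [e1, norm_mul]
    refine mul_le_mul hE1 (h2.trans ?_) (norm_nonneg _) (by positivity)
    linarith
  have e2 : (phi K (ell (x + e)) : ℂ) * E2 - (phi K (ell x) : ℂ) * E1 =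
      ((phi K (ell (x + e)) - phi K (ell x) : ℝ) : ℂ) * E2 + (phi K (ell x) : ℂ) * (E2 - E1) := by
    push_cast; ring
  rw [e2]
  have h3 : a ^ (-(d * s.re) - 1) = a ^ (-(d * s.re)) / a := by
    rw [Real.rpow_sub (by linarith), Real.rpow_one]
  calc _ ≤ C2 * (B / a) * (M * a ^ (-(d * s.re))) + 1 * ((M * a ^ (-(d * s.re))) * (2 * R * d * (B / a))) := by
        refine (norm_add_le _ _).trans (add_le_add ?_ ?_)
        · rw [norm_mul, Complex.norm_real]
          exact mul_le_mul hphi hE2 (norm_nonneg _) (by positivity)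
        · rw [norm_mul, Complex.norm_real, Real.norm_of_nonneg (phi_nonneg _)]
          exact mul_le_mul (phi_le_one _) hEd (norm_nonneg _) zero_le_one
    _ = _ := by rw [h3]; ring

end SR
end

section
open MeasureTheory Set Filter Topology

namespace SR
open NumberField NumberField.InfinitePlace

variable {K : Type*} [Field K] [NumberField K]

lemma coe_add' (x y : 𝓞 K) : ((x + y : 𝓞 K) : K) = (x : K) + (y : K) := rfl

open scoped Classical in
lemma summable_hs (r : ℝ) (hr : r < -(Module.finrank ℚ K : ℝ)) :
    Summable fun y : 𝓞 K => hs (y : K) ^ r := by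
  have h1 : Module.finrank ℤ (mixedEmbedding.integerLattice K) = Module.finrank ℚ K := by
    rw [ZLattice.rank ℝ, mixedEmbedding.finrank]
  have h2 := ZLattice.summable_norm_rpow (mixedEmbedding.integerLattice K) r (by rw [h1]; exact hr)
  let f : 𝓞 K → mixedEmbedding.integerLattice K := fun y => ⟨mixedEmbedding K (y : K), ⟨y, rfl⟩⟩
  have hf : Function.Injective f := by
    intro x y h
    have h3 : mixedEmbedding K (x : K) = mixedEmbedding K (y : K) := congrArg Subtype.val h
    exact RingOfIntegers.ext (mixedEmbedding_injective K h3)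
  have h3 := h2.comp_injective hf
  refine h3.congr fun y => ?_
  simp only [Function.comp, f, hs]
  rfl

lemma Ln_ell {x : K} (hx : x ≠ 0) : Ln (ell x) = Real.log |((Algebra.norm ℚ x : ℚ) : ℝ)| := by
  rw [← Rat.cast_abs, ← InfinitePlace.prod_eq_abs_norm, Real.log_prod]
  · simp [Ln, ell]
  · intro w _
    exact pow_ne_zero _ (InfinitePlace.pos_iff.2 hx).ne'

lemma norm_int_ge {y : 𝓞 K} (hy : y ≠ 0) : (1:ℝ) ≤ |((Algebra.norm ℚ (y : K) : ℚ) : ℝ)| := by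
  have h1 : Algebra.norm ℤ y ≠ 0 := Algebra.norm_ne_zero_iff.2 hy
  rw [← Algebra.coe_norm_int]
  have := Int.one_le_abs h1
  push_cast
  exact_mod_cast this

lemma g_int (s : ℂ) (hs0 : 0 ≤ s.re) (y : 𝓞 K) : ‖g s (y : K)‖ ≤ 1 := by
  by_cases hy : y = 0
  · simp [hy, g_zero]
  have hy' : (y : K) ≠ 0 := by simpa using hy
  rw [g_of_ne s hy', norm_mul, norm_expL, Complex.norm_real, Real.norm_of_nonneg (phi_nonneg _)]
  refine mul_le_one₀ (phi_le_one _) (Real.exp_pos _).le ?_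
  rw [Real.exp_le_one_iff, Ln_ell hy']
  have := Real.log_nonneg (norm_int_ge hy)
  nlinarith

lemma g_differentiable (x : K) : Differentiable ℂ fun s => g s x := by
  by_cases hx : x = 0
  · simp [hx, g_zero]
  · simp only [g_of_ne _ hx]; fun_prop

lemma g_mul_nat (q : ℕ) (hq : q ≠ 0) (s : ℂ) (x : K) :
    g s ((q : K) * x) = Complex.exp (-s * ((Module.finrank ℚ K : ℝ) * Real.log q : ℝ)) * g s x := by
  by_cases hx : x = 0
  · simp [hx, g_zero]
  have hq' : (q : K) ≠ 0 := by exact_mod_cast hq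
  have he : ell ((q : K) * x) = fun w => ell x w + Real.log q := by
    ext w
    simp only [ell, map_mul]
    rw [Real.log_mul (InfinitePlace.pos_iff.2 hq').ne' (InfinitePlace.pos_iff.2 hx).ne', add_comm]
    simp
  rw [g_of_ne s hx, g_of_ne s (mul_ne_zero hq' hx), he, phi_add_const]
  have : Ln (fun w => ell x w + Real.log q) = Ln (ell x) + (Module.finrank ℚ K : ℝ) * Real.log q := by
    simp only [Ln, mul_add, Finset.sum_add_distrib]
    rw [← Finset.sum_mul, sum_mult_real]
  rw [this, mul_left_comm, ← Complex.exp_add]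
  congr 2
  push_cast; ring

lemma g_summable (s : ℂ) (hs : 1 < s.re) : Summable fun y : 𝓞 K => ‖g s (y : K)‖ := by
  obtain ⟨κ, hκ, h⟩ := g_bound (K := K)
  have hd := d_pos K
  have h1 := (summable_hs (K := K) (-(Module.finrank ℚ K * s.re)) (by nlinarith)).mul_left
    (κ ^ (-(Module.finrank ℚ K * s.re)))
  refine Summable.of_nonneg_of_le (fun _ => norm_nonneg _) (fun y => ?_) h1
  by_cases hy : (y : K) = 0
  · rw [hy, g_zero, norm_zero]
    exact mul_nonneg (Real.rpow_nonneg hκ.le _) (Real.rpow_nonneg (hs_nonneg _) _)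
  · rw [← Real.mul_rpow hκ.le (hs_nonneg _)]
    exact h s y (by linarith) hy

lemma diff_bound (σ R : ℝ) (hσ : 1 - 1 / (Module.finrank ℚ K : ℝ) < σ) (hR : 0 ≤ R) (e : 𝓞 K) :
    ∃ u : 𝓞 K → ℝ, Summable u ∧ ∀ y : 𝓞 K, ∀ s : ℂ, σ ≤ s.re → ‖s‖ ≤ R →
      ‖g s ((y : K) + e) - g s (y : K)‖ ≤ u y := by
  classical
  obtain ⟨C, X0, hC, hX, h⟩ := g_diff (e : K) R hR
  have hd := d_pos K
  set d : ℝ := (Module.finrank ℚ K : ℝ) with hdd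
  have hd1 : 1 ≤ d := by
    rw [hdd]; exact_mod_cast Module.finrank_pos (R := ℚ) (M := K)
  have hσ0 : 0 < σ := by
    have : 1 / d ≤ 1 := by rw [div_le_one hd]; exact hd1
    linarith
  set ρ := -(d * σ) - 1 with hρ
  have hρd : ρ < -d := by
    rw [hρ]
    have : d * (1 - 1 / d) < d * σ := by gcongr
    rw [mul_sub, mul_one_div_cancel hd.ne'] at this
    linarith
  have hs1 := (summable_hs (K := K) ρ hρd).mul_left (C + 2 * X0 ^ (-ρ))
  have hs2 : Summable fun y : 𝓞 K => if y = 0 then (2:ℝ) else 0 :=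
    summable_of_ne_finset_zero (s := {0}) (fun y hy => by simp at hy; simp [hy])
  refine ⟨_, hs1.add hs2, fun y s h1 h2 => ?_⟩
  have hs0 : 0 ≤ s.re := by linarith
  have hX0 : 0 < X0 := by linarith
  have hb2 : ‖g s ((y : K) + e) - g s (y : K)‖ ≤ 2 := by
    have a1 := g_int s hs0 (y + e)
    have a2 := g_int s hs0 y
    rw [coe_add'] at a1
    refine (norm_sub_le _ _).trans ?_
    linarith
  by_cases hy : y = 0
  · refine hb2.trans ?_
    rw [if_pos hy]
    have : 0 ≤ (C + 2 * X0 ^ (-ρ)) * hs (y:K) ^ ρ := by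
      have := hs_nonneg (y : K); positivity
    linarith
  · have hy' : (y : K) ≠ 0 := by simpa using hy
    have hp := hs_pos hy'
    rw [if_neg hy, add_zero]
    by_cases hyX : X0 ≤ hs (y : K)
    · refine (h y hyX s hs0 h2).trans ?_
      have : hs (y:K) ^ (-(d * s.re) - 1) ≤ hs (y:K) ^ ρ := by
        refine Real.rpow_le_rpow_of_exponent_le (hX.trans hyX) ?_
        rw [hρ]; nlinarith
      refine mul_le_mul ?_ this (by positivity) (by positivity)
      have : 0 < X0 ^ (-ρ) := by positivity
      linarith
    · push Not at hyX
      refine hb2.trans ?_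
      have h3 : 1 ≤ X0 ^ (-ρ) * hs (y:K) ^ ρ := by
        have h4 : X0 ^ ρ ≤ hs (y:K) ^ ρ :=
          Real.rpow_le_rpow_of_nonpos hp hyX.le (by linarith)
        calc (1:ℝ) = X0 ^ (-ρ) * X0 ^ ρ := by rw [← Real.rpow_add hX0]; simp
          _ ≤ _ := by gcongr
      have h5 : 0 < hs (y:K) ^ ρ := by positivity
      nlinarith

lemma P_efac {ι : Type*} [Fintype ι] (hι : Fintype.card ι = Module.finrank ℚ K)
    (F : (ι → ℤ) →+ 𝓞 K) (hF : Function.Injective F) (q : ℕ) (hq : q ≠ 0) :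
    ∃ H : ℂ → ℂ, DifferentiableOn ℂ H {s | 1 - 1 / (Module.finrank ℚ K : ℝ) < s.re} ∧
      ∀ s : ℂ, 1 < s.re →
        (∑' a, g s (F a : K)) * efac (Module.finrank ℚ K) q s = H s := by
  classical
  haveI : NeZero q := ⟨hq⟩
  let E : (ι → Fin q) → 𝓞 K := fun e => F (fun i => ((e i : ℕ) : ℤ))
  let D : (ι → Fin q) → (ι → ℤ) → ℂ → ℂ := fun e a s =>
    g s ((q : K) * (F a : K) + E e) - g s ((q : K) * (F a : K))
  have hqF : ∀ a, (q : K) * (F a : K) = ((F (q • a) : 𝓞 K) : K) := by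
    intro a; rw [map_nsmul, nsmul_eq_mul]; simp
  have hqinj : Function.Injective fun a : ι → ℤ => F (q • a) := by
    intro a b h
    have := hF h
    ext i
    have h1 := congrFun this i
    simpa [hq] using h1
  refine ⟨fun s => ∑ e, ∑' a, D e a s, ?_, ?_⟩
  · refine DifferentiableOn.fun_sum fun e _ => ?_
    intro s hs
    simp only [mem_setOf_eq] at hs
    obtain ⟨σ, hσ1, hσ2⟩ := exists_between hs
    obtain ⟨u, hu, hub⟩ := diff_bound (K := K) σ (‖s‖ + 1) hσ1 (by positivity) (E e)
    have hopen : IsOpen ({z : ℂ | σ < z.re} ∩ {z : ℂ | ‖z‖ < ‖s‖ + 1}) :=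
      (isOpen_lt continuous_const Complex.continuous_re).inter
        (isOpen_lt continuous_norm continuous_const)
    have := Complex.differentiableOn_tsum_of_summable_norm (F := fun a s => D e a s)
      (hu.comp_injective hqinj) (U := {z : ℂ | σ < z.re} ∩ {z : ℂ | ‖z‖ < ‖s‖ + 1})
      (fun a => ((g_differentiable _).sub (g_differentiable _)).differentiableOn) hopen
      (fun a z hz => by
        have := hub (F (q • a)) z (le_of_lt hz.1) (le_of_lt hz.2)
        simp only [D, hqF, Function.comp]; exact this)
    refine (this.differentiableAt (hopen.mem_nhds ⟨hσ2, ?_⟩)).differentiableWithinAt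
    simp
  · intro s hs
    have hsum : Summable fun y : 𝓞 K => g s (y : K) := (g_summable s hs).of_norm
    let eqv : (ι → ℤ) ≃ (ι → ℤ) × (ι → Fin q) :=
      (Equiv.piCongrRight fun _ => Int.divModEquiv q).trans (Equiv.arrowProdEquivProdArrow ι _ _)
    have heqv : ∀ a e, eqv.symm (a, e) = q • a + fun i => ((e i : ℕ) : ℤ) := by
      intro a e; ext i
      simp [eqv, Equiv.arrowProdEquivProdArrow, mul_comm]
    have hFs : Summable fun a => g s (F a : K) := hsum.comp_injective hF
    have hps : Summable fun p : (ι → ℤ) × (ι → Fin q) => g s (F (eqv.symm p) : K) :=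
      hFs.comp_injective eqv.symm.injective
    have h1 : ∑' a, g s (F a : K) = ∑ e, ∑' a, g s ((q : K) * (F a : K) + E e) := by
      rw [← eqv.symm.tsum_eq, ← (Equiv.prodComm _ _).tsum_eq,
        Summable.tsum_prod (f := fun c => g s (F (eqv.symm ((Equiv.prodComm (ι → Fin q) (ι → ℤ)) c)) : K)) ((Equiv.prodComm _ _).summable_iff.2 hps), tsum_fintype]
      refine Finset.sum_congr rfl fun e _ => tsum_congr fun a => ?_
      simp only [Equiv.prodComm_apply, Prod.swap_prod_mk, heqv]
      rw [map_add, hqF, coe_add']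
    have hs1 : ∀ e, Summable fun a => g s ((q : K) * (F a : K) + E e) := by
      intro e
      have := hFs.comp_injective (i := fun a : ι → ℤ => eqv.symm (a, e))
        (eqv.symm.injective.comp (Prod.mk_left_injective e))
      refine this.congr fun a => ?_
      simp only [Function.comp, heqv]
      rw [map_add, hqF, coe_add']
    have hs2 : Summable fun a => g s ((q : K) * (F a : K)) := by
      simp only [hqF]; exact hsum.comp_injective hqinj
    have h2 : ∀ e, ∑' a, D e a s = ∑' a, g s ((q : K) * (F a : K) + E e) -
        Complex.exp (-s * ((Module.finrank ℚ K : ℝ) * Real.log q : ℝ)) * ∑' a, g s (F a : K) := by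
      intro e
      rw [← tsum_mul_left]
      simp only [← g_mul_nat q hq]
      exact (hs1 e).tsum_sub hs2
    simp only [h2]
    have hq0 : (q:ℂ) ≠ 0 := by exact_mod_cast hq
    have h3 : ((q ^ Module.finrank ℚ K : ℕ) : ℂ) =
        Complex.exp ((Module.finrank ℚ K : ℝ) * Real.log q : ℝ) := by
      rw [← Complex.ofReal_exp, mul_comm, Real.exp_mul, Real.exp_log (by positivity),
        Real.rpow_natCast]
      push_cast; rfl
    rw [Finset.sum_sub_distrib, ← h1, Finset.sum_const, Finset.card_univ, Fintype.card_fun, hι,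
      Fintype.card_fin, efac, mul_sub, mul_one, nsmul_eq_mul, h3, ← mul_assoc (Complex.exp _) (Complex.exp _),
      ← Complex.exp_add, mul_comm (∑' a, g s (F a : K))]
    congr 3
    push_cast; ring

end SR
end

section
open MeasureTheory Set Filter Topology

namespace SR
open NumberField NumberField.InfinitePlace nonZeroDivisors

variable {K : Type*} [Field K] [NumberField K]

lemma PJ_efac (J : Ideal (𝓞 K)) (hJ : J ≠ ⊥) (q : ℕ) (hq : q ≠ 0) :
    ∃ H : ℂ → ℂ, DifferentiableOn ℂ H {s | 1 - 1 / (Module.finrank ℚ K : ℝ) < s.re} ∧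
      ∀ s : ℂ, 1 < s.re →
        (∑' y : J, g s ((y : 𝓞 K) : K)) * efac (Module.finrank ℚ K) q s = H s := by
  let b := Ideal.selfBasis (RingOfIntegers.basis K) J hJ
  let F : (Module.Free.ChooseBasisIndex ℤ (𝓞 K) → ℤ) →+ 𝓞 K :=
    ((J.restrictScalars ℤ).subtype.toAddMonoidHom).comp b.equivFun.symm.toAddEquiv.toAddMonoidHom
  have hF : Function.Injective F := by
    intro x y h
    exact b.equivFun.symm.injective (Subtype.ext h)
  have hc : Fintype.card (Module.Free.ChooseBasisIndex ℤ (𝓞 K)) = Module.finrank ℚ K := by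
    rw [← Module.finrank_eq_card_chooseBasisIndex, RingOfIntegers.rank]
  obtain ⟨H, h1, h2⟩ := P_efac hc F hF q hq
  refine ⟨H, h1, fun s hs => ?_⟩
  rw [← h2 s hs, ← b.equivFun.symm.toEquiv.tsum_eq]
  rfl

lemma Ln_span (y : 𝓞 K) (hy : y ≠ 0) :
    Ln (ell (y : K)) = Real.log (Ideal.absNorm (Ideal.span {y}) : ℕ) := by
  rw [Ln_ell (by simpa using hy), Ideal.absNorm_span_singleton, ← Algebra.coe_norm_int]
  congr 1
  rw [Nat.cast_natAbs]
  simp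

set_option maxHeartbeats 400000 in
lemma class_sum (J : (Ideal (𝓞 K))⁰) (s : ℂ) (hs : 1 < s.re) :
    Summable (fun I : {I : (Ideal (𝓞 K))⁰ // ClassGroup.mk0 (I * J) = 1} =>
      ((Ideal.absNorm (I.1 : Ideal (𝓞 K)) : ℕ) : ℂ) ^ (-s)) ∧
    (Units.torsionOrder K : ℂ) * ((Ideal.absNorm (J : Ideal (𝓞 K)) : ℕ) : ℂ) ^ (-s) *
      ∑' I : {I : (Ideal (𝓞 K))⁰ // ClassGroup.mk0 (I * J) = 1},
      ((Ideal.absNorm (I.1 : Ideal (𝓞 K)) : ℕ) : ℂ) ^ (-s) =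
      ∑' y : (J : Ideal (𝓞 K)), g s ((y : 𝓞 K) : K) := by
  classical
  set T := {I : (Ideal (𝓞 K))⁰ // ClassGroup.mk0 (I * J) = 1} with hT
  have hgen : ∀ I : T, ∃ γ : 𝓞 K, γ ≠ 0 ∧ ((I.1 * J : (Ideal (𝓞 K))⁰) : Ideal (𝓞 K)) = Ideal.span {γ} := by
    intro I
    have h1 := (ClassGroup.mk0_eq_one_iff (I.1 * J).2).1 I.2
    obtain ⟨γ, hγ⟩ := h1.principal
    refine ⟨γ, ?_, hγ⟩
    rintro rfl
    have h2 := nonZeroDivisors.coe_ne_zero (I.1 * J)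
    apply h2
    rw [hγ]; simp
  choose γ hγ0 hγ using hgen
  have hJ0 : (J : Ideal (𝓞 K)) ≠ ⊥ := nonZeroDivisors.coe_ne_zero J
  let Y := {y : (J : Ideal (𝓞 K)) // y ≠ 0}
  have hspan : ∀ (p : T × (𝓞 K)ˣ), Ideal.span {(p.2 : 𝓞 K) * γ p.1} = Ideal.span {γ p.1} := by
    intro p
    exact Ideal.span_singleton_mul_left_unit p.2.isUnit _
  have hmem : ∀ (I : T), γ I ∈ (J : Ideal (𝓞 K)) := by
    intro I
    have h1 : γ I ∈ ((I.1 * J : (Ideal (𝓞 K))⁰) : Ideal (𝓞 K)) := by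
      rw [hγ]; exact Ideal.mem_span_singleton_self _
    rw [Submonoid.coe_mul] at h1
    exact (Ideal.mul_le_right : (I.1 : Ideal (𝓞 K)) * (J : Ideal (𝓞 K)) ≤ _) h1
  have hne : ∀ p : T × (𝓞 K)ˣ, (p.2 : 𝓞 K) * γ p.1 ≠ 0 := fun p =>
    mul_ne_zero p.2.ne_zero (hγ0 _)
  let f : T × (𝓞 K)ˣ → Y := fun p => ⟨⟨(p.2 : 𝓞 K) * γ p.1, Ideal.mul_mem_left _ _ (hmem p.1)⟩,
    fun h => hne p (congrArg Subtype.val h)⟩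
  have hf : Function.Bijective f := by
    constructor
    · intro p p' h
      have h1 : (p.2 : 𝓞 K) * γ p.1 = (p'.2 : 𝓞 K) * γ p'.1 :=
        congrArg (fun y : Y => (y.1 : 𝓞 K)) h
      have h2 : p.1 = p'.1 := by
        have h3 : Ideal.span {γ p.1} = Ideal.span {γ p'.1} := by
          rw [← hspan p, ← hspan p', h1]
        rw [← hγ, ← hγ] at h3
        have h4 : (p.1.1 : Ideal (𝓞 K)) * (J : Ideal (𝓞 K)) = (p'.1.1 : Ideal (𝓞 K)) * (J : Ideal (𝓞 K)) := h3
        exact Subtype.ext (Subtype.ext (mul_right_cancel₀ hJ0 h4))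
      refine Prod.ext h2 ?_
      rw [h2] at h1
      exact Units.ext (mul_right_cancel₀ (hγ0 _) h1)
    · rintro ⟨⟨y, hy⟩, hy0⟩
      have hy0' : y ≠ 0 := fun h => hy0 (Subtype.ext h)
      obtain ⟨I, hI⟩ := Ideal.dvd_iff_le.2 ((Ideal.span_singleton_le_iff_mem _).2 hy)
      have hI0 : I ≠ 0 := by
        rintro rfl
        rw [mul_zero] at hI
        exact hy0' (Ideal.span_singleton_eq_bot.1 hI)
      let I' : (Ideal (𝓞 K))⁰ := ⟨I, mem_nonZeroDivisors_of_ne_zero hI0⟩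
      have hIJ : ((I' * J : (Ideal (𝓞 K))⁰) : Ideal (𝓞 K)) = Ideal.span {y} := by
        rw [hI, mul_comm]; rfl
      let t : T := ⟨I', (ClassGroup.mk0_eq_one_iff (I' * J).2).2 ⟨⟨y, hIJ⟩⟩⟩
      have h5 : Ideal.span {γ t} = Ideal.span {y} := by rw [← hγ t]; exact hIJ
      obtain ⟨u, hu⟩ := Ideal.span_singleton_eq_span_singleton.1 h5
      refine ⟨(t, u), ?_⟩
      refine Subtype.ext (Subtype.ext ?_)
      simp only [f]
      rw [mul_comm, hu]
  let ef := Equiv.ofBijective f hf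
  have hgs : Summable fun y : 𝓞 K => g s (y : K) := (g_summable s hs).of_norm
  have hY : Summable fun y : Y => g s ((y.1 : 𝓞 K) : K) :=
    hgs.comp_injective (i := fun y : Y => (y.1 : 𝓞 K)) (fun a b h => Subtype.ext (Subtype.ext h))
  have hval : ∀ p : T × (𝓞 K)ˣ, g s ((((p.2 : 𝓞 K) * γ p.1 : 𝓞 K)) : K) =
      (phi K (ell (((p.2 : 𝓞 K) : K) * (γ p.1 : K))) : ℂ) *
      (((Ideal.absNorm (p.1.1 : Ideal (𝓞 K)) : ℕ) : ℂ) ^ (-s) *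
        ((Ideal.absNorm (J : Ideal (𝓞 K)) : ℕ) : ℂ) ^ (-s)) := by
    intro p
    have h0 : (p.2 : 𝓞 K) * γ p.1 ≠ 0 := mul_ne_zero p.2.ne_zero (hγ0 _)
    rw [g_of_ne s (by simpa using h0), Ln_span _ h0, hspan, ← hγ]
    congr 1
    have e : Ideal.absNorm ((p.1.1 * J : (Ideal (𝓞 K))⁰) : Ideal (𝓞 K)) =
      Ideal.absNorm (p.1.1 : Ideal (𝓞 K)) * Ideal.absNorm (J : Ideal (𝓞 K)) := by
      rw [← map_mul]; rfl
    have hI1 : (Ideal.absNorm (p.1.1 : Ideal (𝓞 K))) ≠ 0 := Ideal.absNorm_ne_zero_of_nonZeroDivisors _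
    have hI2 : (Ideal.absNorm (J : Ideal (𝓞 K))) ≠ 0 := Ideal.absNorm_ne_zero_of_nonZeroDivisors _
    rw [← Complex.natCast_mul_natCast_cpow, ← Nat.cast_mul, ← e, Complex.cpow_def_of_ne_zero, mul_comm]
    · rw [← Complex.natCast_log]
    · rw [e]; exact_mod_cast mul_ne_zero hI1 hI2
  have hS : Summable fun p : T × (𝓞 K)ˣ => g s ((((p.2 : 𝓞 K) * γ p.1 : 𝓞 K)) : K) :=
    (ef.summable_iff (f := fun y : Y => g s ((y.1 : 𝓞 K) : K))).2 hY
  have hinner : ∀ I : T, ∑' u : (𝓞 K)ˣ, g s (((((I, u) : T × (𝓞 K)ˣ).2 : 𝓞 K) * γ I : 𝓞 K) : K) =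
      (Units.torsionOrder K : ℂ) * (((Ideal.absNorm (I.1 : Ideal (𝓞 K)) : ℕ) : ℂ) ^ (-s) *
        ((Ideal.absNorm (J : Ideal (𝓞 K)) : ℕ) : ℂ) ^ (-s)) := by
    intro I
    have h1 := (phi_units (γ I : K) (by simpa using hγ0 I))
    have h2 : HasSum (fun u : (𝓞 K)ˣ => (phi K (ell (((u : 𝓞 K) : K) * (γ I : K))) : ℂ)) (Units.torsionOrder K : ℂ) := by
      have h4 := Complex.hasSum_ofReal.2 h1
      rw [Complex.ofReal_natCast] at h4
      exact h4
    have h3 := h2.mul_right (((Ideal.absNorm (I.1 : Ideal (𝓞 K)) : ℕ) : ℂ) ^ (-s) *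
        ((Ideal.absNorm (J : Ideal (𝓞 K)) : ℕ) : ℂ) ^ (-s))
    rw [← h3.tsum_eq]
    exact tsum_congr fun u => hval (I, u)
  have hw : (Units.torsionOrder K : ℂ) ≠ 0 := by exact_mod_cast (Units.torsionOrder_pos K).ne'
  have hJc : ((Ideal.absNorm (J : Ideal (𝓞 K)) : ℕ) : ℂ) ^ (-s) ≠ 0 := by
    rw [Ne, Complex.cpow_eq_zero_iff, not_and_or]
    left
    exact_mod_cast Ideal.absNorm_ne_zero_of_nonZeroDivisors J
  constructor
  · have h1 := hS.prod
    simp only [hinner] at h1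
    refine ((h1.mul_left (Units.torsionOrder K : ℂ)⁻¹).mul_right
      (((Ideal.absNorm (J : Ideal (𝓞 K)) : ℕ) : ℂ) ^ (-s))⁻¹).congr fun I => ?_
    field_simp
  · have h2 : ∑' y : (J : Ideal (𝓞 K)), g s ((y : 𝓞 K) : K) = ∑' y : Y, g s ((y.1 : 𝓞 K) : K) := by
      refine (tsum_subtype_eq_of_support_subset (f := fun y : (J : Ideal (𝓞 K)) => g s ((y : 𝓞 K) : K))
        (s := {y | y ≠ 0}) ?_).symm
      intro y hy h
      apply hy
      simp only [h]
      simpa using g_zero s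
    rw [h2, ← ef.tsum_eq]
    have h3 := hS.tsum_prod
    simp only [hinner] at h3
    refine Eq.trans ?_ h3.symm
    rw [tsum_mul_left, tsum_mul_right]
    ring

end SR
end

section
open MeasureTheory Set Filter Topology

namespace SR
open NumberField NumberField.InfinitePlace nonZeroDivisors

noncomputable def coef {X : Type*} (N : X → ℕ) (f : X → ℝ) (n : ℕ) : ℝ :=
  ∑' x : {x : X // N x = n}, f x.1

lemma coef_nonneg {X : Type*} (N : X → ℕ) (f : X → ℝ) (hf : ∀ x, 0 ≤ f x) (n : ℕ) : 0 ≤ coef N f n :=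
  tsum_nonneg fun x => hf x.1

lemma group_LSeries {X : Type*} (N : X → ℕ) (hN : ∀ x, N x ≠ 0) (f : X → ℝ) (hf : ∀ x, 0 ≤ f x)
    (hsum : ∀ σ : ℝ, 1 < σ → Summable fun x => f x * (N x : ℝ) ^ (-σ)) (s : ℂ) (hs : 1 < s.re) :
    LSeriesSummable (fun n => (coef N f n : ℂ)) s ∧
      HasSum (fun x => (f x : ℂ) * (N x : ℂ) ^ (-s)) (LSeries (fun n => (coef N f n : ℂ)) s) := by
  have hS : Summable fun x => (f x : ℂ) * (N x : ℂ) ^ (-s) := by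
    refine Summable.of_norm ((hsum s.re hs).congr fun x => ?_)
    rw [norm_mul, Complex.norm_real, Real.norm_of_nonneg (hf x),
      Complex.norm_natCast_cpow_of_pos (Nat.pos_of_ne_zero (hN x))]
    simp
  have h1 : HasSum (fun p : Σ n, {x : X // N x = n} => (f p.2.1 : ℂ) * (N p.2.1 : ℂ) ^ (-s))
      (∑' x, (f x : ℂ) * (N x : ℂ) ^ (-s)) := by
    have := (Equiv.sigmaFiberEquiv N).hasSum_iff.2 hS.hasSum
    exact this
  have hfib : ∀ n, HasSum (fun x : {x : X // N x = n} => (f x.1 : ℂ) * (N x.1 : ℂ) ^ (-s))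
      (LSeries.term (fun n => (coef N f n : ℂ)) s n) := by
    intro n
    have h2 : Summable (fun x : {x : X // N x = n} => (f x.1 : ℂ) * (N x.1 : ℂ) ^ (-s)) :=
      hS.comp_injective Subtype.val_injective
    rcases eq_or_ne n 0 with rfl | hn
    · haveI : IsEmpty {x : X // N x = 0} := ⟨fun x => hN _ x.2⟩
      rw [LSeries.term_zero]
      exact hasSum_empty
    · have h3 : ∀ x : {x : X // N x = n}, (f x.1 : ℂ) * (N x.1 : ℂ) ^ (-s) = (f x.1 : ℂ) * (n : ℂ) ^ (-s) := by
        intro x; rw [x.2]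
      simp only [h3] at h2 ⊢
      rw [LSeries.term_of_ne_zero hn]
      have h4 : (∑' x : {x : X // N x = n}, (f x.1 : ℂ) * (n : ℂ) ^ (-s)) = (coef N f n : ℂ) / (n : ℂ) ^ s := by
        rw [tsum_mul_right, coef, Complex.ofReal_tsum, Complex.cpow_neg, div_eq_mul_inv]
      rw [← h4]
      exact h2.hasSum
  have h5 := h1.sigma hfib
  refine ⟨h5.summable, ?_⟩
  rw [LSeries, h5.tsum_eq]
  exact hS.hasSum

lemma coef_log {X : Type*} (N : X → ℕ) (f : X → ℝ) (n : ℕ) :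
    coef N (fun x => f x * Real.log (N x)) n = coef N f n * Real.log n := by
  unfold coef
  rw [← tsum_mul_right]
  exact tsum_congr fun x => by simp only [x.2]

variable {K : Type*} [Field K] [NumberField K]

noncomputable def NI (I : (Ideal (𝓞 K))⁰) : ℕ := Ideal.absNorm (I : Ideal (𝓞 K))
lemma NI_ne (I : (Ideal (𝓞 K))⁰) : NI I ≠ 0 := Ideal.absNorm_ne_zero_of_nonZeroDivisors I

lemma class_summable (C : ClassGroup (𝓞 K)) (s : ℂ) (hs : 1 < s.re) :
    Summable fun I : {I : (Ideal (𝓞 K))⁰ // ClassGroup.mk0 I = C} => (NI I.1 : ℂ) ^ (-s) := by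
  obtain ⟨J, hJ⟩ := ClassGroup.mk0_surjective C⁻¹
  have h := (class_sum J s hs).1
  have he : ∀ I : (Ideal (𝓞 K))⁰, ClassGroup.mk0 I = C ↔ ClassGroup.mk0 (I * J) = 1 := by
    intro I; rw [map_mul, hJ, mul_inv_eq_one]
  exact (Equiv.subtypeEquivRight he).summable_iff.2 h

lemma class_efac (C : ClassGroup (𝓞 K)) (q : ℕ) (hq : q ≠ 0) :
    ∃ H : ℂ → ℂ, DifferentiableOn ℂ H {s | 1 - 1 / (Module.finrank ℚ K : ℝ) < s.re} ∧
      ∀ s : ℂ, 1 < s.re →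
        (∑' I : {I : (Ideal (𝓞 K))⁰ // ClassGroup.mk0 I = C}, (NI I.1 : ℂ) ^ (-s)) *
          efac (Module.finrank ℚ K) q s = H s := by
  obtain ⟨J, hJ⟩ := ClassGroup.mk0_surjective C⁻¹
  have hJ0 : (J : Ideal (𝓞 K)) ≠ ⊥ := nonZeroDivisors.coe_ne_zero J
  obtain ⟨H, h1, h2⟩ := PJ_efac (J : Ideal (𝓞 K)) hJ0 q hq
  have he : ∀ I : (Ideal (𝓞 K))⁰, ClassGroup.mk0 I = C ↔ ClassGroup.mk0 (I * J) = 1 := by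
    intro I; rw [map_mul, hJ, mul_inv_eq_one]
  have hJc : ((NI J : ℕ) : ℂ) ≠ 0 := by exact_mod_cast NI_ne J
  have hw : (Units.torsionOrder K : ℂ) ≠ 0 := by exact_mod_cast (Units.torsionOrder_pos K).ne'
  refine ⟨fun s => (Units.torsionOrder K : ℂ)⁻¹ * (NI J : ℂ) ^ s * H s, ?_, fun s hs => ?_⟩
  · refine DifferentiableOn.mul (Differentiable.differentiableOn ?_) h1
    refine (differentiable_const _).mul fun s => ?_
    exact (differentiableAt_id).const_cpow (Or.inl hJc)
  · have h3 := (class_sum J s hs).2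
    have h4 : ∑' I : {I : (Ideal (𝓞 K))⁰ // ClassGroup.mk0 I = C}, (NI I.1 : ℂ) ^ (-s) =
      ∑' I : {I : (Ideal (𝓞 K))⁰ // ClassGroup.mk0 (I * J) = 1},
      ((Ideal.absNorm (I.1 : Ideal (𝓞 K)) : ℕ) : ℂ) ^ (-s) :=
      (Equiv.subtypeEquivRight he).tsum_eq (fun I => ((Ideal.absNorm (I.1 : Ideal (𝓞 K)) : ℕ) : ℂ) ^ (-s))
    rw [h4]
    simp only
    rw [← h2 s hs, ← h3]
    have h5 : (NI J : ℂ) ^ s * (NI J : ℂ) ^ (-s) = 1 := by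
      rw [← Complex.cpow_add _ _ hJc]; simp
    change _ = _ * (_ * (NI J : ℂ) ^ (-s) * _ * _)
    have h6 : (Units.torsionOrder K : ℂ)⁻¹ * (Units.torsionOrder K : ℂ) = 1 := inv_mul_cancel₀ hw
    generalize (∑' I : {I : (Ideal (𝓞 K))⁰ // ClassGroup.mk0 (I * J) = 1},
      ((Ideal.absNorm (I.1 : Ideal (𝓞 K)) : ℕ) : ℂ) ^ (-s)) = S
    linear_combination (-S * efac (Module.finrank ℚ K) q s) * (h5 + (NI J : ℂ) ^ s * (NI J : ℂ) ^ (-s) * h6)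

lemma ideal_summable (σ : ℝ) (hσ : 1 < σ) : Summable fun I : (Ideal (𝓞 K))⁰ => (NI I : ℝ) ^ (-σ) := by
  have h : Summable fun p : Σ C : ClassGroup (𝓞 K), {I : (Ideal (𝓞 K))⁰ // ClassGroup.mk0 I = C} =>
      (NI p.2.1 : ℝ) ^ (-σ) := by
    rw [summable_sigma_of_nonneg (fun _ => by positivity)]
    refine ⟨fun C => ?_, Summable.of_finite⟩
    refine (class_summable C (σ : ℂ) (by simpa using hσ)).norm.congr fun I => ?_
    rw [Complex.norm_natCast_cpow_of_pos (Nat.pos_of_ne_zero (NI_ne _))]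
    simp
  exact (Equiv.sigmaFiberEquiv _).summable_iff.1 h

lemma ideal_summable_c (s : ℂ) (hs : 1 < s.re) : Summable fun I : (Ideal (𝓞 K))⁰ => (NI I : ℂ) ^ (-s) := by
  refine Summable.of_norm ((ideal_summable s.re hs).congr fun x => ?_)
  rw [Complex.norm_natCast_cpow_of_pos (Nat.pos_of_ne_zero (NI_ne x))]
  simp

lemma ideal_efac (q : ℕ) (hq : q ≠ 0) :
    ∃ H : ℂ → ℂ, DifferentiableOn ℂ H {s | 1 - 1 / (Module.finrank ℚ K : ℝ) < s.re} ∧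
      ∀ s : ℂ, 1 < s.re →
        (∑' I : (Ideal (𝓞 K))⁰, (NI I : ℂ) ^ (-s)) * efac (Module.finrank ℚ K) q s = H s := by
  choose H h1 h2 using fun C : ClassGroup (𝓞 K) => class_efac C q hq
  refine ⟨fun s => ∑ C, H C s, DifferentiableOn.fun_sum fun C _ => h1 C, fun s hs => ?_⟩
  simp only [← h2 _ s hs]
  rw [← Finset.sum_mul, ← (Equiv.sigmaFiberEquiv (ClassGroup.mk0 : (Ideal (𝓞 K))⁰ → _)).tsum_eq]
  congr 1
  have := ((Equiv.sigmaFiberEquiv (ClassGroup.mk0 : (Ideal (𝓞 K))⁰ → _)).summable_iff.2 (ideal_summable_c s hs)).tsum_sigma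
  refine this.trans ?_
  rw [tsum_fintype]
  rfl

variable (K) in
noncomputable def rK (n : ℕ) : ℝ := coef (NI (K := K)) (fun _ => 1) n

lemma rK_LSeries (s : ℂ) (hs : 1 < s.re) : LSeriesSummable (fun n => (rK K n : ℂ)) s ∧
    HasSum (fun I : (Ideal (𝓞 K))⁰ => (NI I : ℂ) ^ (-s)) (LSeries (fun n => (rK K n : ℂ)) s) := by
  have := group_LSeries (NI (K := K)) NI_ne (fun _ => 1) (fun _ => zero_le_one)
    (fun σ hσ => by simpa using ideal_summable σ hσ) s hs
  simpa [rK] using this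

lemma rK_zeta (s : ℂ) : LSeries (fun n => (rK K n : ℂ)) s = dedekindZeta K s := by
  refine LSeries_congr (fun {n} hn => ?_) s
  have h1 : rK K n = Nat.card {I : (Ideal (𝓞 K))⁰ // NI I = n} := by
    simp [rK, coef, tsum_const]
  have h2 : Nat.card {I : (Ideal (𝓞 K))⁰ // NI I = n} = Nat.card {I : Ideal (𝓞 K) // Ideal.absNorm I = n} := by
    refine Nat.card_congr ⟨fun I => ⟨I.1.1, I.2⟩, fun I => ⟨⟨I.1, ?_⟩, I.2⟩, fun _ => rfl, fun _ => rfl⟩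
    refine mem_nonZeroDivisors_of_ne_zero ?_
    intro h
    have := I.2
    rw [h] at this
    simp at this
    exact hn this.symm
  rw [h1, h2]; simp

theorem zeta_h : ∃ h : ℂ → ℂ, (∀ s, 1 ≤ s.re → AnalyticAt ℂ h s) ∧ h 1 ≠ 0 ∧
    ∀ s, 1 < s.re → h s = (s - 1) * LSeries (fun n => (rK K n : ℂ)) s := by
  obtain ⟨H2, a2, b2⟩ := ideal_efac (K := K) 2 (by norm_num)
  obtain ⟨H3, a3, b3⟩ := ideal_efac (K := K) 3 (by norm_num)
  have hd : 0 < Module.finrank ℚ K := Module.finrank_pos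
  refine glue (fun s => LSeries (fun n => (rK K n : ℂ)) s) (Module.finrank ℚ K) hd
    (1 - 1 / (Module.finrank ℚ K : ℝ)) ?_ H2 H3 a2 a3 ?_ ?_ (dedekindZeta_residue K)
    (dedekindZeta_residue_pos K) ?_
  · have : (0:ℝ) < 1 / (Module.finrank ℚ K : ℝ) := by positivity
    linarith
  · intro s hs
    rw [← b2 s hs, (rK_LSeries s hs).2.tsum_eq]
  · intro s hs
    rw [← b3 s hs, (rK_LSeries s hs).2.tsum_eq]
  · simp only [rK_zeta]
    have := tendsto_sub_one_mul_dedekindZeta_nhdsGT K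
    exact_mod_cast this

end SR
end

section
open MeasureTheory Set Filter Topology

namespace SR
open NumberField NumberField.InfinitePlace nonZeroDivisors

lemma hs_congr {ι α : Type*} [AddCommMonoid α] [TopologicalSpace α] {f g : ι → α} {a : α}
    (h : ∀ i, f i = g i) (hg : HasSum g a) : HasSum f a := by
  rw [funext h]; exact hg

variable (K : Type*) [Field K] [NumberField K]

abbrev Pr := {P : Ideal (𝓞 K) // Prime P}

variable {K}

noncomputable def NP (P : Pr K) : ℕ := Ideal.absNorm P.1

lemma NP_gt (P : Pr K) : 1 < NP P := by
  have h1 : NP P ≠ 0 := by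
    rw [NP, Ne, Ideal.absNorm_eq_zero_iff]; exact P.2.ne_zero
  have h2 : NP P ≠ 1 := by
    rw [NP, Ne, Ideal.absNorm_eq_one_iff]
    intro h; apply P.2.not_unit; rw [h, ← Ideal.one_eq_top]; exact isUnit_one
  omega

noncomputable def Nt (t : Pr K × ℕ) : ℕ := NP t.1 ^ (t.2 + 1)
noncomputable def wt (t : Pr K × ℕ) : ℝ := Real.log (NP t.1)
lemma wt_nonneg (t : Pr K × ℕ) : 0 ≤ wt t := Real.log_natCast_nonneg _
lemma Nt_ne (t : Pr K × ℕ) : Nt t ≠ 0 := pow_ne_zero _ (by have := NP_gt t.1; omega)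

open scoped Classical in
lemma log_norm (I : (Ideal (𝓞 K))⁰) :
    HasSum (fun t : Pr K × ℕ => if t.1.1 ^ (t.2 + 1) ∣ (I : Ideal (𝓞 K)) then wt t else 0)
      (Real.log (NI I)) := by
  have hI : (I : Ideal (𝓞 K)) ≠ ⊥ := nonZeroDivisors.coe_ne_zero I
  set m := UniqueFactorizationMonoid.normalizedFactors (I : Ideal (𝓞 K)) with hm
  have hdvd : ∀ t : Pr K × ℕ, t.1.1 ^ (t.2 + 1) ∣ (I : Ideal (𝓞 K)) ↔ t.2 < m.count t.1.1 := by
    intro t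
    rw [pow_dvd_iff_le_emultiplicity,
      UniqueFactorizationMonoid.emultiplicity_eq_count_normalizedFactors t.1.2.irreducible hI,
      normalize_eq]
    norm_cast
  have key : ∑ t ∈ (m.toFinset.subtype Prime) ×ˢ (Finset.range (Multiset.card m)),
      (if t.1.1 ^ (t.2 + 1) ∣ (I : Ideal (𝓞 K)) then wt t else 0) = Real.log (NI I) := by
    simp only [hdvd]
    rw [Finset.sum_product]
    have h1 : ∀ P : Pr K, ∑ k ∈ Finset.range (Multiset.card m),
        (if k < m.count P.1 then wt (P, k) else 0) = m.count P.1 * Real.log (Ideal.absNorm P.1 : ℕ) := by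
      intro P
      simp only [wt, NP]
      rw [← Finset.sum_filter, Finset.sum_const, nsmul_eq_mul]
      congr 2
      have : (Finset.range (Multiset.card m)).filter (· < m.count P.1) = Finset.range (m.count P.1) := by
        ext k; simp only [Finset.mem_filter, Finset.mem_range]
        have := Multiset.count_le_card P.1 m
        omega
      rw [this, Finset.card_range]
    simp only [h1]
    rw [Finset.sum_subtype_of_mem (fun P : Ideal (𝓞 K) => m.count P * Real.log (Ideal.absNorm P : ℕ))]
    · have h2 : (NI I : ℝ) = ∏ P ∈ m.toFinset, (Ideal.absNorm P : ℝ) ^ m.count P := by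
        have h3 : NI I = ∏ P ∈ m.toFinset, (Ideal.absNorm P) ^ m.count P := by
          rw [NI, ← Ideal.prod_normalizedFactors_eq_self hI, map_multiset_prod,
            Finset.prod_multiset_map_count]
        rw [h3]; push_cast; rfl
      rw [h2, Real.log_prod]
      · simp
      · intro P hP
        rw [Multiset.mem_toFinset] at hP
        have hp := UniqueFactorizationMonoid.prime_of_normalized_factor P hP
        have := NP_gt ⟨P, hp⟩
        apply pow_ne_zero
        simp only [NP] at this
        have h4 : Ideal.absNorm P ≠ 0 := by omega
        exact_mod_cast h4
    · intro P hP
      rw [Multiset.mem_toFinset] at hP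
      exact UniqueFactorizationMonoid.prime_of_normalized_factor P hP
  rw [← key]
  refine hasSum_sum_of_ne_finset_zero fun t ht => ?_
  rw [if_neg]
  rw [hdvd]
  intro h
  apply ht
  rw [Finset.mem_product, Finset.mem_subtype, Multiset.mem_toFinset, Finset.mem_range]
  exact ⟨Multiset.count_pos.1 (by omega), h.trans_le (Multiset.count_le_card _ _)⟩

open scoped Classical in
lemma sum_mult (t : Pr K × ℕ) (s : ℂ) (hs : 1 < s.re) :
    HasSum (fun I : (Ideal (𝓞 K))⁰ => if t.1.1 ^ (t.2 + 1) ∣ (I : Ideal (𝓞 K)) then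
      (NI I : ℂ) ^ (-s) else 0) ((Nt t : ℂ) ^ (-s) * ∑' I : (Ideal (𝓞 K))⁰, (NI I : ℂ) ^ (-s)) := by
  have hQ : t.1.1 ^ (t.2 + 1) ≠ 0 := pow_ne_zero _ t.1.2.ne_zero
  let Q : (Ideal (𝓞 K))⁰ := ⟨t.1.1 ^ (t.2 + 1), mem_nonZeroDivisors_of_ne_zero hQ⟩
  have hinj : Function.Injective (fun I : (Ideal (𝓞 K))⁰ => Q * I) := mul_right_injective Q
  refine (hinj.hasSum_iff ?_).1 ?_
  · intro I hI
    rw [if_neg]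
    rintro ⟨J, hJ⟩
    apply hI
    have hJ0 : J ≠ 0 := by
      rintro rfl
      rw [mul_zero] at hJ
      exact nonZeroDivisors.coe_ne_zero I hJ
    exact ⟨⟨J, mem_nonZeroDivisors_of_ne_zero hJ0⟩, Subtype.ext hJ.symm⟩
  · have h1 := (ideal_summable_c (K := K) s hs).hasSum.mul_left ((Nt t : ℂ) ^ (-s))
    refine (hs_congr fun I => ?_) h1
    have h2 : t.1.1 ^ (t.2 + 1) ∣ ((Q * I : (Ideal (𝓞 K))⁰) : Ideal (𝓞 K)) := by
      rw [Submonoid.coe_mul]; exact dvd_mul_right _ _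
    have h3 : NI (Q * I) = Nt t * NI I := by
      rw [NI, Submonoid.coe_mul, map_mul]
      simp only [Q, map_pow]; rfl
    simp only [Function.comp]
    rw [if_pos h2, h3, Nat.cast_mul, Complex.natCast_mul_natCast_cpow]

lemma log_ideal_summable (σ : ℝ) (hσ : 1 < σ) :
    Summable fun I : (Ideal (𝓞 K))⁰ => Real.log (NI I) * (NI I : ℝ) ^ (-σ) := by
  have hε : 0 < (σ - 1) / 2 := by linarith
  have h1 := (ideal_summable (K := K) (σ - (σ - 1) / 2) (by linarith)).mul_left ((σ - 1) / 2)⁻¹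
  refine Summable.of_nonneg_of_le (fun I => mul_nonneg (Real.log_natCast_nonneg _) (by positivity)) (fun I => ?_) h1
  have hN : (0:ℝ) < NI I := by exact_mod_cast Nat.pos_of_ne_zero (NI_ne I)
  have h2 := Real.log_le_rpow_div hN.le hε
  calc _ ≤ (NI I : ℝ) ^ ((σ - 1) / 2) / ((σ - 1) / 2) * (NI I : ℝ) ^ (-σ) := by gcongr
    _ = _ := by
      rw [div_mul_eq_mul_div, ← Real.rpow_add hN, div_eq_inv_mul]
      congr 2; ring

open scoped Classical in
noncomputable def FF (s : ℂ) (p : (Ideal (𝓞 K))⁰ × (Pr K × ℕ)) : ℂ :=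
  if p.2.1.1 ^ (p.2.2 + 1) ∣ (p.1 : Ideal (𝓞 K)) then (wt p.2 : ℂ) * (NI p.1 : ℂ) ^ (-s) else 0

lemma FF_fst (s : ℂ) (I : (Ideal (𝓞 K))⁰) :
    HasSum (fun t => FF s (I, t)) ((Real.log (NI I) : ℂ) * (NI I : ℂ) ^ (-s)) := by
  classical
  have h1 := (Complex.hasSum_ofReal.2 (log_norm I)).mul_right ((NI I : ℂ) ^ (-s))
  refine (hs_congr fun t => ?_) h1
  simp only [FF]
  split_ifs <;> simp

lemma FF_snd (s : ℂ) (hs : 1 < s.re) (t : Pr K × ℕ) :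
    HasSum (fun I => FF s (I, t)) ((wt t : ℂ) * (Nt t : ℂ) ^ (-s) * ∑' I : (Ideal (𝓞 K))⁰, (NI I : ℂ) ^ (-s)) := by
  classical
  have h1 := (sum_mult t s hs).mul_left (wt t : ℂ)
  rw [← mul_assoc] at h1
  refine (hs_congr fun I => ?_) h1
  simp only [FF]
  split_ifs <;> simp

lemma FF_summable (s : ℂ) (hs : 1 < s.re) : Summable (FF (K := K) s) := by
  classical
  apply Summable.of_norm
  rw [summable_prod_of_nonneg (fun _ => norm_nonneg _)]
  have h : ∀ I : (Ideal (𝓞 K))⁰, HasSum (fun t => ‖FF s (I, t)‖) (Real.log (NI I) * (NI I : ℝ) ^ (-s.re)) := by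
    intro I
    have h1 := (log_norm I).mul_right ((NI I : ℝ) ^ (-s.re))
    refine (hs_congr fun t => ?_) h1
    simp only [FF]
    split_ifs
    · rw [norm_mul, Complex.norm_real, Real.norm_of_nonneg (wt_nonneg t),
        Complex.norm_natCast_cpow_of_pos (Nat.pos_of_ne_zero (NI_ne I))]
      simp
    · simp
  refine ⟨fun I => (h I).summable, ?_⟩
  simp only [fun I => (h I).tsum_eq]
  exact log_ideal_summable s.re hs

lemma lam_conv (s : ℂ) (hs : 1 < s.re) :
    HasSum (fun I : (Ideal (𝓞 K))⁰ => (Real.log (NI I) : ℂ) * (NI I : ℂ) ^ (-s))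
      ((∑' I : (Ideal (𝓞 K))⁰, (NI I : ℂ) ^ (-s)) * ∑' t : Pr K × ℕ, (wt t : ℂ) * (Nt t : ℂ) ^ (-s)) := by
  have hF := FF_summable (K := K) s hs
  have h1 := hF.hasSum.prod_fiberwise fun I => FF_fst s I
  have h2 := ((Equiv.prodComm _ _).hasSum_iff.2 hF.hasSum).prod_fiberwise fun t => FF_snd s hs t
  rw [← tsum_mul_left]
  have h3 := h2.tsum_eq
  simp only [mul_comm _ (∑' I : (Ideal (𝓞 K))⁰, (NI I : ℂ) ^ (-s))] at h3
  rw [h3]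
  exact h1

lemma lam_summable (σ : ℝ) (hσ : 1 < σ) :
    Summable fun t : Pr K × ℕ => wt t * (Nt t : ℝ) ^ (-σ) := by
  have hs : 1 < (σ : ℂ).re := by simpa using hσ
  have hF := FF_summable (K := K) σ hs
  have h2 := (((Equiv.prodComm _ _).hasSum_iff.2 hF.hasSum).prod_fiberwise fun t => FF_snd (σ : ℂ) hs t).summable
  have hZ : (∑' I : (Ideal (𝓞 K))⁰, (NI I : ℂ) ^ (-(σ : ℂ))) ≠ 0 := by
    have e : ∀ I : (Ideal (𝓞 K))⁰, (NI I : ℂ) ^ (-(σ : ℂ)) = (((NI I : ℝ) ^ (-σ) : ℝ) : ℂ) := by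
      intro I
      rw [Complex.ofReal_cpow (by positivity)]; push_cast; rfl
    simp only [e]
    rw [← Complex.ofReal_tsum, Complex.ofReal_ne_zero]
    refine ((ideal_summable σ hσ).tsum_pos (fun _ => by positivity) 1 ?_).ne'
    have : (0:ℝ) < NI (1 : (Ideal (𝓞 K))⁰) := by exact_mod_cast Nat.pos_of_ne_zero (NI_ne _)
    positivity
  rw [summable_mul_right_iff hZ] at h2
  refine h2.norm.congr fun t => ?_
  rw [norm_mul, Complex.norm_real, Real.norm_of_nonneg (wt_nonneg t),
        Complex.norm_natCast_cpow_of_pos (Nat.pos_of_ne_zero (Nt_ne t))]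
  simp

variable (K) in
noncomputable def Lam (n : ℕ) : ℝ := coef (Nt (K := K)) wt n

theorem Lam_LSeries : (∀ s : ℂ, 1 < s.re → LSeriesSummable (fun n => (Lam K n : ℂ)) s) ∧
    ∃ G : ℂ → ℂ, ContinuousOn G {s | 1 ≤ s.re} ∧
    ∀ s, 1 < s.re → LSeries (fun n => (Lam K n : ℂ)) s = 1 / (s - 1) + G s := by
  have hL := fun (s : ℂ) (hs : 1 < s.re) => group_LSeries (Nt (K := K)) Nt_ne wt wt_nonneg lam_summable s hs
  refine ⟨fun s hs => (hL s hs).1, ?_⟩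
  obtain ⟨h, h1, h2, h3⟩ := zeta_h (K := K)
  refine logderiv (rK K) (Lam K) (fun n => coef_nonneg _ _ wt_nonneg n) (fun x hx => (rK_LSeries _ (by simpa using hx)).1)
    (fun x hx => (hL _ (by simpa using hx)).1) h h1 h2 h3 ?_
  intro s hs
  have e1 : LSeries (LSeries.logMul fun n => (rK K n : ℂ)) s =
      LSeries (fun n => (coef (NI (K := K)) (fun x => (fun _ => (1:ℝ)) x * Real.log (NI x)) n : ℂ)) s := by
    refine LSeries_congr (fun {n} hn => ?_) s
    rw [coef_log, LSeries.logMul, ← Complex.natCast_log, rK]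
    push_cast; ring
  rw [e1]
  have h4 := (group_LSeries (NI (K := K)) NI_ne (fun x => (fun _ => (1:ℝ)) x * Real.log (NI x))
    (fun I => by simpa using Real.log_natCast_nonneg _) (fun σ hσ => by simpa using log_ideal_summable σ hσ) s hs).2
  have h5 := lam_conv (K := K) s hs
  simp only [one_mul] at h4 ⊢
  rw [h4.unique h5, (rK_LSeries s hs).2.tsum_eq, (hL s hs).2.tsum_eq]
  rfl

end SR
end

section
open MeasureTheory Set Filter Topology

namespace SR
open NumberField

variable (K : Type*) [Field K] [NumberField K]

noncomputable def cP (n : ℕ) : ℕ := Nat.card {P : Pr K // NP P = n}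

variable {K}

lemma NP_primePow (P : Pr K) : IsPrimePow (NP P) := by
  have : P.1.IsPrime := Ideal.isPrime_of_prime P.2
  have : P.1.IsMaximal := Ideal.IsPrime.isMaximal this P.2.ne_zero
  letI := Ideal.Quotient.field P.1
  have h : Nat.card (𝓞 K ⧸ P.1) = NP P := by
    rw [NP, Ideal.absNorm_apply, Submodule.cardQuot_apply]
  have : Finite (𝓞 K ⧸ P.1) := Nat.finite_of_card_ne_zero (by rw [h]; have := NP_gt P; omega)
  letI := Fintype.ofFinite (𝓞 K ⧸ P.1)
  rw [← h, Nat.card_eq_fintype_card]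
  exact FiniteField.isPrimePow_card _

lemma mem_of_Nt (t : Pr K × ℕ) : ((Nt t).minFac : 𝓞 K) ∈ t.1.1 := by
  have hP : t.1.1.IsPrime := Ideal.isPrime_of_prime t.1.2
  have h1 : ((NP t.1 : ℕ) : 𝓞 K) ∈ t.1.1 := Ideal.absNorm_mem _
  have h2 : (Nt t).minFac = (NP t.1).minFac := by
    rw [Nt, Nat.pow_minFac (by omega)]
  have h3 := (NP_primePow t.1).minFac_pow_factorization_eq
  rw [← h3] at h1
  push_cast at h1
  rw [h2]
  exact hP.mem_of_pow_mem _ h1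

lemma sum_log_le (F : Finset (Pr K)) (p : ℕ) (hp : 0 < p) (h : ∀ P ∈ F, (p : 𝓞 K) ∈ P.1) :
    ∑ P ∈ F, Real.log (NP P) ≤ Module.finrank ℤ (𝓞 K) * Real.log p := by
  classical
  have h1 : ∏ P ∈ F.image Subtype.val, P ∣ Ideal.span {(p : 𝓞 K)} := by
    apply Finset.prod_primes_dvd
    · intro a ha
      obtain ⟨P, -, rfl⟩ := Finset.mem_image.1 ha
      exact P.2
    · intro a ha
      obtain ⟨P, hP, rfl⟩ := Finset.mem_image.1 ha
      rw [Ideal.dvd_span_singleton]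
      exact h P hP
  have h2 := map_dvd Ideal.absNorm h1
  rw [Ideal.absNorm_span_natCast, map_prod, Finset.prod_image (fun _ _ _ _ h => Subtype.ext h)] at h2
  have h3 := Nat.le_of_dvd (pow_pos hp _) h2
  have h4 : ∏ P ∈ F, (NP P : ℝ) ≤ (p : ℝ) ^ Module.finrank ℤ (𝓞 K) := by exact_mod_cast h3
  have h5 : ∀ P ∈ F, (NP P : ℝ) ≠ 0 := fun P _ => by have := NP_gt P; exact_mod_cast (by omega : NP P ≠ 0)
  rw [← Real.log_prod h5, ← Real.log_pow]
  refine Real.log_le_log (Finset.prod_pos fun P hP => ?_) h4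
  exact lt_of_le_of_ne (by positivity) (h5 P hP).symm

lemma fib_inj (n : ℕ) (s t : Pr K × ℕ) (hs : Nt s = n) (ht : Nt t = n) (h : s.1 = t.1) : s = t := by
  refine Prod.ext h ?_
  have := hs.trans ht.symm
  rw [Nt, Nt, h] at this
  have := Nat.pow_right_injective (NP_gt t.1) this
  omega

lemma Lam_le (n : ℕ) : Lam K n ≤ Module.finrank ℤ (𝓞 K) * ArithmeticFunction.vonMangoldt n := by
  classical
  rw [Lam, coef]
  refine Real.tsum_le_of_sum_le (fun x => wt_nonneg _) fun u => ?_
  rcases u.eq_empty_or_nonempty with rfl | ⟨t0, ht0⟩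
  · simp only [Finset.sum_empty]
    exact mul_nonneg (by positivity) ArithmeticFunction.vonMangoldt_nonneg
  have hn : IsPrimePow n := by
    rw [← t0.2, Nt]; exact (NP_primePow _).pow (by omega)
  rw [ArithmeticFunction.vonMangoldt_apply, if_pos hn]
  have h1 := sum_log_le (u.image fun t => t.1.1) n.minFac n.minFac_pos ?_
  · rw [Finset.sum_image] at h1
    · exact h1
    · intro a _ b _ hab
      exact Subtype.ext (fib_inj n _ _ a.2 b.2 hab)
  · intro P hP
    obtain ⟨t, -, rfl⟩ := Finset.mem_image.1 hP
    have := mem_of_Nt t.1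
    rw [t.2] at this
    exact this

lemma Lam_prime (n : ℕ) (hn : n.Prime) : Lam K n = cP K n * Real.log n := by
  rw [Lam, coef]
  have h0 : ∀ t : Pr K × ℕ, Nt t = n → t.2 = 0 ∧ NP t.1 = n := by
    intro t ht
    rw [Nt] at ht
    have h2 : t.2 + 1 = 1 := by
      by_contra h
      exact Nat.Prime.not_prime_pow' h (ht ▸ hn)
    rw [h2, pow_one] at ht
    exact ⟨by omega, ht⟩
  have h1 : ∀ t : {t : Pr K × ℕ // Nt t = n}, wt t.1 = Real.log n := by
    intro t; rw [wt, (h0 t.1 t.2).2]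
  rw [tsum_congr h1, tsum_const, nsmul_eq_mul, cP]
  congr 2
  refine Nat.card_congr ⟨fun t => ⟨t.1.1, (h0 _ t.2).2⟩, fun P => ⟨(P.1, 0), by simp [Nt, P.2]⟩, ?_, ?_⟩
  · intro t
    exact Subtype.ext (Prod.ext rfl (h0 _ t.2).1.symm)
  · intro P; rfl

variable (K) in
noncomputable def aP (n : ℕ) : ℝ := if n.Prime then cP K n * Real.log n else 0
variable (K) in
noncomputable def bP (n : ℕ) : ℝ := if n.Prime then 0 else Lam K n

lemma Lam_split (n : ℕ) : Lam K n = aP K n + bP K n := by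
  rw [aP, bP]
  split_ifs with h
  · rw [Lam_prime n h, add_zero]
  · rw [zero_add]

lemma Lam_nonneg (n : ℕ) : 0 ≤ Lam K n := coef_nonneg _ _ wt_nonneg n
lemma aP_nonneg (n : ℕ) : 0 ≤ aP K n := by
  rw [aP]; split_ifs
  · exact mul_nonneg (by positivity) (Real.log_natCast_nonneg _)
  · exact le_rfl
lemma bP_nonneg (n : ℕ) : 0 ≤ bP K n := by
  rw [bP]; split_ifs
  · exact le_rfl
  · exact Lam_nonneg n

lemma bP_summable : Summable fun n : ℕ => bP K n / n := by
  have h := (ArithmeticFunction.vonMangoldt.summable_residueClass_non_primes_div (q := 1) 0).mul_left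
    (Module.finrank ℤ (𝓞 K) : ℝ)
  refine Summable.of_nonneg_of_le (fun n => div_nonneg (bP_nonneg n) (by positivity)) (fun n => ?_) h
  rw [← mul_div_assoc]
  refine div_le_div_of_nonneg_right ?_ (by positivity)
  rw [bP]
  split_ifs
  · simp
  · have e : ArithmeticFunction.vonMangoldt.residueClass (q := 1) 0 n = ArithmeticFunction.vonMangoldt n :=
      Set.indicator_of_mem (s := {n : ℕ | (n : ZMod 1) = 0}) (show ((n : ℕ) : ZMod 1) = 0 from Subsingleton.elim _ _) _
    rw [e]
    exact Lam_le n

lemma bP_term_le (s : ℂ) (hs : 1 ≤ s.re) (n : ℕ) :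
    ‖LSeries.term (fun n => (bP K n : ℂ)) s n‖ ≤ bP K n / n := by
  rcases eq_or_ne n 0 with rfl | hn
  · simp
  rw [LSeries.norm_term_eq, if_neg hn, Complex.norm_real, Real.norm_of_nonneg (bP_nonneg n)]
  have h1 : (1:ℝ) ≤ n := by exact_mod_cast Nat.pos_of_ne_zero hn
  refine div_le_div_of_nonneg_left (bP_nonneg n) (by positivity) ?_
  simpa using Real.rpow_le_rpow_of_exponent_le h1 hs

variable (K) in
theorem theta_K : Tendsto (fun x : ℝ => (∑ k ∈ Finset.Icc 1 ⌊x⌋₊, aP K k) / x) atTop (𝓝 1) := by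
  obtain ⟨hs, G, hG, hL⟩ := Lam_LSeries (K := K)
  have hb : ∀ s : ℂ, 1 ≤ s.re → LSeriesSummable (fun n => (bP K n : ℂ)) s := fun s hs =>
    Summable.of_norm_bounded bP_summable (bP_term_le s hs)
  have he : (fun n => (aP K n : ℂ)) = (fun n => (Lam K n : ℂ)) - (fun n => (bP K n : ℂ)) := by
    funext n
    simp [Lam_split (K := K) n]
  refine tauber (aP K) aP_nonneg ?_ 1 (fun s => G s - LSeries (fun n => (bP K n : ℂ)) s) ?_ ?_
  · intro r hr
    rw [he]
    exact (hs r (by simpa using hr)).sub (hb r (by simpa using hr.le))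
  · refine hG.sub ?_
    refine continuousOn_tsum (fun n => ?_) bP_summable (fun n s hs => bP_term_le s hs n)
    rcases eq_or_ne n 0 with rfl | hn
    · simp only [LSeries.term_zero]; exact continuousOn_const
    · simp only [LSeries.term_of_ne_zero hn]
      have hn' : (n : ℂ) ≠ 0 := by exact_mod_cast hn
      refine Continuous.continuousOn ?_
      refine continuous_const.div ?_ (fun s => by simp [Complex.cpow_eq_zero_iff, hn'])
      exact continuous_const.cpow continuous_id (fun s => by left; simpa using Nat.pos_of_ne_zero hn)
  · intro s hs1
    rw [he, LSeries_sub (hs s hs1) (hb s hs1.le), hL s hs1]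
    push_cast; ring

end SR
end

section
open MeasureTheory Set Filter Topology

namespace SR
open NumberField
open scoped Pointwise

section
variable {M : Type*} [Field M] [NumberField M]

lemma int_mem {P : Ideal (𝓞 M)} (hP : P.IsPrime) {p : ℕ} (hp : p.Prime) (h : (p : 𝓞 M) ∈ P) (m : ℤ) :
    (m : 𝓞 M) ∈ P ↔ (p : ℤ) ∣ m := by
  constructor
  · intro hm
    by_contra hd
    have hc : IsCoprime (p : ℤ) m := by
      rw [(Nat.prime_iff_prime_int.1 hp).coprime_iff_not_dvd]; exact hd
    obtain ⟨a, b, hab⟩ := hc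
    apply hP.ne_top
    rw [Ideal.eq_top_iff_one]
    have h2 : (1 : 𝓞 M) = (a : 𝓞 M) * (p : 𝓞 M) + (b : 𝓞 M) * (m : 𝓞 M) := by
      have := congrArg (Int.cast : ℤ → 𝓞 M) hab
      push_cast at this
      exact this.symm
    rw [h2]
    exact P.add_mem (P.mul_mem_left _ h) (P.mul_mem_left _ hm)
  · rintro ⟨c, rfl⟩
    push_cast
    exact P.mul_mem_right _ h

lemma nat_mem {P : Ideal (𝓞 M)} (hP : P.IsPrime) {p : ℕ} (hp : p.Prime) (h : (p : 𝓞 M) ∈ P) (m : ℕ) :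
    (m : 𝓞 M) ∈ P ↔ p ∣ m := by
  have := int_mem hP hp h m
  rw [Int.natCast_dvd_natCast] at this
  rw [← this]; push_cast; rfl

lemma under_eq {P : Ideal (𝓞 M)} (hP : P.IsPrime) {p : ℕ} (hp : p.Prime) (h : (p : 𝓞 M) ∈ P) :
    P.under ℤ = Ideal.span {(p : ℤ)} := by
  ext m
  rw [Ideal.under_def, Ideal.mem_comap, Ideal.mem_span_singleton, ← int_mem hP hp h m]
  simp

lemma uniq {P : Ideal (𝓞 M)} (hP : P.IsPrime) {n : ℕ} (hn : 0 < n) (hnP : (n : 𝓞 M) ∉ P) {u v : 𝓞 M}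
    (huv : u ^ n = v ^ n) (hv : v ∉ P) (h : u - v ∈ P) : u = v := by
  by_contra hne
  have h1 := geom_sum₂_mul u v n
  rw [huv, sub_self, mul_eq_zero] at h1
  have h2 := h1.resolve_right (sub_ne_zero.2 hne)
  have h3 : Ideal.Quotient.mk P u = Ideal.Quotient.mk P v := Ideal.Quotient.eq.2 h
  have h4 := congrArg (Ideal.Quotient.mk P) h2
  rw [map_sum, map_zero] at h4
  have h5 : ∀ i ∈ Finset.range n, Ideal.Quotient.mk P (u ^ i * v ^ (n - 1 - i)) = Ideal.Quotient.mk P (v ^ (n - 1)) := by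
    intro i hi
    rw [Finset.mem_range] at hi
    rw [map_mul, map_pow, map_pow, h3, ← pow_add, map_pow]
    congr 1; omega
  rw [Finset.sum_congr rfl h5, Finset.sum_const, Finset.card_range, nsmul_eq_mul] at h4
  have h6 : (n : 𝓞 M) * v ^ (n - 1) ∈ P := by
    rw [← Ideal.Quotient.eq_zero_iff_mem, map_mul, map_natCast]; exact h4
  rcases hP.mem_or_mem h6 with h7 | h7
  · exact hnP h7
  · exact hv (hP.mem_of_pow_mem _ h7)

lemma pr_mem (P : Pr M) {p : ℕ} (h : NP P = p) : (p : 𝓞 M) ∈ P.1 := by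
  rw [← h]; exact Ideal.absNorm_mem _

lemma NP_eq_iff (P : Pr M) {p : ℕ} (hp : p.Prime) :
    NP P = p ↔ (p : 𝓞 M) ∈ P.1 ∧ ∀ x : 𝓞 M, x ^ p - x ∈ P.1 := by
  have hP : P.1.IsPrime := Ideal.isPrime_of_prime P.2
  have : P.1.IsMaximal := Ideal.IsPrime.isMaximal hP P.2.ne_zero
  letI := Ideal.Quotient.field P.1
  have hc : Nat.card (𝓞 M ⧸ P.1) = NP P := by
    rw [NP, Ideal.absNorm_apply, Submodule.cardQuot_apply]
  have : Finite (𝓞 M ⧸ P.1) := Nat.finite_of_card_ne_zero (by rw [hc]; have := NP_gt P; omega)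
  letI := Fintype.ofFinite (𝓞 M ⧸ P.1)
  rw [Nat.card_eq_fintype_card] at hc
  constructor
  · intro h
    refine ⟨pr_mem P h, fun x => ?_⟩
    rw [← Ideal.Quotient.eq, map_pow, ← h, ← hc]
    exact FiniteField.pow_card _
  · rintro ⟨h1, h2⟩
    have hle : NP P ≤ p := by
      rw [← hc]
      have hne : (Polynomial.X ^ p - Polynomial.X : Polynomial (𝓞 M ⧸ P.1)) ≠ 0 :=
        FiniteField.X_pow_card_sub_X_ne_zero _ hp.one_lt
      have hd : (Polynomial.X ^ p - Polynomial.X : Polynomial (𝓞 M ⧸ P.1)).natDegree = p :=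
        FiniteField.X_pow_card_sub_X_natDegree_eq _ hp.one_lt
      have := Polynomial.card_le_degree_of_subset_roots (p := (Polynomial.X ^ p - Polynomial.X : Polynomial (𝓞 M ⧸ P.1)))
        (Z := Finset.univ) ?_
      · rw [hd] at this; simpa using this
      · intro x _
        rw [Polynomial.mem_roots hne]
        obtain ⟨y, rfl⟩ := Ideal.Quotient.mk_surjective x
        have := Ideal.Quotient.eq.2 (h2 y)
        rw [map_pow] at this
        simp [this]
    have h3 : ((NP P : ℕ) : 𝓞 M) ∈ P.1 := Ideal.absNorm_mem _
    rw [nat_mem hP hp h1] at h3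
    have := Nat.le_of_dvd (by have := NP_gt P; omega) h3
    omega

lemma exists_prime (p : ℕ) (hp : p.Prime) : ∃ P : Pr M, (p : 𝓞 M) ∈ P.1 := by
  have h1 : Ideal.span {(p : 𝓞 M)} ≠ ⊤ := by
    intro h
    have h2 := Ideal.absNorm_span_natCast (S := 𝓞 M) p
    rw [h, Ideal.absNorm_top] at h2
    have h3 : Module.finrank ℤ (𝓞 M) ≠ 0 := by
      rw [RingOfIntegers.rank]; exact Module.finrank_pos.ne'
    have := Nat.one_lt_pow h3 hp.one_lt
    omega
  obtain ⟨Q, hQ, hle⟩ := Ideal.exists_le_maximal _ h1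
  have hm : (p : 𝓞 M) ∈ Q := hle (Ideal.mem_span_singleton_self _)
  have hQ0 : Q ≠ ⊥ := by
    rintro rfl
    rw [Ideal.mem_bot] at hm
    exact hp.ne_zero (by exact_mod_cast hm)
  exact ⟨⟨Q, Ideal.prime_of_isPrime hQ0 hQ.isPrime⟩, hm⟩

lemma deg_one (P : Pr M) {p : ℕ} (hp : p.Prime) (h : NP P = p) (x : 𝓞 M) : ∃ m : ℕ, x - m ∈ P.1 := by
  have hP : P.1.IsPrime := Ideal.isPrime_of_prime P.2
  have hc : Nat.card (𝓞 M ⧸ P.1) = p := by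
    rw [← h, NP, Ideal.absNorm_apply, Submodule.cardQuot_apply]
  have : Finite (𝓞 M ⧸ P.1) := Nat.finite_of_card_ne_zero (by rw [hc]; exact hp.ne_zero)
  have hinj : Function.Injective (fun m : Fin p => Ideal.Quotient.mk P.1 ((m : ℕ) : 𝓞 M)) := by
    intro a b hab
    have h1 := Ideal.Quotient.eq.1 hab
    have h2 := int_mem hP hp (pr_mem P h) ((a : ℕ) - (b : ℕ) : ℤ)
    push_cast at h2
    rw [h2] at h1
    have h4 : ((a : ℕ) : ℤ) - (b : ℕ) = 0 := by
      apply Int.eq_zero_of_abs_lt_dvd h1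
      rw [abs_lt]; have := a.2; have := b.2; omega
    exact Fin.ext (by omega)
  have hb := hinj.bijective_of_nat_card_le (by rw [hc]; simp)
  obtain ⟨m, hm⟩ := hb.2 (Ideal.Quotient.mk P.1 x)
  exact ⟨m, Ideal.Quotient.eq.1 hm.symm⟩

variable [IsGalois ℚ M]

lemma frob (P : Pr M) {p : ℕ} (hp : p.Prime) (h : (p : 𝓞 M) ∈ P.1) :
    ∃ σ : M ≃ₐ[ℚ] M, ∀ x : 𝓞 M, σ • x - x ^ p ∈ P.1 := by
  have hP : P.1.IsPrime := Ideal.isPrime_of_prime P.2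
  have hc : Nat.card (𝓞 M ⧸ P.1) = NP P := by
    rw [NP, Ideal.absNorm_apply, Submodule.cardQuot_apply]
  have : Finite (𝓞 M ⧸ P.1) := Nat.finite_of_card_ne_zero (by rw [hc]; have := NP_gt P; omega)
  obtain ⟨σ, hσ⟩ := IsArithFrobAt.exists_of_isInvariant ℤ (M ≃ₐ[ℚ] M) P.1
  refine ⟨σ, fun x => ?_⟩
  have := hσ x
  rw [under_eq hP hp h, Int.card_ideal_quot] at this
  exact this

lemma gal_nat (σ : M ≃ₐ[ℚ] M) (m : ℕ) : σ • (m : 𝓞 M) = m := by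
  have := map_natCast (MulSemiringAction.toRingHom (M ≃ₐ[ℚ] M) (𝓞 M) σ) m
  exact this

/-- Frobenius fixes a primitive root and moves `B` according to the power residue. -/
lemma frob_fix (P : Pr M) {p : ℕ} (hp : p.Prime) (h : (p : 𝓞 M) ∈ P.1) {n k : ℕ} (hn : 0 < n)
    (hnp : ¬ p ∣ n) (hpk : p = k * n + 1) (σ : M ≃ₐ[ℚ] M) (hσ : ∀ x : 𝓞 M, σ • x - x ^ p ∈ P.1)
    (B : 𝓞 M) (b : ℕ) (hB : B ^ n = b) (hb : ¬ p ∣ b) :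
    σ • B = B ↔ ((b : ZMod p) ^ k = 1) := by
  have hP : P.1.IsPrime := Ideal.isPrime_of_prime P.2
  have hBP : B ∉ P.1 := by
    intro hB2
    apply hb
    rw [← nat_mem hP hp h, ← hB]
    exact P.1.pow_mem_of_mem hB2 n hn
  have hnP : (n : 𝓞 M) ∉ P.1 := by rwa [nat_mem hP hp h]
  have e1 : B ^ p = B * (b : 𝓞 M) ^ k := by
    rw [hpk, pow_succ, mul_comm k n, pow_mul, hB, mul_comm]
  have e2 : ((b : ZMod p) ^ k = 1) ↔ ((b : 𝓞 M) ^ k - 1 ∈ P.1) := by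
    have h1 := int_mem hP hp h ((b : ℤ) ^ k - 1)
    rw [← ZMod.intCast_zmod_eq_zero_iff_dvd] at h1
    push_cast at h1
    rw [h1, sub_eq_zero]
  have e3 : ∀ x : 𝓞 M, σ • B - B = (σ • B - B ^ p) + B * ((b : 𝓞 M) ^ k - 1) := by
    intro x; rw [e1]; ring
  have e4 : σ • B - B ∈ P.1 ↔ (b : 𝓞 M) ^ k - 1 ∈ P.1 := by
    rw [e3 B, P.1.add_mem_iff_right (hσ B)]
    constructor
    · intro h; exact (hP.mem_or_mem h).resolve_left hBP
    · intro h; exact P.1.mul_mem_left _ h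
  rw [e2, ← e4]
  constructor
  · intro h; rw [h, sub_self]; exact P.1.zero_mem
  · intro h
    refine uniq hP hn hnP ?_ hBP h
    rw [← smul_pow', hB, gal_nat]

theorem cP_eq {ι : Type*} {n : ℕ} (hn : 0 < n) (z : 𝓞 M) (hz : IsPrimitiveRoot z n) (B : ι → 𝓞 M) (b : ι → ℕ)
    (hB : ∀ i, B i ^ n = b i)
    (hfaith : ∀ σ : M ≃ₐ[ℚ] M, σ • z = z → (∀ i, σ • B i = B i) → σ = 1)
    (p : ℕ) (hp : p.Prime) (hpn : ¬ p ∣ n) (hpb : ∀ i, ¬ p ∣ b i) :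
    ((∃ k, p = k * n + 1 ∧ ∀ i, (b i : ZMod p) ^ k = 1) → cP M p = Module.finrank ℚ M) ∧
    ((¬ ∃ k, p = k * n + 1 ∧ ∀ i, (b i : ZMod p) ^ k = 1) → cP M p = 0) := by
  have hz1 : z ^ n = ((1 : ℕ) : 𝓞 M) := by rw [hz.pow_eq_one]; simp
  have hdeg : ∀ P : Pr M, NP P = p → ∃ k, p = k * n + 1 ∧ ∀ i, (b i : ZMod p) ^ k = 1 := by
    intro P hNP
    have hP : P.1.IsPrime := Ideal.isPrime_of_prime P.2
    obtain ⟨hpP, hfr⟩ := (NP_eq_iff P hp).1 hNP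
    have hnP : (n : 𝓞 M) ∉ P.1 := by rwa [nat_mem hP hp hpP]
    have h1P : (1 : 𝓞 M) ∉ P.1 := fun h => hP.ne_top (P.1.eq_top_iff_one.2 h)
    have hzP : z ∉ P.1 := by
      intro h
      have := P.1.pow_mem_of_mem h n hn
      rw [hz.pow_eq_one] at this
      exact h1P this
    have h1 : z ^ p = z := by
      refine uniq hP hn hnP ?_ hzP (hfr z)
      rw [← pow_mul, mul_comm, pow_mul, hz.pow_eq_one, one_pow]
    have h2 : z ^ (p - 1) = 1 := by
      have h0 : z ≠ 0 := by rintro rfl; exact hzP P.1.zero_mem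
      apply mul_right_cancel₀ h0
      rw [← pow_succ, Nat.sub_add_cancel hp.one_lt.le, h1, one_mul]
    obtain ⟨k, hk⟩ := (hz.pow_eq_one_iff_dvd _).1 h2
    have hpk : p = k * n + 1 := by rw [mul_comm, ← hk]; have := hp.one_lt; omega
    refine ⟨k, hpk, fun i => ?_⟩
    refine (frob_fix P hp hpP hn hpn hpk 1 (fun x => ?_) (B i) (b i) (hB i) (hpb i)).1 (one_smul _ _)
    rw [one_smul, ← neg_sub]
    exact P.1.neg_mem (hfr x)
  constructor
  · rintro ⟨k, hpk, hk⟩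
    obtain ⟨P, hpP⟩ := exists_prime (M := M) p hp
    have hP : P.1.IsPrime := Ideal.isPrime_of_prime P.2
    obtain ⟨σ, hσ⟩ := frob P hp hpP
    have hσ1 : σ = 1 := by
      apply hfaith
      · exact (frob_fix P hp hpP hn hpn hpk σ hσ z 1 hz1 hp.not_dvd_one).2 (by simp)
      · intro i
        exact (frob_fix P hp hpP hn hpn hpk σ hσ (B i) (b i) (hB i) (hpb i)).2 (hk i)
    have hNP : NP P = p := by
      rw [NP_eq_iff P hp]
      refine ⟨hpP, fun x => ?_⟩
      have := hσ x
      rw [hσ1, one_smul, ← neg_sub] at this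
      exact neg_mem_iff.1 this
    have hfr := ((NP_eq_iff P hp).1 hNP).2
    have hpr : ∀ τ : M ≃ₐ[ℚ] M, Prime (τ • P.1) := by
      intro τ
      refine Ideal.prime_of_isPrime ?_ inferInstance
      intro h
      apply P.2.ne_zero
      have := congrArg (fun I => τ⁻¹ • I) h
      simpa using this
    have hN : ∀ τ : M ≃ₐ[ℚ] M, NP ⟨τ • P.1, hpr τ⟩ = p := by
      intro τ
      rw [NP_eq_iff _ hp]
      refine ⟨?_, fun x => ?_⟩
      · rw [Ideal.mem_pointwise_smul_iff_inv_smul_mem, gal_nat]; exact hpP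
      · rw [Ideal.mem_pointwise_smul_iff_inv_smul_mem, smul_sub, smul_pow']; exact hfr _
    rw [← IsGalois.card_aut_eq_finrank, cP]
    symm
    refine Nat.card_eq_of_bijective (fun τ => ⟨⟨τ • P.1, hpr τ⟩, hN τ⟩) ⟨?_, ?_⟩
    · intro τ ρ h
      have h1 : τ • P.1 = ρ • P.1 := congrArg (fun Q => Q.1.1) h
      have h2 : (ρ⁻¹ * τ) • P.1 = P.1 := by rw [mul_smul, h1, inv_smul_smul]
      have h3 : ρ⁻¹ * τ = 1 := by
        set υ := ρ⁻¹ * τ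
        have hυ : ∀ x : 𝓞 M, υ • x - x ^ p ∈ P.1 := by
          intro x
          obtain ⟨m, hm⟩ := deg_one P hp hNP x
          have h5 : υ • x - m ∈ P.1 := by
            rw [← h2, Ideal.mem_pointwise_smul_iff_inv_smul_mem, smul_sub, inv_smul_smul, gal_nat]
            exact hm
          have h6 := hfr x
          have h7 : υ • x - x ^ p = (υ • x - m) - (x - m) - (x ^ p - x) := by ring
          rw [h7]
          exact P.1.sub_mem (P.1.sub_mem h5 hm) h6
        apply hfaith
        · exact (frob_fix P hp hpP hn hpn hpk υ hυ z 1 hz1 hp.not_dvd_one).2 (by simp)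
        · intro i
          exact (frob_fix P hp hpP hn hpn hpk υ hυ (B i) (b i) (hB i) (hpb i)).2 (hk i)
      exact (inv_mul_eq_one.1 h3).symm
    · rintro ⟨Q, hQ⟩
      have hQP : Q.1.IsPrime := Ideal.isPrime_of_prime Q.2
      obtain ⟨τ, hτ⟩ := Algebra.IsInvariant.exists_smul_of_under_eq ℤ (𝓞 M) (M ≃ₐ[ℚ] M) P.1 Q.1
        (by rw [under_eq hP hp hpP, under_eq hQP hp (pr_mem Q hQ)])
      exact ⟨τ, Subtype.ext (Subtype.ext hτ.symm)⟩
  · intro hno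
    rw [cP, Nat.card_eq_zero]
    left
    exact ⟨fun P => hno (hdeg P.1 P.2)⟩

end
end SR
end

section
open MeasureTheory Set Filter Topology

namespace SR
open NumberField

open scoped Classical in
noncomputable def lw (C : ℕ → Prop) (p : ℕ) : ℝ := if p.Prime ∧ C p then Real.log p else 0

def Dens (f : ℕ → ℝ) (A : ℝ) : Prop :=
  Tendsto (fun x : ℕ => (∑ p ∈ Finset.Icc 1 x, f p) / x) atTop (𝓝 A)

lemma Dens.congr {f g : ℕ → ℝ} {A : ℝ} (hf : Dens f A) (N : ℕ) (h : ∀ p, N < p → f p = g p) : Dens g A := by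
  have h1 : Tendsto (fun x : ℕ => (∑ p ∈ Finset.Icc 1 N, (g p - f p)) / (x : ℝ)) atTop (𝓝 0) :=
    tendsto_const_nhds.div_atTop tendsto_natCast_atTop_atTop
  have h2 := Tendsto.add hf h1
  rw [add_zero] at h2
  refine h2.congr' ?_
  filter_upwards [eventually_ge_atTop N] with x hx
  rw [← add_div]
  congr 1
  have h3 : ∑ p ∈ Finset.Icc 1 N, (g p - f p) = ∑ p ∈ Finset.Icc 1 x, (g p - f p) := by
    refine Finset.sum_subset (Finset.Icc_subset_Icc_right hx) fun p hp hp' => ?_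
    rw [Finset.mem_Icc] at hp hp'
    rw [h p (by omega), sub_self]
  rw [h3, Finset.sum_sub_distrib]; ring

lemma Dens.sum {ι : Type*} (s : Finset ι) (f : ι → ℕ → ℝ) (A c : ι → ℝ) (h : ∀ i ∈ s, Dens (f i) (A i)) :
    Dens (fun p => ∑ i ∈ s, c i * f i p) (∑ i ∈ s, c i * A i) := by
  have := tendsto_finsetSum s fun i hi => Tendsto.const_mul (c i) (h i hi)
  refine this.congr fun x => ?_
  simp only [mul_div_assoc']
  rw [← Finset.sum_div, Finset.sum_comm]
  congr 1
  exact Finset.sum_congr rfl fun i _ => Finset.mul_sum _ _ _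

theorem cond_dens (M : Type*) [Field M] [NumberField M] [IsGalois ℚ M] {ι : Type*} [Finite ι] {n : ℕ} (hn : 0 < n)
    (z : M) (hz : IsPrimitiveRoot z n) (B : ι → M) (b : ι → ℕ) (hb : ∀ i, 0 < b i)
    (hB : ∀ i, B i ^ n = b i)
    (hfaith : ∀ σ : M ≃ₐ[ℚ] M, σ z = z → (∀ i, σ (B i) = B i) → σ = 1) :
    Dens (lw fun p => ∃ k, p = k * n + 1 ∧ ∀ i, (b i : ZMod p) ^ k = 1) (1 / Module.finrank ℚ M) := by
  classical
  have := Fintype.ofFinite ι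
  have hzi : IsIntegral ℤ z := IsIntegral.of_pow hn (by rw [hz.pow_eq_one]; exact isIntegral_one)
  have hBi : ∀ i, IsIntegral ℤ (B i) := fun i => IsIntegral.of_pow hn (by
    rw [hB]; exact_mod_cast isIntegral_algebraMap (R := ℤ) (A := M) (x := (b i : ℤ)))
  let z' : 𝓞 M := ⟨z, hzi⟩
  let B' : ι → 𝓞 M := fun i => ⟨B i, hBi i⟩
  have hz' : IsPrimitiveRoot z' n := by
    refine IsPrimitiveRoot.of_map_of_injective (f := algebraMap (𝓞 M) M) ?_ RingOfIntegers.coe_injective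
    exact hz
  have key := cP_eq hn z' hz' B' b (fun i => RingOfIntegers.coe_injective (by
      rw [map_pow, map_natCast]; exact hB i)) (by
    intro σ h1 h2
    refine hfaith σ ?_ fun i => ?_
    · exact congrArg (algebraMap (𝓞 M) M) h1
    · exact congrArg (algebraMap (𝓞 M) M) (h2 i))
  have hd : (Module.finrank ℚ M : ℝ) ≠ 0 := by exact_mod_cast Module.finrank_pos.ne'
  have h1 : Dens (fun p => (1 / (Module.finrank ℚ M : ℝ)) * aP M p) (1 / Module.finrank ℚ M) := by
    have := ((theta_K M).comp tendsto_natCast_atTop_atTop).const_mul (1 / (Module.finrank ℚ M : ℝ))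
    rw [mul_one] at this
    refine this.congr fun x => ?_
    simp only [Function.comp, Nat.floor_natCast]
    rw [← mul_div_assoc, Finset.mul_sum]
  refine h1.congr (n + ∑ i, b i) fun p hp => ?_
  rw [aP, lw]
  by_cases hpp : p.Prime
  swap
  · simp [hpp]
  have hpn : ¬ p ∣ n := fun h => by have := Nat.le_of_dvd hn h; omega
  have hpb : ∀ i, ¬ p ∣ b i := fun i h => by
    have h1 := Nat.le_of_dvd (hb i) h
    have h2 := Finset.single_le_sum (f := b) (fun _ _ => Nat.zero_le _) (Finset.mem_univ i)
    omega
  have h2 := key p hpp hpn hpb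
  rw [if_pos hpp]
  by_cases hC : ∃ k, p = k * n + 1 ∧ ∀ i, (b i : ZMod p) ^ k = 1
  · rw [h2.1 hC, if_pos ⟨hpp, hC⟩]; field_simp
  · rw [h2.2 hC, if_neg (fun h => hC h.2)]; simp

lemma galQ : @IsGalois ℚ _ ℚ _ DivisionRing.toRatAlgebra := by
  have h : @IsGalois ℚ _ ℚ _ (Algebra.id ℚ) := IsGalois.self ℚ
  have e : (Algebra.id ℚ) = (DivisionRing.toRatAlgebra : Algebra ℚ ℚ) := Subsingleton.elim _ _
  rw [← e]; exact h

lemma pnt : Dens (lw fun _ => True) 1 := by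
  have := galQ
  have := cond_dens ℚ (ι := Empty) (n := 1) one_pos 1 IsPrimitiveRoot.one (fun i => i.elim) (fun i => i.elim)
    (fun i => i.elim) (fun i => i.elim) (fun σ _ _ => AlgEquiv.ext fun x => by simpa using map_ratCast σ x)
  rw [Module.finrank_self, Nat.cast_one, div_one] at this
  refine this.congr 0 fun p hp => ?_
  have h1 : ∃ k, p = k * 1 + 1 := ⟨p - 1, by omega⟩
  rw [lw, lw]
  simp only [IsEmpty.forall_iff, and_true, h1]

lemma card_sub (C : ℕ → Prop) [DecidablePred C] (x : ℕ) :
    0 ≤ (((Finset.Icc 1 x).filter fun p => p.Prime ∧ C p).card : ℝ) * Real.log x - ∑ p ∈ Finset.Icc 1 x, lw C p ∧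
    (((Finset.Icc 1 x).filter fun p => p.Prime ∧ C p).card : ℝ) * Real.log x - ∑ p ∈ Finset.Icc 1 x, lw C p ≤
      (Nat.primeCounting x : ℝ) * Real.log x - Chebyshev.theta x := by
  classical
  have e1 : ∀ (D : ℕ → Prop) [DecidablePred D], (((Finset.Icc 1 x).filter fun p => p.Prime ∧ D p).card : ℝ) * Real.log x - ∑ p ∈ Finset.Icc 1 x, lw D p
      = ∑ p ∈ Finset.Icc 1 x, if p.Prime ∧ D p then (Real.log x - Real.log p) else 0 := by
    intro D _
    rw [← Finset.sum_filter, Finset.sum_sub_distrib, Finset.sum_const, nsmul_eq_mul]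
    congr 1
    rw [Finset.sum_filter]
    refine Finset.sum_congr rfl fun p _ => ?_
    rw [lw]; congr
  have e2 : (Nat.primeCounting x : ℝ) * Real.log x - Chebyshev.theta x =
      ∑ p ∈ Finset.Icc 1 x, if p.Prime ∧ True then (Real.log x - Real.log p) else 0 := by
    rw [← e1 fun _ => True]
    congr 1
    · congr 2
      rw [Nat.primeCounting, Nat.primeCounting', Nat.count_eq_card_filter_range]
      congr 1
      ext p
      simp only [Finset.mem_filter, Finset.mem_range, Finset.mem_Icc, and_true]
      constructor
      · rintro ⟨h1, h2⟩; exact ⟨⟨h2.one_lt.le, by omega⟩, h2⟩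
      · rintro ⟨h1, h2⟩; exact ⟨by omega, h2⟩
    · rw [Chebyshev.theta_eq_sum_Icc, Nat.floor_natCast, Finset.sum_filter]
      refine Finset.sum_subset_zero_on_sdiff ?_ ?_ ?_ |>.symm
      · exact Finset.Icc_subset_Icc_left (by omega)
      · intro p hp
        simp only [Finset.mem_sdiff, Finset.mem_Icc] at hp
        have : p = 0 := by omega
        simp [this]
      · intro p _
        simp [lw]
  have h0 : ∀ p ∈ Finset.Icc 1 x, 0 ≤ Real.log x - Real.log p := by
    intro p hp
    rw [Finset.mem_Icc] at hp
    rw [sub_nonneg]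
    apply Real.log_le_log
    · exact_mod_cast hp.1
    · exact_mod_cast hp.2
  rw [e1 C, e2]
  constructor
  · refine Finset.sum_nonneg fun p hp => ?_
    split_ifs
    · exact h0 p hp
    · exact le_rfl
  · refine Finset.sum_le_sum fun p hp => ?_
    have := h0 p hp
    split_ifs with h1 h2 h2
    · exact le_rfl
    · exact absurd ⟨h1.1, trivial⟩ h2
    · exact this
    · exact le_rfl

lemma err_zero : Tendsto (fun x : ℕ => ((Nat.primeCounting x : ℝ) * Real.log x - Chebyshev.theta x) / x) atTop (𝓝 0) := by
  have h1 := Chebyshev.primeCounting_sub_theta_div_log_isBigO.comp_tendsto tendsto_natCast_atTop_atTop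
  have h2 : (fun x : ℕ => ((Nat.primeCounting x : ℝ) * Real.log x - Chebyshev.theta x) / x) =O[atTop]
      (fun x : ℕ => (Real.log x)⁻¹) := by
    have h3 := h1.mul (Asymptotics.isBigO_refl (fun x : ℕ => Real.log x / x) atTop)
    refine (h3.congr' ?_ ?_)
    · filter_upwards [eventually_gt_atTop 1] with x hx
      have hl : Real.log x ≠ 0 := (Real.log_pos (by exact_mod_cast hx)).ne'
      have hx0 : (x : ℝ) ≠ 0 := by positivity
      simp only [Function.comp, Nat.floor_natCast]
      field_simp
    · filter_upwards [eventually_gt_atTop 1] with x hx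
      have hl : Real.log x ≠ 0 := (Real.log_pos (by exact_mod_cast hx)).ne'
      have hx0 : (x : ℝ) ≠ 0 := by positivity
      simp only [Function.comp]
      field_simp
  exact h2.trans_tendsto ((Real.tendsto_log_atTop.comp tendsto_natCast_atTop_atTop).inv_tendsto_atTop)

lemma count_dens (C : ℕ → Prop) [DecidablePred C] {A : ℝ} (h : Dens (lw C) A) :
    Tendsto (fun x : ℕ => (((Finset.Icc 1 x).filter fun p => p.Prime ∧ C p).card : ℝ) * Real.log x / x) atTop (𝓝 A) := by
  have h1 : Tendsto (fun x : ℕ => ((((Finset.Icc 1 x).filter fun p => p.Prime ∧ C p).card : ℝ) * Real.log x -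
      ∑ p ∈ Finset.Icc 1 x, lw C p) / x) atTop (𝓝 0) := by
    refine squeeze_zero (fun x => div_nonneg (card_sub C x).1 (by positivity)) (fun x => ?_) err_zero
    exact div_le_div_of_nonneg_right (card_sub C x).2 (by positivity)
  have h2 := Tendsto.add h1 h
  rw [zero_add] at h2
  refine h2.congr fun x => ?_
  rw [← add_div]; congr 1; ring

theorem nat_dens (C : ℕ → Prop) [DecidablePred C] {A : ℝ} (h : Dens (lw C) A) :
    Tendsto (fun x : ℕ => (((Finset.Icc 1 x).filter fun p => p.Prime ∧ C p).card : ℝ) / Nat.primeCounting x)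
      atTop (𝓝 A) := by
  have h1 := (count_dens C h).div (count_dens (fun _ => True) pnt) one_ne_zero
  rw [div_one] at h1
  refine h1.congr' ?_
  filter_upwards [eventually_gt_atTop 1] with x hx
  have hl : Real.log x ≠ 0 := (Real.log_pos (by exact_mod_cast hx)).ne'
  have hx0 : (x : ℝ) ≠ 0 := by positivity
  have e : ((Finset.Icc 1 x).filter fun p => p.Prime ∧ True).card = Nat.primeCounting x := by
    rw [Nat.primeCounting, Nat.primeCounting', Nat.count_eq_card_filter_range]
    congr 1
    ext p
    simp only [Finset.mem_filter, Finset.mem_range, Finset.mem_Icc, and_true]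
    constructor
    · rintro ⟨h1, h2⟩; exact ⟨by omega, h2⟩
    · rintro ⟨h1, h2⟩; exact ⟨⟨h2.one_lt.le, by omega⟩, h2⟩
  simp only [Pi.div_apply]
  rw [e]
  rw [div_div_div_cancel_right₀ hx0, mul_div_mul_right _ _ hl]

end SR
end

section
open MeasureTheory Set Filter Topology

namespace SR
open NumberField

section
variable {L : Type*} [Field L] [NumberField L]

def HT {ι : Type*} (z : L) (β : ι → L) (T : Finset ι) : Subgroup (L ≃ₐ[ℚ] L) where
  carrier := {σ | σ z = z ∧ ∀ i ∈ T, σ (β i) = β i}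
  one_mem' := ⟨rfl, fun _ _ => rfl⟩
  mul_mem' := by
    rintro σ τ ⟨h1, h2⟩ ⟨h3, h4⟩
    refine ⟨?_, fun i hi => ?_⟩
    · rw [AlgEquiv.mul_apply, h3, h1]
    · rw [AlgEquiv.mul_apply, h4 i hi, h2 i hi]
  inv_mem' := by
    rintro σ ⟨h1, h2⟩
    refine ⟨?_, fun i hi => ?_⟩
    · rw [AlgEquiv.aut_inv, AlgEquiv.symm_apply_eq, h1]
    · rw [AlgEquiv.aut_inv, AlgEquiv.symm_apply_eq, h2 i hi]

lemma root_fix {n : ℕ} (hn : 0 < n) {z : L} (hz : IsPrimitiveRoot z n) (σ : L ≃ₐ[ℚ] L) (hσ : σ z = z)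
    {x y : L} (hx : x ≠ 0) (hxy : y ^ n = x ^ n) (h : σ x = x) : σ y = y := by
  have : NeZero n := ⟨hn.ne'⟩
  have h1 : (y / x) ^ n = 1 := by rw [div_pow, hxy, div_self (pow_ne_zero _ hx)]
  obtain ⟨i, _, hi⟩ := hz.eq_pow_of_pow_eq_one h1
  have h2 : y = z ^ i * x := by rw [hi]; field_simp
  rw [h2, map_mul, map_pow, hσ, h]

lemma HT_normal {ι : Type*} {n : ℕ} (hn : 0 < n) {z : L} (hz : IsPrimitiveRoot z n) (β : ι → L) (b : ι → ℕ)
    (hb : ∀ i, 0 < b i) (hB : ∀ i, β i ^ n = b i) (T : Finset ι) : (HT z β T).Normal := by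
  constructor
  rintro σ ⟨h1, h2⟩ τ
  have hz0 : z ≠ 0 := hz.ne_zero hn.ne'
  have hβ0 : ∀ i, β i ≠ 0 := by
    intro i h
    have := hB i
    rw [h, zero_pow hn.ne'] at this
    have h3 := hb i
    have : b i = 0 := by exact_mod_cast this.symm
    omega
  refine ⟨?_, fun i hi => ?_⟩
  · rw [AlgEquiv.mul_apply, AlgEquiv.mul_apply]
    rw [root_fix hn hz σ h1 hz0 (y := τ⁻¹ z) _ h1]
    · rw [← AlgEquiv.mul_apply, mul_inv_cancel]; rfl
    · rw [← map_pow, hz.pow_eq_one, map_one]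
  · rw [AlgEquiv.mul_apply, AlgEquiv.mul_apply]
    rw [root_fix hn hz σ h1 (hβ0 i) (y := τ⁻¹ (β i)) _ (h2 i hi)]
    · rw [← AlgEquiv.mul_apply, mul_inv_cancel]; rfl
    · rw [← map_pow, hB, map_natCast]

variable [IsGalois ℚ L]

theorem HT_dens {ι : Type*} {n : ℕ} (hn : 0 < n) {z : L} (hz : IsPrimitiveRoot z n) (β : ι → L) (b : ι → ℕ)
    (hb : ∀ i, 0 < b i) (hB : ∀ i, β i ^ n = b i) (T : Finset ι) :
    Dens (lw fun p => ∃ k, p = k * n + 1 ∧ ∀ i ∈ T, (b i : ZMod p) ^ k = 1)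
      (Nat.card (HT z β T) / Nat.card (L ≃ₐ[ℚ] L)) := by
  have hN := HT_normal hn hz β b hb hB T
  let M := IntermediateField.fixedField (HT z β T)
  have hG : IsGalois ℚ M := IsGalois.of_fixedField_normal_subgroup (HT z β T)
  have hM : NumberField M := inferInstance
  have hzM : z ∈ M := by
    rw [IntermediateField.mem_fixedField_iff]
    exact fun σ hσ => hσ.1
  have hβM : ∀ i : T, β i ∈ M := by
    intro i
    rw [IntermediateField.mem_fixedField_iff]
    exact fun σ hσ => hσ.2 i i.2
  have h := cond_dens M (ι := T) hn ⟨z, hzM⟩ ?_ (fun i => ⟨β i, hβM i⟩) (fun i => b i) (fun i => hb i) ?_ ?_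
  · have e : (1 : ℝ) / Module.finrank ℚ M = Nat.card (HT z β T) / Nat.card (L ≃ₐ[ℚ] L) := by
      have h1 := IntermediateField.finrank_fixedField_eq_card (HT z β T)
      have h2 := IsGalois.card_aut_eq_finrank ℚ L
      have h3 := Module.finrank_mul_finrank ℚ M L
      have h4 : (Module.finrank ℚ M : ℝ) * Nat.card (HT z β T) = Nat.card (L ≃ₐ[ℚ] L) := by
        rw [h2, ← h3, ← h1]; push_cast; rfl
      have h5 : (Module.finrank ℚ M : ℝ) ≠ 0 := by exact_mod_cast Module.finrank_pos.ne'
      have h6 : (Nat.card (HT z β T) : ℝ) ≠ 0 := by exact_mod_cast Nat.card_pos.ne'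
      rw [← h4]; field_simp
    rw [e] at h
    refine h.congr 0 fun p _ => ?_
    simp only [Subtype.forall]
  · refine IsPrimitiveRoot.of_map_of_injective (f := algebraMap M L) ?_ (algebraMap M L).injective
    exact hz
  · intro i
    exact Subtype.ext (by simpa using hB i)
  · intro σ h1 h2
    have h3 : σ.liftNormal L ∈ HT z β T := by
      refine ⟨?_, fun i hi => ?_⟩
      · have := AlgEquiv.liftNormal_commutes σ L ⟨z, hzM⟩
        rw [h1] at this
        exact this
      · have := AlgEquiv.liftNormal_commutes σ L ⟨β i, hβM ⟨i, hi⟩⟩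
        rw [h2 ⟨i, hi⟩] at this
        exact this
    ext x
    have h4 := AlgEquiv.liftNormal_commutes σ L x
    have h5 : σ.liftNormal L (algebraMap M L x) = algebraMap M L x :=
      (IntermediateField.mem_fixedField_iff _ _).1 x.2 _ h3
    rw [h5] at h4
    exact h4.symm

open scoped Classical in
noncomputable def ind (P : Prop) : ℝ := if P then 1 else 0

open scoped Classical in
theorem incl_excl {ι : Type*} [Fintype ι] {n : ℕ} (hn : 0 < n) {z : L} (hz : IsPrimitiveRoot z n) (β : ι → L) (b : ι → ℕ)
    (hb : ∀ i, 0 < b i) (hB : ∀ i, β i ^ n = b i) :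
    Dens (lw fun p => ∃ k, p = k * n + 1 ∧ ∀ i, (b i : ZMod p) ^ k ≠ 1)
      (Nat.card {σ : L ≃ₐ[ℚ] L // σ z = z ∧ ∀ i, σ (β i) ≠ β i} / Nat.card (L ≃ₐ[ℚ] L)) := by
  have h := Dens.sum (Finset.univ : Finset (Finset ι)) _ _ (fun T => (-1 : ℝ) ^ T.card)
    (fun T _ => HT_dens hn hz β b hb hB T)
  have ie : ∀ u : ι → Prop, ∑ T : Finset ι, (-1 : ℝ) ^ T.card * ind (∀ i ∈ T, u i) =
      ind (∀ i, ¬ u i) := by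
    intro u
    have h1 : ∏ i : ι, ((1 : ℝ) + -(if u i then 1 else 0)) = ind (∀ i, ¬ u i) := by
      rw [ind]
      by_cases hu : ∀ i, ¬ u i
      · rw [if_pos hu]; simp [hu]
      · rw [if_neg hu]
        push Not at hu
        obtain ⟨i, hi⟩ := hu
        exact Finset.prod_eq_zero (Finset.mem_univ i) (by simp [hi])
    rw [← h1, Finset.prod_one_add, Finset.powerset_univ]
    simp only [ind]
    refine Finset.sum_congr rfl fun T _ => ?_
    rw [Finset.prod_neg]
    congr 1
    by_cases hT : ∀ i ∈ T, u i
    · rw [if_pos hT, Finset.prod_congr rfl (fun i hi => if_pos (hT i hi))]; simp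
    · rw [if_neg hT]
      push Not at hT
      obtain ⟨i, hi, hi'⟩ := hT
      exact (Finset.prod_eq_zero hi (by simp [hi'])).symm
  have e1 : ∑ T : Finset ι, (-1 : ℝ) ^ T.card * ((Nat.card (HT z β T) : ℝ) / Nat.card (L ≃ₐ[ℚ] L)) =
      Nat.card {σ : L ≃ₐ[ℚ] L // σ z = z ∧ ∀ i, σ (β i) ≠ β i} / Nat.card (L ≃ₐ[ℚ] L) := by
    simp only [mul_div_assoc']
    rw [← Finset.sum_div]
    congr 1
    have c1 : ∀ T : Finset ι, (Nat.card (HT z β T) : ℝ) =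
        ∑ σ : L ≃ₐ[ℚ] L, (if σ z = z then 1 else 0) * ind (∀ i ∈ T, σ (β i) = β i) := by
      intro T
      have : Nat.card (HT z β T) = Fintype.card {σ : L ≃ₐ[ℚ] L // σ z = z ∧ ∀ i ∈ T, σ (β i) = β i} := by
        rw [← Nat.card_eq_fintype_card]; rfl
      rw [this, Fintype.card_subtype, ← Finset.sum_boole]
      refine Finset.sum_congr rfl fun σ _ => ?_
      simp only [ind]; rw [ite_and]; split_ifs <;> simp
    have c2 : (Nat.card {σ : L ≃ₐ[ℚ] L // σ z = z ∧ ∀ i, σ (β i) ≠ β i} : ℝ) =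
        ∑ σ : L ≃ₐ[ℚ] L, (if σ z = z then 1 else 0) * ind (∀ i, ¬ (σ (β i) = β i)) := by
      rw [Nat.card_eq_fintype_card, Fintype.card_subtype, ← Finset.sum_boole]
      refine Finset.sum_congr rfl fun σ _ => ?_
      simp only [ind]; rw [ite_and]; split_ifs <;> simp_all
    rw [c2]
    simp only [c1, Finset.mul_sum]
    rw [Finset.sum_comm]
    refine Finset.sum_congr rfl fun σ _ => ?_
    rw [← ie, Finset.mul_sum]
    refine Finset.sum_congr rfl fun T _ => ?_
    ring
  rw [e1] at h
  refine h.congr 0 fun p _ => ?_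
  by_cases hp : p.Prime
  swap
  · simp [lw, hp]
  by_cases hk : ∃ k, p = k * n + 1
  swap
  · have : ∀ D : ℕ → Prop, ¬ ∃ k, p = k * n + 1 ∧ D k := fun D ⟨k, h1, _⟩ => hk ⟨k, h1⟩
    simp [lw, this]
  obtain ⟨k, hk⟩ := hk
  have hu : ∀ D : ℕ → Prop, (∃ l, p = l * n + 1 ∧ D l) ↔ D k := by
    intro D
    constructor
    · rintro ⟨l, h1, h2⟩
      have : l * n = k * n := by omega
      rwa [Nat.eq_of_mul_eq_mul_right hn this] at h2
    · intro h; exact ⟨k, hk, h⟩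
  have e2 : ∀ D : ℕ → Prop, lw (fun p => ∃ l, p = l * n + 1 ∧ D l) p = ind (D k) * Real.log p := by
    intro D
    rw [lw, ind]
    simp only [hp, true_and, hu]
    split_ifs <;> simp
  have e3 : ∀ D : ℕ → ℕ → Prop, lw (fun p => ∃ l, p = l * n + 1 ∧ D p l) p = ind (D p k) * Real.log p := by
    intro D
    rw [← e2]
    simp only [lw]
  rw [e3 (fun p k => ∀ i, (b i : ZMod p) ^ k ≠ 1)]
  have e4 : ∀ T : Finset ι, lw (fun p => ∃ l, p = l * n + 1 ∧ ∀ i ∈ T, (b i : ZMod p) ^ l = 1) p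
      = ind (∀ i ∈ T, (b i : ZMod p) ^ k = 1) * Real.log p := fun T =>
    e3 (fun p k => ∀ i ∈ T, (b i : ZMod p) ^ k = 1)
  simp only [e4]
  have e5 := ie (fun i => (b i : ZMod p) ^ k = 1)
  simp only [Ne]
  rw [← e5, Finset.sum_mul]
  refine Finset.sum_congr rfl fun T _ => ?_
  ring

lemma frob_exists {ι : Type*} {n : ℕ} (hn : 0 < n) {z : L} (hz : IsPrimitiveRoot z n) (β : ι → L) (b : ι → ℕ)
    (hB : ∀ i, β i ^ n = b i) {p k : ℕ} (hp : p.Prime) (hpk : p = k * n + 1) (hpb : ∀ i, ¬ p ∣ b i)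
    (hk : ∀ i, (b i : ZMod p) ^ k ≠ 1) : ∃ σ : L ≃ₐ[ℚ] L, σ z = z ∧ ∀ i, σ (β i) ≠ β i := by
  have hzi : IsIntegral ℤ z := IsIntegral.of_pow hn (by rw [hz.pow_eq_one]; exact isIntegral_one)
  have hBi : ∀ i, IsIntegral ℤ (β i) := fun i => IsIntegral.of_pow hn (by
    rw [hB]; exact_mod_cast isIntegral_algebraMap (R := ℤ) (A := L) (x := (b i : ℤ)))
  have hk0 : 0 < k := by
    rcases Nat.eq_zero_or_pos k with rfl | h
    · rw [zero_mul] at hpk; exact absurd hp (by rw [hpk]; norm_num)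
    · exact h
  have hpn : ¬ p ∣ n := by
    intro h
    have h1 := Nat.le_of_dvd hn h
    have h2 := Nat.le_mul_of_pos_left n hk0
    omega
  let z' : 𝓞 L := ⟨z, hzi⟩
  let B' : ι → 𝓞 L := fun i => ⟨β i, hBi i⟩
  obtain ⟨P, hP⟩ := exists_prime (M := L) p hp
  obtain ⟨σ, hσ⟩ := frob P hp hP
  refine ⟨σ, ?_, fun i hi => hk i ?_⟩
  · have h1 := (frob_fix P hp hP hn hpn hpk σ hσ z' 1 (RingOfIntegers.coe_injective (by
      rw [map_pow, map_natCast, Nat.cast_one]; exact hz.pow_eq_one)) hp.not_dvd_one).2 (by simp)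
    exact congrArg (algebraMap (𝓞 L) L) h1
  · refine (frob_fix P hp hP hn hpn hpk σ hσ (B' i) (b i) (RingOfIntegers.coe_injective (by
      rw [map_pow, map_natCast]; exact hB i)) (hpb i)).1 ?_
    exact RingOfIntegers.coe_injective hi

end

lemma exists_split (f : Polynomial ℚ) : ∃ (L : Type) (_ : Field L) (_ : NumberField L) (_ : IsGalois ℚ L),
    (f.map (algebraMap ℚ L)).Splits := by
  obtain ⟨L, F, A, h⟩ : ∃ (L : Type) (_ : Field L) (_ : Algebra ℚ L), Polynomial.IsSplittingField ℚ L f :=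
    ⟨f.SplittingField, inferInstance, inferInstance, Polynomial.IsSplittingField.splittingField f⟩
  have h0 : CharZero L := algebraRat.charZero L
  obtain rfl : A = DivisionRing.toRatAlgebra := Subsingleton.elim _ _
  have hfd : FiniteDimensional ℚ L := Polynomial.IsSplittingField.finiteDimensional L f
  have hno : Normal ℚ L := Normal.of_isSplittingField f
  exact ⟨L, F, { to_charZero := h0, to_finiteDimensional := hfd }, ⟨⟩, h.splits'⟩

lemma exists_field {ι : Type} [Fintype ι] {n : ℕ} (hn : 0 < n) (b : ι → ℕ) :
    ∃ (L : Type) (_ : Field L) (_ : NumberField L) (_ : IsGalois ℚ L) (z : L) (β : ι → L),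
      IsPrimitiveRoot z n ∧ ∀ i, β i ^ n = b i := by
  classical
  obtain ⟨f, hf, hcyc, hdiv⟩ : ∃ f : Polynomial ℚ, f ≠ 0 ∧ Polynomial.cyclotomic n ℚ ∣ f ∧
      ∀ i, (Polynomial.X ^ n - Polynomial.C (b i : ℚ)) ∣ f :=
    ⟨Polynomial.cyclotomic n ℚ * ∏ i, (Polynomial.X ^ n - Polynomial.C (b i : ℚ)),
      mul_ne_zero (Polynomial.cyclotomic_ne_zero _ _)
        (Finset.prod_ne_zero_iff.2 fun i _ => Polynomial.X_pow_sub_C_ne_zero hn _),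
      dvd_mul_right _ _, fun i => Dvd.dvd.mul_left (Finset.dvd_prod_of_mem
        (fun i => (Polynomial.X ^ n - Polynomial.C (b i : ℚ))) (Finset.mem_univ i)) _⟩
  obtain ⟨L, hF, hnf, hG, hs⟩ := exists_split f
  have hroot : ∀ g : Polynomial ℚ, g ∣ f → 0 < g.natDegree → ∃ x : L, Polynomial.aeval x g = 0 := by
    intro g hg hd
    have h1 : (g.map (algebraMap ℚ L)).Splits :=
      hs.of_dvd (Polynomial.map_ne_zero hf) (Polynomial.map_dvd _ hg)
    obtain ⟨x, hx⟩ := h1.exists_eval_eq_zero (by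
      rw [Polynomial.degree_map]
      exact (Polynomial.natDegree_pos_iff_degree_pos.1 hd).ne')
    exact ⟨x, by rwa [Polynomial.eval_map_algebraMap] at hx⟩
  obtain ⟨z, hz⟩ := hroot (Polynomial.cyclotomic n ℚ) hcyc (by
    rw [Polynomial.natDegree_cyclotomic]; exact Nat.totient_pos.2 hn)
  have hβ : ∀ i, ∃ x : L, x ^ n = b i := by
    intro i
    obtain ⟨x, hx⟩ := hroot (Polynomial.X ^ n - Polynomial.C (b i : ℚ))
      (hdiv i)
      (by rw [Polynomial.natDegree_X_pow_sub_C]; exact hn)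
    refine ⟨x, ?_⟩
    simp only [map_sub, map_pow, Polynomial.aeval_X, Polynomial.aeval_C, map_natCast] at hx
    exact sub_eq_zero.1 hx
  choose β hβ using hβ
  refine ⟨L, hF, hnf, hG, z, β, ?_, hβ⟩
  have : NeZero (n : L) := ⟨by exact_mod_cast hn.ne'⟩
  rw [← Polynomial.isRoot_cyclotomic_iff, ← Polynomial.map_cyclotomic n (algebraMap ℚ L), Polynomial.IsRoot,
    Polynomial.eval_map_algebraMap]
  exact hz

end SR
end

section
open MeasureTheory Set Filter Topology

namespace SR

def JJ (n : ℕ) : Finset (ℕ × ℕ) := ((Finset.Icc 1 n) ×ˢ (Finset.Icc 1 n)).filter fun t => t.1 < t.2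

lemma mem_JJ {n : ℕ} {t : ℕ × ℕ} : t ∈ JJ n ↔ 1 ≤ t.1 ∧ t.1 < t.2 ∧ t.2 ≤ n := by
  rw [JJ, Finset.mem_filter, Finset.mem_product, Finset.mem_Icc, Finset.mem_Icc]; omega

lemma nd {n p k : ℕ} (hp : p.Prime) (hpk : p = k * n + 1) {i : ℕ} (h1 : 1 ≤ i) (h2 : i ≤ n) : ¬ p ∣ i := by
  intro h
  have h3 := Nat.le_of_dvd h1 h
  have hk0 : 0 < k := by
    rcases Nat.eq_zero_or_pos k with rfl | h
    · rw [zero_mul] at hpk; exact absurd hp (by rw [hpk]; norm_num)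
    · exact h
  have h4 := Nat.le_mul_of_pos_left n hk0
  omega

lemma pow_iff {n p k : ℕ} (hn : 0 < n) (hp : p.Prime) (hpk : p = k * n + 1) {i j : ℕ} (hj : 1 ≤ j) (hj2 : j ≤ n) :
    (i : ZMod p) ^ k = (j : ZMod p) ^ k ↔ ((i * j ^ (n - 1) : ℕ) : ZMod p) ^ k = 1 := by
  have : Fact p.Prime := ⟨hp⟩
  have hj0 : (j : ZMod p) ≠ 0 := by
    rw [Ne, ZMod.natCast_eq_zero_iff]; exact nd hp hpk hj hj2
  have h1 : (j : ZMod p) ^ k * ((j : ZMod p) ^ (n - 1)) ^ k = 1 := by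
    rw [← mul_pow, ← pow_succ', Nat.sub_add_cancel hn, ← pow_mul, mul_comm]
    have := ZMod.pow_card_sub_one_eq_one hj0
    rwa [show p - 1 = k * n by omega] at this
  push_cast
  rw [mul_pow, ← h1]
  constructor
  · intro h; rw [h]
  · intro h
    exact mul_right_cancel₀ (pow_ne_zero _ (pow_ne_zero _ hj0)) h

end SR
end

/-- If `n` admits a strong representative, then the set `S` of strong representatives
of order `n` has positive natural density in the primes, and in particular `S` is
infinite. -/
theorem strong_representatives_positive_density (n : ℕ) (hn : 0 < n)
    (S : Set ℕ)
    (hS : S = {p : ℕ | p.Prime ∧ ∃ k : ℕ, 0 < k ∧ p = k * n + 1 ∧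
      ∀ i j : ℕ, 1 ≤ i → i < j → j ≤ n →
        (i : ZMod p) ^ k ≠ (j : ZMod p) ^ k})
    (hex : S.Nonempty) :
    (∃ δ : ℝ, 0 < δ ∧
      Filter.Tendsto
        (fun x : ℕ => (({p ∈ S | p ≤ x}.ncard : ℝ)) / (Nat.primeCounting x : ℝ))
        Filter.atTop (nhds δ)) ∧
    S.Infinite := by
  classical
  have hmem : ∀ p, p ∈ S ↔ p.Prime ∧ ∃ k, p = k * n + 1 ∧
      ∀ t : SR.JJ n, ((t.1.1 * t.1.2 ^ (n - 1) : ℕ) : ZMod p) ^ k ≠ 1 := by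
    intro p
    rw [hS, Set.mem_setOf_eq]
    refine and_congr_right fun hp => exists_congr fun k => ?_
    constructor
    · rintro ⟨h0, hpk, h⟩
      refine ⟨hpk, fun t => ?_⟩
      obtain ⟨h1, h2, h3⟩ := SR.mem_JJ.1 t.2
      rw [Ne, ← SR.pow_iff hn hp hpk (by omega) h3]
      exact h _ _ h1 h2 h3
    · rintro ⟨hpk, h⟩
      refine ⟨?_, hpk, fun i j h1 h2 h3 => ?_⟩
      · rcases Nat.eq_zero_or_pos k with rfl | h
        · rw [zero_mul] at hpk; exact absurd hp (by rw [hpk]; norm_num)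
        · exact h
      · rw [Ne, SR.pow_iff hn hp hpk (by omega) h3]
        exact h ⟨(i, j), SR.mem_JJ.2 ⟨h1, h2, h3⟩⟩
  obtain ⟨L, hF, hnf, hG, z, β, hz, hβ⟩ := SR.exists_field (ι := SR.JJ n) hn
    (fun t => t.1.1 * t.1.2 ^ (n - 1))
  have hb : ∀ t : SR.JJ n, 0 < t.1.1 * t.1.2 ^ (n - 1) := by
    intro t
    obtain ⟨h1, h2, h3⟩ := SR.mem_JJ.1 t.2
    exact Nat.mul_pos h1 (pow_pos (by omega) _)
  have hD := SR.incl_excl hn hz β (fun t : SR.JJ n => t.1.1 * t.1.2 ^ (n - 1)) hb hβ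
  have hT := SR.nat_dens _ hD
  have hpos : (0 : ℝ) < Nat.card {σ : L ≃ₐ[ℚ] L // σ z = z ∧ ∀ i, σ (β i) ≠ β i} / Nat.card (L ≃ₐ[ℚ] L) := by
    obtain ⟨p, hpS⟩ := hex
    obtain ⟨hp, k, hpk, hk⟩ := (hmem p).1 hpS
    obtain ⟨σ, hσ⟩ := SR.frob_exists hn hz β _ hβ hp hpk (fun t h => by
      obtain ⟨h1, h2, h3⟩ := SR.mem_JJ.1 t.2
      rcases hp.dvd_mul.1 h with h4 | h4
      · exact SR.nd hp hpk h1 (by omega) h4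
      · exact SR.nd hp hpk (by omega) h3 (hp.dvd_of_dvd_pow h4)) hk
    have : Nonempty {σ : L ≃ₐ[ℚ] L // σ z = z ∧ ∀ i, σ (β i) ≠ β i} := ⟨⟨σ, hσ⟩⟩
    have h1 : 0 < Nat.card {σ : L ≃ₐ[ℚ] L // σ z = z ∧ ∀ i, σ (β i) ≠ β i} := Nat.card_pos
    have h2 : 0 < Nat.card (L ≃ₐ[ℚ] L) := Nat.card_pos
    positivity
  have hlim : Filter.Tendsto
        (fun x : ℕ => (({p ∈ S | p ≤ x}.ncard : ℝ)) / (Nat.primeCounting x : ℝ))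
        Filter.atTop (nhds (Nat.card {σ : L ≃ₐ[ℚ] L // σ z = z ∧ ∀ i, σ (β i) ≠ β i} / Nat.card (L ≃ₐ[ℚ] L))) := by
    refine hT.congr fun x => ?_
    congr 2
    rw [← Set.ncard_coe_finset]
    congr 1
    ext p
    simp only [Finset.coe_filter, Finset.mem_Icc, Set.mem_setOf_eq]
    rw [hmem]
    constructor
    · rintro ⟨h1, h2⟩; exact ⟨h2, h1.2⟩
    · rintro ⟨h1, h2⟩; exact ⟨⟨h1.1.one_lt.le, h2⟩, h1⟩
  refine ⟨⟨_, hpos, hlim⟩, ?_⟩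
  intro hfin
  have h0 : Filter.Tendsto (fun x : ℕ => (({p ∈ S | p ≤ x}.ncard : ℝ)) / (Nat.primeCounting x : ℝ))
      Filter.atTop (nhds 0) := by
    have h1 : Filter.Tendsto (fun x : ℕ => (S.ncard : ℝ) / (Nat.primeCounting x : ℝ)) Filter.atTop (nhds 0) :=
      tendsto_const_nhds.div_atTop (tendsto_natCast_atTop_atTop.comp Nat.tendsto_primeCounting)
    refine squeeze_zero (fun x => by positivity) (fun x => ?_) h1
    refine div_le_div_of_nonneg_right ?_ (by positivity)
    exact_mod_cast Set.ncard_le_ncard (Set.sep_subset _ _) hfin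
  exact hpos.ne' (tendsto_nhds_unique hlim h0)
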